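/- For all positive integers m, n there exist constants k# and C#, depending only on m and n, with the following property. Let E ⊂ ℝⁿ be finite and let f : E → [0,∞). Suppose that for each subset S ⊆ E with #(S) ≤ k# there exists F^S ∈ C^m(ℝⁿ) with ‖F^S‖_{C^m(ℝⁿ)} ≤ 1, F^S = f on S, and F^S ≥ 0 everywhere on ℝⁿ. Then there exists F ∈ C^m(ℝⁿ) with ‖F‖_{C^m(ℝⁿ)} ≤ C#, F = f on E, and F ≥ 0 everywhere on ℝⁿ. -/

import Mathlib

open scoped BigOperators

noncomputable section

abbrev Euc (n : ℕ) : Type := EuclideanSpace ℝ (Fin n)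
abbrev MPoly (n : ℕ) : Type := MvPolynomial (Fin n) ℝ

/-- Partial derivative in the `i`-th coordinate direction. -/
noncomputable def pD {n : ℕ} (i : Fin n) (F : Euc n → ℝ) : Euc n → ℝ :=
  fun x => fderiv ℝ F x (EuclideanSpace.single i (1 : ℝ))

/-- The multi-index partial derivative `∂^α F`. -/
noncomputable def mD {n : ℕ} (α : Fin n → ℕ) (F : Euc n → ℝ) : Euc n → ℝ :=
  (((List.finRange n).flatMap fun i => List.replicate (α i) i)).foldr pD F

/-- Partial derivative within a set. -/
noncomputable def pDW {n : ℕ} (s : Set (Euc n)) (i : Fin n) (F : Euc n → ℝ) : Euc n → ℝ :=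
  fun x => fderivWithin ℝ F s x (EuclideanSpace.single i (1 : ℝ))

/-- Multi-index partial derivative within a set. -/
noncomputable def mDW {n : ℕ} (s : Set (Euc n)) (α : Fin n → ℕ) (F : Euc n → ℝ) : Euc n → ℝ :=
  (((List.finRange n).flatMap fun i => List.replicate (α i) i)).foldr (pDW s) F

/-- The order `|α|` of a multi-index. -/
def deg {n : ℕ} (α : Fin n → ℕ) : ℕ := ∑ i, α i

/-- Evaluation of an `n`-variable polynomial at a point of `ℝⁿ`. -/
noncomputable def peval {n : ℕ} (P : MPoly n) (x : Euc n) : ℝ :=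
  MvPolynomial.eval (fun i => x i) P

/-- `F ∈ C^m(ℝⁿ)` with `‖F‖_{C^m(ℝⁿ)} ≤ M`. -/
def CmNormLe (m n : ℕ) (F : Euc n → ℝ) (M : ℝ) : Prop :=
  ContDiff ℝ (m : ℕ∞) F ∧ ∀ α : Fin n → ℕ, deg α ≤ m → ∀ x : Euc n, |mD α F x| ≤ M

/-- `F ∈ C^{m-1,1}(ℝⁿ)` with `‖F‖_{C^{m-1,1}(ℝⁿ)} ≤ M`. -/
def CmLipNormLe (m n : ℕ) (F : Euc n → ℝ) (M : ℝ) : Prop :=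
  ContDiff ℝ ((m - 1 : ℕ) : ℕ∞) F ∧
  (∀ α : Fin n → ℕ, deg α ≤ m - 1 → ∀ x : Euc n, |mD α F x| ≤ M) ∧
  (∀ α : Fin n → ℕ, deg α = m - 1 → ∀ i : Fin n, ∀ x : Euc n, ∀ t : ℝ,
    |mD α F (x + t • EuclideanSpace.single i (1 : ℝ)) - mD α F x| ≤ M * |t|)

/-- `J_x(F) = P`, i.e. `P` is the `(m-1)`-st order Taylor polynomial of `F` at `x`. -/
def IsJetAt (m n : ℕ) (F : Euc n → ℝ) (x : Euc n) (P : MPoly n) : Prop :=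
  P.totalDegree ≤ m - 1 ∧
  ∀ α : Fin n → ℕ, deg α ≤ m - 1 → mD α (peval P) x = mD α F x

/-- `J_x^+(F) = P`, i.e. `P` is the `m`-th order Taylor polynomial of `F` at `x`. -/
def IsJetPlusAt (m n : ℕ) (F : Euc n → ℝ) (x : Euc n) (P : MPoly n) : Prop :=
  P.totalDegree ≤ m ∧
  ∀ α : Fin n → ℕ, deg α ≤ m → mD α (peval P) x = mD α F x

/-- Truncation of a polynomial: keep the monomials of total degree `≤ d`. -/
noncomputable def truncLE {n : ℕ} (d : ℕ) (P : MPoly n) : MPoly n :=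
  ∑ s ∈ P.support.filter (fun s => (s.sum fun _ e => e) ≤ d),
    MvPolynomial.monomial s (P.coeff s)

/-- Substitution `y ↦ y + v` in a polynomial. -/
noncomputable def polyShift {n : ℕ} (v : Fin n → ℝ) (P : MPoly n) : MPoly n :=
  MvPolynomial.aeval (fun i => (MvPolynomial.X i + MvPolynomial.C (v i) : MPoly n)) P

/-- The `(m-1)`-st order Taylor polynomial of a polynomial `P` at `x`. -/
noncomputable def jetTrunc (m n : ℕ) (x : Euc n) (P : MPoly n) : MPoly n :=
  polyShift (fun i => -(x i)) (truncLE (m - 1) (polyShift (fun i => x i) P))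

/-- Multiplication of `(m-1)`-jets at `x`: `P ⊙_x Q = J_x(PQ)`. -/
noncomputable def jmul (m n : ℕ) (x : Euc n) (P Q : MPoly n) : MPoly n :=
  jetTrunc m n x (P * Q)

/-- `Γ*(x,M)`. -/
def GammaStar (m n : ℕ) (x : Euc n) (M : ℝ) : Set (MPoly n) :=
  {P | ∃ F : Euc n → ℝ, CmNormLe m n F M ∧ (∀ y, 0 ≤ F y) ∧ IsJetAt m n F x P}

/-- `Γ_f(x,M)`. -/
def GammaF (m n : ℕ) (f : Euc n → ℝ) (x : Euc n) (M : ℝ) : Set (MPoly n) :=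
  {P ∈ GammaStar m n x M | peval P x = f x}

/-- `Γ'*(x,M)` (the `C^{m-1,1}` version). -/
def GammaStar' (m n : ℕ) (x : Euc n) (M : ℝ) : Set (MPoly n) :=
  {P | ∃ F : Euc n → ℝ, CmLipNormLe m n F M ∧ (∀ y, 0 ≤ F y) ∧ IsJetAt m n F x P}

/-- `Γ'_f(x,M)`. -/
def GammaF' (m n : ℕ) (f : Euc n → ℝ) (x : Euc n) (M : ℝ) : Set (MPoly n) :=
  {P ∈ GammaStar' m n x M | peval P x = f x}

/-- `Γ₀⁺`. -/
def Gamma0plus (m n : ℕ) : Set (MPoly n) :=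
  {P | P.totalDegree ≤ m ∧
    (∀ β : Fin n → ℕ, deg β ≤ m → |mD β (peval P) 0| ≤ 1) ∧
    (∀ x : Euc n, 0 ≤ peval P x + ‖x‖ ^ m) ∧
    (∀ ε : ℝ, 0 < ε → ∃ δ : ℝ, 0 < δ ∧ ∀ x : Euc n, ‖x‖ ≤ δ → 0 ≤ peval P x + ε * ‖x‖ ^ m)}

/-- `Γ̃₀'`. -/
def GammaTilde0' (m n : ℕ) : Set (MPoly n) :=
  {P | P.totalDegree ≤ m - 1 ∧
    (∀ β : Fin n → ℕ, deg β ≤ m - 1 → |mD β (peval P) 0| ≤ 1) ∧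
    ∀ x : Euc n, 0 ≤ peval P x + ‖x‖ ^ m}

/-- The closed axis-parallel cube with center `c` and sidelength `δ`. -/
def cube {n : ℕ} (c : Euc n) (δ : ℝ) : Set (Euc n) :=
  {y | ∀ i, |y i - c i| ≤ δ / 2}

/-- `F ∈ C^{m-1,1}(Q)` with `‖F‖_{C^{m-1,1}(Q)} ≤ M`, for the cube `Q` of center `c`,
sidelength `δ`. -/
def CmLipOnCubeLe (m n : ℕ) (c : Euc n) (δ : ℝ) (F : Euc n → ℝ) (M : ℝ) : Prop :=
  ContDiffOn ℝ ((m - 1 : ℕ) : ℕ∞) F (cube c δ) ∧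
  (∀ α : Fin n → ℕ, deg α ≤ m - 1 → ∀ x ∈ cube c δ, |mDW (cube c δ) α F x| ≤ M) ∧
  (∀ α : Fin n → ℕ, deg α = m - 1 → ∀ i : Fin n, ∀ x ∈ cube c δ, ∀ t : ℝ,
    x + t • EuclideanSpace.single i (1 : ℝ) ∈ cube c δ →
    |mDW (cube c δ) α F (x + t • EuclideanSpace.single i (1 : ℝ)) - mDW (cube c δ) α F x|
      ≤ M * |t|)

/-!
Fix a base point `x`. The jets at `x` of nonnegative interpolants of `f` on the subsets of `E` with
at most `k` points form a family of convex sets, nonempty by Helly's theorem, and a second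
application of Helly's theorem compares these sets at different base points. One looks for a jet
`P` around which they are symmetric in many directions. These directions form a weak basis, dual to
the Taylor coefficients indexed by a set `A` of multi-indices, the label. Interpolants can be
multiplied by coordinates up to lower order terms, because a nonnegative `F` stays nonnegative when
multiplied by `1 + θ` with `|θ| ≤ 1`; hence `A` may be taken closed under raising exponents.

Local interpolation near `x` follows by induction on the label. A weak basis at `x` transports to
nearby points `y`, with jets that agree with `P` in the coefficients from `A`. At small scales `r`
the transported basis at `y` either has a heavier one beside it, in which case the induction
hypothesis interpolates `f` near `y`, or jets at neighbouring points are forced to agree up to what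
the scale `r` allows. Around each point one stops at the largest scale at which the former holds for
all nearby points of `E`, or at which at most one such point is left. The pieces found at the
stopping scales then have consistent jets, and a partition of unity glues them together without
destroying nonnegativity.
-/

/-! ### Scale-invariant bounds on derivatives -/

section JetBound

variable {V W : Type*} [NormedAddCommGroup V] [NormedSpace ℝ V] [NormedAddCommGroup W]
  [NormedSpace ℝ W] {m : ℕ} {F H : V → W} {x y : V} {K K' r r' : ℝ}

/-- The derivatives of `F` at `x` up to order `m` have the sizes of those of a function which is
bounded by `K * r ^ m` and varies on the length scale `r`. -/
def JetBound (m : ℕ) (F : V → W) (x : V) (K r : ℝ) : Prop :=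
  ∀ k ≤ m, ‖iteratedFDeriv ℝ k F x‖ ≤ K * r ^ (m - k)

lemma contDiff_of_natCast_le (hF : ContDiff ℝ m F) {k : ℕ} (hk : k ≤ m) : ContDiff ℝ k F :=
  hF.of_le (by exact_mod_cast hk)

lemma JetBound.add (hF : ContDiff ℝ m F) (hH : ContDiff ℝ m H) (h : JetBound m F x K r)
    (h' : JetBound m H x K' r) : JetBound m (F + H) x (K + K') r := by
  intro k hk
  rw [iteratedFDeriv_add_apply (contDiff_of_natCast_le hF hk).contDiffAt
    (contDiff_of_natCast_le hH hk).contDiffAt, add_mul]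
  exact (norm_add_le _ _).trans (add_le_add (h k hk) (h' k hk))

lemma JetBound.sub (hF : ContDiff ℝ m F) (hH : ContDiff ℝ m H) (h : JetBound m F x K r)
    (h' : JetBound m H x K' r) : JetBound m (F - H) x (K + K') r := by
  intro k hk
  rw [iteratedFDeriv_sub_apply (contDiff_of_natCast_le hF hk).contDiffAt
    (contDiff_of_natCast_le hH hk).contDiffAt, add_mul]
  exact (norm_sub_le _ _).trans (add_le_add (h k hk) (h' k hk))

lemma JetBound.const_smul (hF : ContDiff ℝ m F) (h : JetBound m F x K r) (a : ℝ) :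
    JetBound m (a • F) x (|a| * K) r := by
  intro k hk
  rw [iteratedFDeriv_const_smul_apply (contDiff_of_natCast_le hF hk).contDiffAt, norm_smul,
    Real.norm_eq_abs, mul_assoc]
  exact mul_le_mul_of_nonneg_left (h k hk) (abs_nonneg _)

lemma JetBound.zero (x : V) (hK : 0 ≤ K) (hr : 0 ≤ r) : JetBound m (0 : V → W) x K r := by
  intro k _
  rw [show (0 : V → W) = fun _ => 0 from rfl, iteratedFDeriv_fun_zero, Pi.zero_apply, norm_zero]
  positivity

lemma JetBound.congr (hFH : F =ᶠ[nhds x] H) (h : JetBound m H x K r) : JetBound m F x K r :=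
  fun k hk => by rw [(hFH.iteratedFDeriv ℝ k).eq_of_nhds]; exact h k hk

lemma JetBound.const_nonneg (h : JetBound m F x K r) : 0 ≤ K := by
  simpa using (norm_nonneg _).trans (h m le_rfl)

lemma JetBound.mono (h : JetBound m F x K r) (hr : 0 ≤ r) (hK : K ≤ K') : JetBound m F x K' r :=
  fun k hk => (h k hk).trans (by gcongr)

lemma JetBound.mono_scale (h : JetBound m F x K r) (hr : 0 ≤ r) (hrr' : r ≤ r') :
    JetBound m F x K r' := fun k hk =>
  have := h.const_nonneg
  (h k hk).trans (by gcongr)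

lemma JetBound.shrink_scale {l : ℝ} (h : JetBound m F x K r') (hr : 0 ≤ r) (hr' : 0 ≤ r')
    (hl : 1 ≤ l) (hr'r : r' ≤ l * r) : JetBound m F x (l ^ m * K) r := by
  intro k hk
  have := h.const_nonneg
  calc ‖iteratedFDeriv ℝ k F x‖ ≤ K * r' ^ (m - k) := h k hk
    _ ≤ K * (l * r) ^ (m - k) := by gcongr
    _ = l ^ (m - k) * (K * r ^ (m - k)) := by rw [mul_pow]; ring
    _ ≤ l ^ m * (K * r ^ (m - k)) := by
      gcongr
      exact Nat.sub_le m k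
    _ = l ^ m * K * r ^ (m - k) := by ring

/-- Descending induction on the order: the mean value inequality integrates a bound for the
derivative of order `m - j` into one for the derivative of order `m - (j + 1)`. -/
lemma JetBound.norm_iteratedFDeriv_sub_le (hF : ContDiff ℝ m F) (hr : 0 < r)
    (hx : JetBound m F x K r)
    (htop : ∀ z ∈ Metric.closedBall x r, ‖iteratedFDeriv ℝ m F z‖ ≤ K) :
    ∀ j ≤ m, ∀ z ∈ Metric.closedBall x r,
      ‖iteratedFDeriv ℝ (m - j) F z‖ ≤ 2 ^ j * K * r ^ j := by
  intro j
  have hK := hx.const_nonneg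
  induction j with
  | zero => intro _ z hz; simpa using htop z hz
  | succ j ih =>
    intro hj z hz
    have hlt : m - (j + 1) < m := by omega
    have hincr := (convex_closedBall x r).norm_image_sub_le_of_norm_fderiv_le (𝕜 := ℝ)
      (f := iteratedFDeriv ℝ (m - (j + 1)) F) (C := 2 ^ j * K * r ^ j)
      (fun y _ => hF.differentiable_iteratedFDeriv (by exact_mod_cast hlt) y)
      (fun y hy => by
        rw [norm_fderiv_iteratedFDeriv, show m - (j + 1) + 1 = m - j by omega]
        exact ih (by omega) y hy)
      (Metric.mem_closedBall_self hr.le) hz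
    have hcenter := hx (m - (j + 1)) (Nat.sub_le _ _)
    rw [show m - (m - (j + 1)) = j + 1 by omega] at hcenter
    have hzx : ‖z - x‖ ≤ r := mem_closedBall_iff_norm.1 hz
    calc ‖iteratedFDeriv ℝ (m - (j + 1)) F z‖
        ≤ ‖iteratedFDeriv ℝ (m - (j + 1)) F x‖
          + ‖iteratedFDeriv ℝ (m - (j + 1)) F z - iteratedFDeriv ℝ (m - (j + 1)) F x‖ :=
          norm_le_norm_add_norm_sub' _ _
      _ ≤ 1 * (K * r ^ (j + 1)) + 2 ^ j * K * r ^ j * r := by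
          rw [one_mul]
          exact add_le_add hcenter (hincr.trans (by gcongr))
      _ ≤ 2 ^ j * (K * r ^ (j + 1)) + 2 ^ j * K * r ^ j * r := by
          gcongr
          exact one_le_pow₀ one_le_two
      _ = 2 ^ (j + 1) * K * r ^ (j + 1) := by ring

lemma JetBound.of_mem_closedBall (hF : ContDiff ℝ m F) (hr : 0 < r) (hx : JetBound m F x K r)
    (htop : ∀ z ∈ Metric.closedBall x r, ‖iteratedFDeriv ℝ m F z‖ ≤ K)
    (hy : y ∈ Metric.closedBall x r) : JetBound m F y (2 ^ m * K) r := by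
  intro k hk
  have hK := hx.const_nonneg
  have h := hx.norm_iteratedFDeriv_sub_le hF hr htop (m - k) (Nat.sub_le m k) y hy
  rw [Nat.sub_sub_self hk] at h
  refine h.trans ?_
  gcongr
  · exact one_le_two
  · exact Nat.sub_le m k

lemma JetBound.mul {φ G : V → ℝ} {C : ℝ} (hr : 0 < r) (hC : 0 ≤ C) (hφ : ContDiff ℝ m φ)
    (hG : ContDiff ℝ m G) (hφx : ∀ k ≤ m, ‖iteratedFDeriv ℝ k φ x‖ ≤ C / r ^ k)
    (hGx : JetBound m G x K r) : JetBound m (φ * G) x (2 ^ m * C * K) r := by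
  intro k hk
  have hK := hGx.const_nonneg
  have hterm : ∀ i ∈ Finset.range (k + 1), (k.choose i : ℝ) * ‖iteratedFDeriv ℝ i φ x‖ *
      ‖iteratedFDeriv ℝ (k - i) G x‖ ≤ (k.choose i : ℝ) * (C * K * r ^ (m - k)) := by
    intro i hi
    have hik : i ≤ k := Finset.mem_range_succ_iff.1 hi
    rw [mul_assoc]
    refine mul_le_mul_of_nonneg_left ?_ (by positivity)
    calc _ ≤ (C / r ^ i) * (K * r ^ (m - (k - i))) :=
          mul_le_mul (hφx i (by omega)) (hGx _ (by omega)) (norm_nonneg _) (by positivity)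
      _ = C * K * r ^ (m - k) := by
          rw [show m - (k - i) = (m - k) + i by omega, pow_add]
          field_simp
  calc ‖iteratedFDeriv ℝ k (φ * G) x‖
      ≤ ∑ i ∈ Finset.range (k + 1), (k.choose i : ℝ) * ‖iteratedFDeriv ℝ i φ x‖ *
          ‖iteratedFDeriv ℝ (k - i) G x‖ :=
        norm_iteratedFDeriv_mul_le hφ hG x (by exact_mod_cast hk)
    _ ≤ ∑ i ∈ Finset.range (k + 1), (k.choose i : ℝ) * (C * K * r ^ (m - k)) :=
        Finset.sum_le_sum hterm
    _ = 2 ^ k * (C * K * r ^ (m - k)) := by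
        rw [← Finset.sum_mul]
        congr 1
        exact_mod_cast Nat.sum_range_choose k
    _ ≤ 2 ^ m * (C * K * r ^ (m - k)) := by
        gcongr
        exact one_le_two
    _ = 2 ^ m * C * K * r ^ (m - k) := by ring

end JetBound

/-! ### Coordinate derivatives -/

section CoordinateDerivatives

variable {m n : ℕ} {F H : Euc n → ℝ} {x : Euc n} {α : Fin n → ℕ}

/-- The iterated partial derivative along a list of coordinate directions. -/
def pDList (l : List (Fin n)) (F : Euc n → ℝ) : Euc n → ℝ := l.foldr pD F

/-- The list of coordinate directions along which `mD α` differentiates. -/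
def directions (α : Fin n → ℕ) : List (Fin n) :=
  (List.finRange n).flatMap fun i => List.replicate (α i) i

lemma mD_eq_pDList (α : Fin n → ℕ) (F : Euc n → ℝ) : mD α F = pDList (directions α) F := rfl

lemma pDList_cons (a : Fin n) (l : List (Fin n)) (F : Euc n → ℝ) :
    pDList (a :: l) F = pD a (pDList l F) := rfl

lemma count_directions (α : Fin n → ℕ) (i : Fin n) : (directions α).count i = α i := by
  rw [directions, List.count_flatMap, ← List.ofFn_eq_map, List.sum_ofFn,
    Finset.sum_eq_single i _ (by simp)]
  · simp
  · intro j _ hj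
    simp [List.count_replicate, hj]

lemma length_directions (α : Fin n → ℕ) : (directions α).length = deg α := by
  rw [directions, List.length_flatMap, ← List.ofFn_eq_map, List.sum_ofFn]
  simp [deg]

lemma deg_count (l : List (Fin n)) : deg (fun i => l.count i) = l.length := by
  rw [← length_directions]
  exact (List.perm_iff_count.2 fun i => count_directions _ i).length_eq

lemma contDiff_pD {k : ℕ} (hF : ContDiff ℝ (k + 1 : ℕ) F) (i : Fin n) :
    ContDiff ℝ k (pD i F) :=
  (hF.fderiv_right (m := (k : ℕ)) (by norm_cast)).clm_apply contDiff_const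

lemma contDiff_pDList (l : List (Fin n)) {k : ℕ} (hF : ContDiff ℝ (k + l.length : ℕ) F) :
    ContDiff ℝ k (pDList l F) := by
  induction l generalizing k with
  | nil => exact hF
  | cons a l ih =>
    refine contDiff_pD (ih ?_) a
    rwa [List.length_cons, add_comm l.length, ← add_assoc] at hF

lemma contDiff_mD {k : ℕ} (hF : ContDiff ℝ (k + deg α : ℕ) F) : ContDiff ℝ k (mD α F) :=
  contDiff_pDList (directions α) (by rwa [length_directions])

lemma pDList_ofFn {k : ℕ} (t : Fin k → Fin n) (hF : ContDiff ℝ k F) (x : Euc n) :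
    pDList (List.ofFn t) F x =
      iteratedFDeriv ℝ k F x fun j => EuclideanSpace.single (t j) (1 : ℝ) := by
  induction k generalizing x with
  | zero => simp [pDList]
  | succ k ih =>
    have hdiff : DifferentiableAt ℝ (iteratedFDeriv ℝ k F) x :=
      hF.differentiable_iteratedFDeriv (by exact_mod_cast k.lt_succ_self) x
    rw [List.ofFn_succ, pDList_cons, iteratedFDeriv_succ_apply_left,
      funext (ih _ (contDiff_of_natCast_le hF k.le_succ)), pD,
      (hdiff.hasFDerivAt.continuousMultilinear_apply_const _).fderiv]
    rfl

lemma pD_comm (hF : ContDiff ℝ (2 : ℕ) F) (a b : Fin n) : pD a (pD b F) = pD b (pD a F) := by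
  funext x
  have hsymm : IsSymmSndFDerivAt ℝ F x := hF.contDiffAt.isSymmSndFDerivAt (by simp)
  have hdiff : DifferentiableAt ℝ (fderiv ℝ F) x :=
    (hF.fderiv_right (m := (1 : ℕ)) (by norm_num)).differentiable (by simp) x
  unfold pD
  rw [fderiv_clm_apply hdiff (by fun_prop), fderiv_clm_apply hdiff (by fun_prop)]
  simp [hsymm.eq]

lemma pDList_perm {l l' : List (Fin n)} (hl : l.Perm l') (hF : ContDiff ℝ l.length F) :
    pDList l F = pDList l' F := by
  induction hl with
  | nil => rfl
  | cons a _ ih =>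
    rw [pDList_cons, pDList_cons, ih (contDiff_of_natCast_le hF (Nat.le_succ _))]
  | swap a b l =>
    exact pD_comm (contDiff_pDList l (by rwa [add_comm])) b a
  | trans hl _ ih ih' => rw [ih hF, ih' (hl.length_eq ▸ hF)]

lemma pDList_eq_mD (l : List (Fin n)) (hF : ContDiff ℝ l.length F) :
    pDList l F = mD (fun i => l.count i) F := by
  rw [mD_eq_pDList]
  exact pDList_perm (List.perm_iff_count.2 fun i =>
    (count_directions (fun i => l.count i) i).symm) hF

lemma exists_mD_eq_iteratedFDeriv (α : Fin n → ℕ) : ∃ t : Fin (deg α) → Fin n,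
    ∀ F : Euc n → ℝ, ContDiff ℝ (deg α) F → ∀ x, mD α F x =
      iteratedFDeriv ℝ (deg α) F x fun j => EuclideanSpace.single (t j) (1 : ℝ) := by
  obtain ⟨t, ht⟩ : ∃ t : Fin (deg α) → Fin n, List.ofFn t = directions α :=
    length_directions α ▸ ⟨(directions α).get, List.ofFn_get _⟩
  exact ⟨t, fun F hF x => by rw [mD_eq_pDList, ← ht, pDList_ofFn t hF]⟩

lemma mD_add (hF : ContDiff ℝ (deg α) F) (hH : ContDiff ℝ (deg α) H) (x : Euc n) :
    mD α (F + H) x = mD α F x + mD α H x := by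
  obtain ⟨t, ht⟩ := exists_mD_eq_iteratedFDeriv α
  rw [ht _ hF, ht _ hH, ht (F + H) (hF.add hH),
    iteratedFDeriv_add_apply hF.contDiffAt hH.contDiffAt]
  rfl

lemma mD_sub (hF : ContDiff ℝ (deg α) F) (hH : ContDiff ℝ (deg α) H) (x : Euc n) :
    mD α (F - H) x = mD α F x - mD α H x := by
  obtain ⟨t, ht⟩ := exists_mD_eq_iteratedFDeriv α
  rw [ht _ hF, ht _ hH, ht (F - H) (hF.sub hH),
    iteratedFDeriv_sub_apply hF.contDiffAt hH.contDiffAt]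
  rfl

lemma mD_const_smul (hF : ContDiff ℝ (deg α) F) (a : ℝ) (x : Euc n) :
    mD α (a • F) x = a * mD α F x := by
  obtain ⟨t, ht⟩ := exists_mD_eq_iteratedFDeriv α
  rw [ht _ hF, ht (a • F) (contDiff_const.smul hF), iteratedFDeriv_const_smul_apply hF.contDiffAt]
  rfl

lemma mD_congr (hF : ContDiff ℝ (deg α) F) (hH : ContDiff ℝ (deg α) H)
    (hFH : F =ᶠ[nhds x] H) : mD α F x = mD α H x := by
  obtain ⟨t, ht⟩ := exists_mD_eq_iteratedFDeriv α
  rw [ht _ hF, ht _ hH, (hFH.iteratedFDeriv ℝ _).eq_of_nhds]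

lemma abs_mD_sub_le (hF : ContDiff ℝ (deg α) F) (x y : Euc n) :
    |mD α F y - mD α F x|
      ≤ ‖iteratedFDeriv ℝ (deg α) F y - iteratedFDeriv ℝ (deg α) F x‖ := by
  obtain ⟨t, ht⟩ := exists_mD_eq_iteratedFDeriv α
  rw [ht _ hF, ht _ hF, ← sub_apply, ← Real.norm_eq_abs]
  refine (ContinuousMultilinearMap.le_opNorm _ _).trans_eq ?_
  simp

lemma abs_mD_le (hF : ContDiff ℝ (deg α) F) (x : Euc n) :
    |mD α F x| ≤ ‖iteratedFDeriv ℝ (deg α) F x‖ := by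
  obtain ⟨t, ht⟩ := exists_mD_eq_iteratedFDeriv α
  rw [ht _ hF, ← Real.norm_eq_abs]
  refine (ContinuousMultilinearMap.le_opNorm _ _).trans_eq ?_
  simp

lemma opNorm_le_of_single {k : ℕ}
    (f : ContinuousMultilinearMap ℝ (fun _ : Fin k => Euc n) ℝ) {K : ℝ} (hK : 0 ≤ K)
    (h : ∀ t : Fin k → Fin n, |f fun j => EuclideanSpace.single (t j) (1 : ℝ)| ≤ K) :
    ‖f‖ ≤ n ^ k * K := by
  refine f.opNorm_le_bound (by positivity) fun v => ?_
  have hv : v = fun j => ∑ i, v j i • (EuclideanSpace.single i (1 : ℝ) : Euc n) := by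
    funext j
    ext i
    simp [Finset.sum_apply, Pi.single_apply]
  have hexpand : f v = ∑ t : Fin k → Fin n, (∏ j, v j (t j)) *
      f fun j => EuclideanSpace.single (t j) (1 : ℝ) := by
    conv_lhs => rw [hv]
    rw [f.map_sum]
    exact Finset.sum_congr rfl fun t _ => by rw [f.map_smul_univ, smul_eq_mul]
  have hterm : ∀ t : Fin k → Fin n, ‖(∏ j, v j (t j)) *
      f fun j => EuclideanSpace.single (t j) (1 : ℝ)‖ ≤ (∏ j, ‖v j‖) * K := by
    intro t
    rw [norm_mul, norm_prod]
    exact mul_le_mul (Finset.prod_le_prod (fun _ _ => norm_nonneg _)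
      fun j _ => PiLp.norm_apply_le (v j) (t j)) (h t) (abs_nonneg _) (by positivity)
  calc ‖f v‖ ≤ ∑ _t : Fin k → Fin n, (∏ j, ‖v j‖) * K :=
        hexpand ▸ norm_sum_le_of_le _ fun t _ => hterm t
    _ = n ^ k * K * ∏ j, ‖v j‖ := by
        rw [Finset.sum_const, Finset.card_univ, Fintype.card_fun, Fintype.card_fin,
          Fintype.card_fin, nsmul_eq_mul]
        push_cast
        ring

lemma norm_iteratedFDeriv_le_of_mD_le {k : ℕ} (hF : ContDiff ℝ k F) {K : ℝ} (hK : 0 ≤ K)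
    (h : ∀ α : Fin n → ℕ, deg α = k → |mD α F x| ≤ K) :
    ‖iteratedFDeriv ℝ k F x‖ ≤ n ^ k * K := by
  refine opNorm_le_of_single _ hK fun t => ?_
  rw [← pDList_ofFn t hF, pDList_eq_mD _ (by rwa [List.length_ofFn])]
  exact h _ (by rw [deg_count, List.length_ofFn])

/-- A bound for the number of `k`-tuples of coordinate directions, `k ≤ m`. -/
def dimConst (m n : ℕ) : ℝ := ((n : ℝ) + 1) ^ m

lemma one_le_dimConst (m n : ℕ) : 1 ≤ dimConst m n := one_le_pow₀ (by simp)

lemma norm_iteratedFDeriv_le_dimConst {k : ℕ} (hk : k ≤ m) (hF : ContDiff ℝ k F) {K : ℝ}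
    (hK : 0 ≤ K) (h : ∀ α : Fin n → ℕ, deg α = k → |mD α F x| ≤ K) :
    ‖iteratedFDeriv ℝ k F x‖ ≤ dimConst m n * K := by
  refine (norm_iteratedFDeriv_le_of_mD_le hF hK h).trans ?_
  gcongr
  calc (n : ℝ) ^ k ≤ ((n : ℝ) + 1) ^ k := by gcongr; simp
    _ ≤ ((n : ℝ) + 1) ^ m := pow_le_pow_right₀ (by simp) hk

lemma deg_add (α β : Fin n → ℕ) : deg (α + β) = deg α + deg β := Finset.sum_add_distrib

lemma deg_single (i : Fin n) : deg (Pi.single i 1 : Fin n → ℕ) = 1 := by simp [deg]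

lemma apply_le_deg (α : Fin n → ℕ) (i : Fin n) : α i ≤ deg α :=
  Finset.single_le_sum (f := α) (fun _ _ => Nat.zero_le _) (Finset.mem_univ i)

lemma pD_mD (i : Fin n) (hF : ContDiff ℝ (deg α + 1 : ℕ) F) :
    pD i (mD α F) = mD (α + Pi.single i 1) F := by
  rw [mD_eq_pDList α, ← pDList_cons, pDList_eq_mD _ (by simpa [length_directions] using hF)]
  congr 1
  funext j
  rw [List.count_cons, count_directions]
  by_cases hj : i = j
  · subst hj; simp
  · simp [hj, Ne.symm hj]

lemma fderiv_eq_zero_of_pD_eq_zero (h : ∀ i, pD i F x = 0) : fderiv ℝ F x = 0 := by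
  apply ContinuousLinearMap.coe_injective
  apply (EuclideanSpace.basisFun (Fin n) ℝ).toBasis.ext
  intro i
  simpa [pD] using h i

/-- The `i`-th coordinate function, centred at `x`. -/
def coordFrom (i : Fin n) (x : Euc n) : Euc n → ℝ := fun y => y i - x i

lemma contDiff_coordFrom (i : Fin n) (x : Euc n) {k : WithTop ℕ∞} :
    ContDiff ℝ k (coordFrom i x) := by
  unfold coordFrom
  fun_prop

lemma coordFrom_self (i : Fin n) (x : Euc n) : coordFrom i x x = 0 := sub_self _

lemma hasFDerivAt_coordFrom (i : Fin n) (x y : Euc n) :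
    HasFDerivAt (coordFrom i x) (EuclideanSpace.proj i : Euc n →L[ℝ] ℝ) y :=
  (EuclideanSpace.proj i : Euc n →L[ℝ] ℝ).hasFDerivAt.sub_const (x i)

lemma pD_coordFrom (i a : Fin n) (x y : Euc n) :
    pD a (coordFrom i x) y = if a = i then 1 else 0 := by
  rw [pD, (hasFDerivAt_coordFrom i x y).fderiv]
  simp [eq_comm]

lemma pD_mul {a : Fin n} {y : Euc n} (hF : DifferentiableAt ℝ F y)
    (hH : DifferentiableAt ℝ H y) : pD a (F * H) y = pD a F y * H y + F y * pD a H y := by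
  simp only [pD, fderiv_mul hF hH, add_apply,
    FunLike.coe_smul, Pi.smul_apply, smul_eq_mul]
  ring

lemma pD_add {a : Fin n} {y : Euc n} (hF : DifferentiableAt ℝ F y)
    (hH : DifferentiableAt ℝ H y) : pD a (F + H) y = pD a F y + pD a H y := by
  simp only [pD, fderiv_add hF hH, add_apply]

lemma pD_const_smul {a : Fin n} {y : Euc n} (c : ℝ) (hF : DifferentiableAt ℝ F y) :
    pD a (c • F) y = c * pD a F y := by
  simp only [pD, fderiv_const_smul hF, smul_apply, smul_eq_mul]

lemma pDList_coordFrom_mul (i : Fin n) (x : Euc n) (l : List (Fin n))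
    (hF : ContDiff ℝ l.length F) :
    pDList l (coordFrom i x * F) =
      coordFrom i x * pDList l F + (l.count i : ℝ) • pDList (l.erase i) F := by
  induction l with
  | nil => simp [pDList]
  | cons a l ih =>
    have hF' : ContDiff ℝ (1 + l.length : ℕ) F := by rwa [List.length_cons, add_comm] at hF
    have hle : (l.erase i).length ≤ l.length := List.length_erase_le
    have d₁ : Differentiable ℝ (pDList l F) :=
      (contDiff_pDList (k := 1) l hF').differentiable (by simp)
    have d₂ : Differentiable ℝ (pDList (l.erase i) F) :=
      (contDiff_pDList (k := 1) (l.erase i)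
        (contDiff_of_natCast_le hF' (by omega))).differentiable (by simp)
    have d₃ : Differentiable ℝ (coordFrom i x) := fun y =>
      (hasFDerivAt_coordFrom i x y).differentiableAt
    rw [pDList_cons, ih (contDiff_of_natCast_le hF' (by omega))]
    funext y
    rw [pD_add ((d₃ y).mul (d₁ y)) ((d₂ y).const_smul _), pD_mul (d₃ y) (d₁ y),
      pD_const_smul _ (d₂ y), pD_coordFrom, ← pDList_cons, ← pDList_cons]
    by_cases ha : a = i
    · subst ha
      have herase : (l.count a : ℝ) * pDList (a :: l.erase a) F y
          = (l.count a : ℝ) * pDList l F y := by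
        by_cases hal : a ∈ l
        · have hperm := (List.perm_cons_erase hal).symm
          rw [pDList_perm hperm (contDiff_of_natCast_le hF' (by rw [hperm.length_eq]; omega))]
        · simp [List.count_eq_zero.2 hal]
      rw [herase]
      simp only [if_true, one_mul, List.count_cons_self, Nat.cast_add, Nat.cast_one,
        List.erase_cons_head, Pi.add_apply, Pi.mul_apply, Pi.smul_apply, smul_eq_mul]
      ring
    · simp [ha]

lemma mD_coordFrom_mul (i : Fin n) (x : Euc n) (β : Fin n → ℕ) (hF : ContDiff ℝ (deg β) F)
    (y : Euc n) : mD β (coordFrom i x * F) y =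
      coordFrom i x y * mD β F y + β i * mD (β - Pi.single i 1) F y := by
  have hle : ((directions β).erase i).length ≤ deg β :=
    length_directions β ▸ List.length_erase_le
  have hcount : (fun j => ((directions β).erase i).count j) = β - Pi.single i 1 := by
    funext j
    by_cases hj : j = i
    · subst hj; simp [count_directions]
    · rw [List.count_erase_of_ne hj]; simp [count_directions, hj]
  rw [mD_eq_pDList, pDList_coordFrom_mul i x _ (by rwa [length_directions]),
    pDList_eq_mD _ (contDiff_of_natCast_le hF hle), hcount, count_directions]
  rfl

end CoordinateDerivatives

/-! ### Multi-indices -/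

section MultiIndex

variable {m n : ℕ} {α β : Fin n → ℕ}

/-- The multi-indices of order `< m`. -/
def multiIndices (m n : ℕ) : Finset (Fin n → ℕ) :=
  {α ∈ Fintype.piFinset fun _ : Fin n => Finset.range m | deg α < m}

lemma mem_multiIndices : α ∈ multiIndices m n ↔ deg α < m := by
  simp only [multiIndices, Finset.mem_filter, Fintype.mem_piFinset, Finset.mem_range,
    and_iff_right_iff_imp]
  exact fun h i => (apply_le_deg α i).trans_lt h

/-- An additive key ordering the multi-indices by degree, with ties broken by reading the
multi-index in base `m`. It is injective on `multiIndices m n`. -/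
def key (m : ℕ) (α : Fin n → ℕ) : ℕ := ∑ i, α i * (m ^ n + m ^ (i : ℕ))

lemma key_eq (α : Fin n → ℕ) : key m α = deg α * m ^ n + ∑ i, α i * m ^ (i : ℕ) := by
  rw [key, deg, Finset.sum_mul, ← Finset.sum_add_distrib]
  exact Finset.sum_congr rfl fun i _ => mul_add _ _ _

lemma key_add (α β : Fin n → ℕ) : key m (α + β) = key m α + key m β := by
  rw [key, key, key, ← Finset.sum_add_distrib]
  exact Finset.sum_congr rfl fun i _ => add_mul _ _ _

lemma sum_digits_lt (h : α ∈ multiIndices m n) : ∑ i, α i * m ^ (i : ℕ) < m ^ n := by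
  simpa [finFunctionFinEquiv_apply] using (finFunctionFinEquiv (m := m) (n := n) fun i =>
    ⟨α i, (apply_le_deg α i).trans_lt (mem_multiIndices.1 h)⟩).2

lemma deg_le_of_key_le (hβ : β ∈ multiIndices m n) (h : key m α ≤ key m β) :
    deg α ≤ deg β := by
  by_contra! hlt
  have hdigits := sum_digits_lt hβ
  have hdeg : (deg β + 1) * m ^ n ≤ deg α * m ^ n := Nat.mul_le_mul_right _ hlt
  rw [key_eq, key_eq] at h
  rw [add_mul, one_mul] at hdeg
  omega

lemma key_injOn : Set.InjOn (key m) (multiIndices m n : Set (Fin n → ℕ)) := by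
  intro α hα β hβ h
  have hdeg : deg α = deg β :=
    le_antisymm (deg_le_of_key_le hβ h.le) (deg_le_of_key_le hα h.ge)
  rw [key_eq, key_eq, hdeg, Nat.add_left_cancel_iff] at h
  have hlt : ∀ {γ : Fin n → ℕ}, γ ∈ multiIndices m n → ∀ i, γ i < m := fun hγ i =>
    (apply_le_deg _ i).trans_lt (mem_multiIndices.1 hγ)
  have hdigits : finFunctionFinEquiv (m := m) (n := n) (fun i => ⟨α i, hlt hα i⟩) =
      finFunctionFinEquiv (fun i => ⟨β i, hlt hβ i⟩) :=
    Fin.ext (by simpa [finFunctionFinEquiv_apply] using h)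
  funext i
  simpa using congrFun (finFunctionFinEquiv.injective hdigits) i

lemma sub_single_add_single {i : Fin n} (h : 0 < β i) :
    β - Pi.single i 1 + Pi.single i 1 = β := by
  funext j
  by_cases hj : j = i
  · subst hj; simp only [Pi.add_apply, Pi.sub_apply, Pi.single_eq_same]; omega
  · simp [hj]

lemma deg_eq_zero_iff : deg α = 0 ↔ α = 0 := by simp [deg, funext_iff]

lemma deg_sub_single {i : Fin n} (h : 0 < β i) : deg (β - Pi.single i 1) = deg β - 1 := by
  conv_rhs => rw [← sub_single_add_single h, deg_add, deg_single, Nat.add_sub_cancel]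

lemma mD_one (α : Fin n → ℕ) (y : Euc n) :
    mD α (1 : Euc n → ℝ) y = if α = 0 then 1 else 0 := by
  split_ifs with hα
  · have hnil : directions α = [] :=
      List.length_eq_zero_iff.1 (by rw [length_directions, deg_eq_zero_iff.2 hα])
    rw [mD_eq_pDList, hnil]
    rfl
  · have hle := abs_mD_le (F := fun _ : Euc n => (1 : ℝ)) (α := α) contDiff_const y
    rw [iteratedFDeriv_const_of_ne (mt deg_eq_zero_iff.1 hα), Pi.zero_apply, norm_zero] at hle
    exact abs_nonpos_iff.1 hle

/-- A label (a set of multi-indices) which is closed under raising an exponent, as long as the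
order stays `< m`. -/
def IsMonotonicLabel (m : ℕ) (A : Finset (Fin n → ℕ)) : Prop :=
  ∀ α ∈ A, ∀ i, α + Pi.single i 1 ∈ multiIndices m n → α + Pi.single i 1 ∈ A

end MultiIndex

/-! ### Polynomials of degree `< m` -/

section Polynomials

open scoped ContDiff

variable {m n : ℕ} {x y : Euc n} {r K : ℝ}

/-- Equality of the jets of order `< m`. -/
def JetEq (m : ℕ) (x : Euc n) (F H : Euc n → ℝ) : Prop :=
  ∀ β ∈ multiIndices m n, mD β F x = mD β H x

lemma JetEq.iteratedFDeriv_sub_eq_zero {F H : Euc n → ℝ} (h : JetEq m x F H)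
    (hF : ContDiff ℝ m F) (hH : ContDiff ℝ m H) {k : ℕ} (hk : k < m) :
    iteratedFDeriv ℝ k (F - H) x = 0 := by
  have hFk := contDiff_of_natCast_le hF hk.le
  have hHk := contDiff_of_natCast_le hH hk.le
  rw [← norm_le_zero_iff, ← mul_zero ((n : ℝ) ^ k)]
  refine norm_iteratedFDeriv_le_of_mD_le (F := F - H) (hFk.sub hHk) le_rfl ?_
  rintro α rfl
  rw [mD_sub hFk hHk, h α (mem_multiIndices.2 hk), sub_self, abs_zero]

/-- The real polynomial functions of degree `< m`, described as the smooth functions with vanishing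
derivative of order `m`. -/
def polyLT (m n : ℕ) : Submodule ℝ (Euc n → ℝ) where
  carrier := {P | ContDiff ℝ ∞ P ∧ ∀ x, iteratedFDeriv ℝ m P x = 0}
  zero_mem' := ⟨contDiff_const, fun x => by
    simp⟩
  add_mem' := fun ⟨hP, hP'⟩ ⟨hQ, hQ'⟩ => ⟨hP.add hQ, fun x => by
    rw [iteratedFDeriv_add_apply (contDiff_infty.1 hP m).contDiffAt
      (contDiff_infty.1 hQ m).contDiffAt, hP', hQ', add_zero]⟩
  smul_mem' := fun a _ ⟨hP, hP'⟩ => ⟨contDiff_const.smul hP, fun x => by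
    rw [iteratedFDeriv_const_smul_apply (contDiff_infty.1 hP m).contDiffAt, hP', smul_zero]⟩

lemma contDiff_polyLT (P : polyLT m n) (k : ℕ) : ContDiff ℝ k (P : Euc n → ℝ) :=
  contDiff_infty.1 P.2.1 k

lemma iteratedFDeriv_polyLT (P : polyLT m n) (x : Euc n) :
    iteratedFDeriv ℝ m (P : Euc n → ℝ) x = 0 := P.2.2 x

/-- The Taylor coefficient of index `β` at `x`, normalised so that a polynomial of size `r ^ m` on
the length scale `r` has coefficients of size `1`. -/
def scaledCoeff (m : ℕ) (x : Euc n) (r : ℝ) (β : Fin n → ℕ) : polyLT m n →ₗ[ℝ] ℝ where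
  toFun P := mD β P x / r ^ (m - deg β)
  map_add' P Q := by
    rw [Submodule.coe_add, mD_add (contDiff_polyLT P _) (contDiff_polyLT Q _), add_div]
  map_smul' a P := by
    rw [Submodule.coe_smul, mD_const_smul (contDiff_polyLT P _), mul_div_assoc, RingHom.id_apply,
      smul_eq_mul]

lemma scaledCoeff_apply (x : Euc n) (r : ℝ) (β : Fin n → ℕ) (P : polyLT m n) :
    scaledCoeff m x r β P = mD β P x / r ^ (m - deg β) := rfl

lemma scaledCoeff_eq_zero_iff (hr : 0 < r) {β : Fin n → ℕ} {P : polyLT m n} :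
    scaledCoeff m x r β P = 0 ↔ mD β P x = 0 := by
  rw [scaledCoeff_apply, div_eq_zero_iff, or_iff_left (by positivity)]

lemma abs_scaledCoeff_le_iff (hr : 0 < r) {β : Fin n → ℕ} {P : polyLT m n} :
    |scaledCoeff m x r β P| ≤ K ↔ |mD β P x| ≤ K * r ^ (m - deg β) := by
  rw [scaledCoeff_apply, abs_div, abs_of_pos (pow_pos hr _), div_le_iff₀ (pow_pos hr _)]

lemma JetBound.abs_scaledCoeff_le (hr : 0 < r) {P : polyLT m n}
    (h : JetBound m (P : Euc n → ℝ) x K r) {β : Fin n → ℕ} (hβ : β ∈ multiIndices m n) :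
    |scaledCoeff m x r β P| ≤ K :=
  (abs_scaledCoeff_le_iff hr).2
    ((abs_mD_le (contDiff_polyLT P _) x).trans (h _ (mem_multiIndices.1 hβ).le))

lemma JetBound.of_abs_scaledCoeff_le (hr : 0 < r) (hK : 0 ≤ K) {P : polyLT m n}
    (h : ∀ β ∈ multiIndices m n, |scaledCoeff m x r β P| ≤ K) :
    JetBound m (P : Euc n → ℝ) x (dimConst m n * K) r := by
  have hd := one_le_dimConst m n
  intro k hk
  rcases hk.eq_or_lt with rfl | hk'
  · rw [iteratedFDeriv_polyLT P, norm_zero]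
    positivity
  rw [mul_assoc]
  refine norm_iteratedFDeriv_le_dimConst hk (contDiff_polyLT P _) (by positivity) ?_
  rintro α rfl
  exact (abs_scaledCoeff_le_iff hr).1 (h α (mem_multiIndices.2 hk'))

lemma JetBound.move (hr : 0 < r) {P : polyLT m n} (h : JetBound m (P : Euc n → ℝ) x K r)
    (hy : dist y x ≤ r) : JetBound m (P : Euc n → ℝ) y (2 ^ m * K) r :=
  h.of_mem_closedBall (contDiff_polyLT P m) hr
    (fun z _ => by rw [iteratedFDeriv_polyLT P, norm_zero]; exact h.const_nonneg) hy

lemma abs_scaledCoeff_sub_le {κ : ℝ} (hr : 0 < r) {P : polyLT m n} (hK : 0 ≤ K)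
    (h : ∀ β ∈ multiIndices m n, |scaledCoeff m x r β P| ≤ K) (hκ : κ ≤ 1)
    (hy : dist y x ≤ κ * r) {β : Fin n → ℕ} (hβ : β ∈ multiIndices m n) :
    |scaledCoeff m y r β P - scaledCoeff m x r β P| ≤ 2 ^ m * dimConst m n * κ * K := by
  have hJ := JetBound.of_abs_scaledCoeff_le hr hK h
  have hβm := mem_multiIndices.1 hβ
  have hyr : dist y x ≤ r := hy.trans (mul_le_of_le_one_left hr.le hκ)
  have hd := one_le_dimConst m n
  have hmvt := (convex_closedBall x r).norm_image_sub_le_of_norm_fderiv_le (𝕜 := ℝ)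
    (f := iteratedFDeriv ℝ (deg β) (P : Euc n → ℝ))
    (C := 2 ^ m * (dimConst m n * K) * r ^ (m - (deg β + 1)))
    (fun z _ => (contDiff_polyLT P (deg β + 1)).differentiable_iteratedFDeriv
      (by exact_mod_cast Nat.lt_succ_self _) z)
    (fun z hz => by rw [norm_fderiv_iteratedFDeriv]; exact hJ.move hr hz _ hβm)
    (Metric.mem_closedBall_self hr.le) (Metric.mem_closedBall.2 hyr)
  rw [scaledCoeff_apply, scaledCoeff_apply, ← sub_div, abs_div, abs_of_pos (pow_pos hr _),
    div_le_iff₀ (pow_pos hr _)]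
  rw [dist_eq_norm] at hy
  calc |mD β P y - mD β P x|
      ≤ 2 ^ m * (dimConst m n * K) * r ^ (m - (deg β + 1)) * ‖y - x‖ :=
        (abs_mD_sub_le (contDiff_polyLT P _) x y).trans hmvt
    _ ≤ 2 ^ m * (dimConst m n * K) * r ^ (m - (deg β + 1)) * (κ * r) := by gcongr
    _ = 2 ^ m * dimConst m n * κ * K * r ^ (m - (deg β + 1) + 1) := by ring
    _ = 2 ^ m * dimConst m n * κ * K * r ^ (m - deg β) := by
        rw [show m - (deg β + 1) + 1 = m - deg β by omega]

lemma exists_mD_eq_ite (x : Euc n) (d : ℕ) : ∀ β : Fin n → ℕ, deg β = d →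
    ∃ P : Euc n → ℝ, ContDiff ℝ ∞ P ∧ (∀ α, mD α P x = if α = β then 1 else 0) ∧
      ∀ α, d < deg α → ∀ y, mD α P y = 0 := by
  induction d with
  | zero =>
    intro β hβ
    obtain rfl := deg_eq_zero_iff.1 hβ
    refine ⟨1, contDiff_const, fun α => mD_one α x, fun α hα y => ?_⟩
    rw [mD_one, if_neg (mt deg_eq_zero_iff.2 hα.ne')]
  | succ d ih =>
    intro β hβ
    obtain ⟨i, hi⟩ : ∃ i, 0 < β i := by
      by_contra! h
      exact absurd (deg_eq_zero_iff.2 (funext fun i => Nat.le_zero.1 (h i))) (by omega)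
    obtain ⟨P, hP, hPx, hPtop⟩ := ih (β - Pi.single i 1) (by rw [deg_sub_single hi]; omega)
    have hcd : ∀ k : ℕ, ContDiff ℝ k (coordFrom i x * P) := fun k =>
      (contDiff_coordFrom i x).mul (contDiff_infty.1 hP k)
    refine ⟨(β i : ℝ)⁻¹ • (coordFrom i x * P),
      contDiff_const.smul ((contDiff_coordFrom i x).mul hP), fun α => ?_, fun α hα y => ?_⟩ <;>
    rw [mD_const_smul (hcd _), mD_coordFrom_mul i x α (contDiff_infty.1 hP _)]
    · rw [coordFrom_self, zero_mul, zero_add, hPx]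
      by_cases hαβ : α = β
      · subst hαβ
        rw [if_pos rfl, if_pos rfl, mul_one, inv_mul_cancel₀ (by positivity)]
      rw [if_neg hαβ]
      rcases Nat.eq_zero_or_pos (α i) with h0 | hαi
      · simp [h0]
      · rw [if_neg fun h => hαβ ?_, mul_zero, mul_zero]
        rw [← sub_single_add_single hαi, h, sub_single_add_single hi]
    · rw [hPtop α (by omega), mul_zero, zero_add]
      rcases Nat.eq_zero_or_pos (α i) with h0 | hαi
      · simp [h0]
      · rw [hPtop _ (by rw [deg_sub_single hαi]; omega), mul_zero, mul_zero]

lemma exists_polyLT_mD_eq_ite (x : Euc n) {β : Fin n → ℕ} (hβ : β ∈ multiIndices m n) :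
    ∃ P : polyLT m n, ∀ α, mD α P x = if α = β then 1 else 0 := by
  obtain ⟨P, hP, hPx, hPtop⟩ := exists_mD_eq_ite x _ β rfl
  refine ⟨⟨P, hP, fun y => ?_⟩, hPx⟩
  rw [← norm_le_zero_iff, ← mul_zero ((n : ℝ) ^ m)]
  refine norm_iteratedFDeriv_le_of_mD_le (contDiff_infty.1 hP m) le_rfl fun α hα => ?_
  rw [hPtop α (hα ▸ mem_multiIndices.1 hβ), abs_zero]

lemma exists_polyLT_mD_eq (m : ℕ) (x : Euc n) (v : (Fin n → ℕ) → ℝ) :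
    ∃ P : polyLT m n, ∀ β ∈ multiIndices m n, mD β P x = v β := by
  choose! P hP using fun β (hβ : β ∈ multiIndices m n) => exists_polyLT_mD_eq_ite x hβ
  refine ⟨∑ γ ∈ multiIndices m n, v γ • P γ, fun β hβ => ?_⟩
  have hcoeff : ∀ Q : polyLT m n, mD β Q x = scaledCoeff m x 1 β Q := fun Q => by
    rw [scaledCoeff_apply, one_pow, div_one]
  rw [hcoeff, map_sum, Finset.sum_eq_single_of_mem β hβ, map_smul, ← hcoeff, hP β hβ, if_pos rfl,
    smul_eq_mul, mul_one]
  intro γ hγ hγβ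
  rw [map_smul, ← hcoeff, hP γ hγ, if_neg hγβ.symm, smul_zero]

/-- The polynomials all of whose derivatives with index in the label `A` vanish identically. -/
def vanishingPolys (m : ℕ) (A : Finset (Fin n → ℕ)) : Submodule ℝ (polyLT m n) where
  carrier := {P | ∀ α ∈ A, ∀ z, mD α P z = 0}
  zero_mem' α _ z := by
    simpa using mD_const_smul (α := α) (contDiff_polyLT (0 : polyLT m n) _) 0 z
  add_mem' {P Q} hP hQ α hα z := by
    rw [Submodule.coe_add, mD_add (contDiff_polyLT P _) (contDiff_polyLT Q _), hP α hα, hQ α hα,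
      add_zero]
  smul_mem' a P hP α hα z := by
    rw [Submodule.coe_smul, mD_const_smul (contDiff_polyLT P _), hP α hα, mul_zero]

lemma mem_vanishingPolys {A : Finset (Fin n → ℕ)} {P : polyLT m n} :
    P ∈ vanishingPolys m A ↔ ∀ α ∈ A, ∀ z, mD α P z = 0 := Iff.rfl

lemma mD_polyLT_of_deg_eq {α : Fin n → ℕ} (hα : deg α = m) (P : polyLT m n) (x : Euc n) :
    mD α P x = 0 := by
  subst hα
  simpa [iteratedFDeriv_polyLT P] using abs_mD_le (α := α) (contDiff_polyLT P _) x

lemma mem_vanishingPolys_of_mD_eq_zero {A : Finset (Fin n → ℕ)} (hA : IsMonotonicLabel m A)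
    (hAI : A ⊆ multiIndices m n) {P : polyLT m n} (h : ∀ α ∈ A, mD α P x = 0) :
    P ∈ vanishingPolys m A := by
  suffices hind : ∀ d, ∀ α ∈ A, m ≤ deg α + d → ∀ z, mD α P z = 0 from
    fun α hα => hind m α hα (Nat.le_add_left _ _)
  intro d
  induction d with
  | zero => exact fun α hα hd => absurd (mem_multiIndices.1 (hAI hα)) (by omega)
  | succ d ih =>
    intro α hα hd z
    have hdiff : Differentiable ℝ (mD α P) :=
      (contDiff_mD (k := 1) (contDiff_polyLT P _)).differentiable (by simp)
    have hfderiv : ∀ w, fderiv ℝ (mD α P) w = 0 := by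
      refine fun w => fderiv_eq_zero_of_pD_eq_zero fun i => ?_
      have hdeg : deg (α + Pi.single i 1) = deg α + 1 := by rw [deg_add, deg_single]
      rw [pD_mD i (contDiff_polyLT P _)]
      by_cases hi : α + Pi.single i 1 ∈ multiIndices m n
      · exact ih _ (hA α hα i hi) (by omega) w
      · have := mem_multiIndices.1 (hAI hα)
        rw [mem_multiIndices, not_lt] at hi
        exact mD_polyLT_of_deg_eq (by omega) P w
    rw [is_const_of_fderiv_eq_zero hdiff hfderiv z x]
    exact h α hα

end Polynomials

/-! ### Cutoff functions -/

section Cutoff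

variable {m n : ℕ} {C r : ℝ} {x y : Euc n} {φ : Euc n → ℝ}

/-- `φ` is a smooth cutoff adapted to the ball of radius `r` around `x`: it equals `1` there,
vanishes outside of the ball of twice the radius, and varies on the length scale `r`. -/
structure IsCutoff (m : ℕ) (C : ℝ) (x : Euc n) (r : ℝ) (φ : Euc n → ℝ) : Prop where
  contDiff : ContDiff ℝ m φ
  nonneg : ∀ y, 0 ≤ φ y
  le_one : ∀ y, φ y ≤ 1
  eq_one : ∀ y, dist y x ≤ r → φ y = 1
  eq_zero : ∀ y, 2 * r ≤ dist y x → φ y = 0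
  bound : ∀ k ≤ m, ∀ y, ‖iteratedFDeriv ℝ k φ y‖ ≤ C / r ^ k

lemma exists_iteratedFDeriv_bound (m : ℕ) (b : ContDiffBump (0 : Euc n)) :
    ∃ C : ℝ, 1 ≤ C ∧ ∀ k ≤ m, ∀ y, ‖iteratedFDeriv ℝ k b y‖ ≤ C := by
  choose C hC using fun k =>
    (b.hasCompactSupport.iteratedFDeriv (𝕜 := ℝ) k).exists_bound_of_continuous
      ((b.contDiff (n := k)).continuous_iteratedFDeriv le_rfl)
  have hC₀ : ∀ k, 0 ≤ C k := fun k => (norm_nonneg _).trans (hC k 0)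
  refine ⟨1 + ∑ k ∈ Finset.range (m + 1), C k,
    le_add_of_nonneg_right (Finset.sum_nonneg fun k _ => hC₀ k), fun k hk y => ?_⟩
  have hle : C k ≤ ∑ k ∈ Finset.range (m + 1), C k :=
    Finset.single_le_sum (fun k _ => hC₀ k) (Finset.mem_range_succ_iff.2 hk)
  linarith [hC k y]

lemma exists_isCutoff (m n : ℕ) :
    ∃ C : ℝ, 1 ≤ C ∧ ∀ (x : Euc n) (r : ℝ), 0 < r → ∃ φ, IsCutoff m C x r φ := by
  let b : ContDiffBump (0 : Euc n) := ⟨1, 2, one_pos, one_lt_two⟩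
  obtain ⟨C, hC, hbound⟩ := exists_iteratedFDeriv_bound m b
  refine ⟨C, hC, fun x r hr => ⟨fun y => b (r⁻¹ • (y - x)), ?_⟩⟩
  have hnorm : ∀ y, ‖r⁻¹ • (y - x)‖ = dist y x / r := fun y => by
    rw [norm_smul, Real.norm_of_nonneg (by positivity), dist_eq_norm, inv_mul_eq_div]
  exact
    { contDiff := b.contDiff.comp (by fun_prop : ContDiff ℝ m fun y : Euc n => r⁻¹ • (y - x))
      nonneg := fun y => b.nonneg
      le_one := fun y => b.le_one
      eq_one := fun y hy => b.one_of_mem_closedBall <| by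
        rw [mem_closedBall_zero_iff, hnorm]
        exact (div_le_one hr).2 hy
      eq_zero := fun y hy => b.zero_of_le_dist <| by
        rw [dist_zero_right, hnorm]
        exact (le_div_iff₀ hr).2 hy
      bound := fun k hk y => by
        rw [iteratedFDeriv_comp_sub (f := fun z => b (r⁻¹ • z)) k x y,
          iteratedFDeriv_comp_const_smul _ b.contDiff, norm_smul, norm_pow, norm_inv,
          Real.norm_of_nonneg hr.le, inv_pow, inv_mul_eq_div]
        gcongr
        exact hbound k hk _ }

/-- A constant for which cutoffs exist at all points and all scales. -/
def cutoffConst (m n : ℕ) : ℝ := (exists_isCutoff m n).choose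

lemma one_le_cutoffConst (m n : ℕ) : 1 ≤ cutoffConst m n := (exists_isCutoff m n).choose_spec.1

lemma exists_isCutoff_cutoffConst (m : ℕ) (x : Euc n) (hr : 0 < r) :
    ∃ φ, IsCutoff m (cutoffConst m n) x r φ := (exists_isCutoff m n).choose_spec.2 x r hr

lemma IsCutoff.eventuallyEq_zero (h : IsCutoff m C x r φ) (hy : 2 * r < dist y x) :
    φ =ᶠ[nhds y] 0 := by
  filter_upwards [(isOpen_lt continuous_const (continuous_id.dist continuous_const)).mem_nhds hy]
    with z hz using h.eq_zero z hz.le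

lemma IsCutoff.eventuallyEq_one (h : IsCutoff m C x r φ) (hy : dist y x < r) :
    φ =ᶠ[nhds y] 1 := by
  filter_upwards [Metric.isOpen_ball.mem_nhds hy] with z hz using h.eq_one z hz.le

end Cutoff

/-! ### Nonnegative interpolants and their jets -/

section Interpolants

variable {m n k k' : ℕ} {f F H : Euc n → ℝ} {E S S' : Set (Euc n)} {x y : Euc n}
  {C C' K r : ℝ} {P R : polyLT m n}

/-- `F` is a nonnegative `C^m` function with derivatives bounded by `C` which agrees with `f`
on `S`. -/
structure IsNonnegInterpolant (m : ℕ) (f : Euc n → ℝ) (S : Set (Euc n)) (C : ℝ)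
    (F : Euc n → ℝ) : Prop where
  contDiff : ContDiff ℝ m F
  bound : ∀ j ≤ m, ∀ y, ‖iteratedFDeriv ℝ j F y‖ ≤ C
  nonneg : ∀ y, 0 ≤ F y
  eqOn : Set.EqOn F f S

lemma IsNonnegInterpolant.mono (hF : IsNonnegInterpolant m f S C F) (hS : S' ⊆ S)
    (hC : C ≤ C') : IsNonnegInterpolant m f S' C' F :=
  ⟨hF.contDiff, fun j hj y => (hF.bound j hj y).trans hC, hF.nonneg, hF.eqOn.mono hS⟩

lemma convex_setOf_eqOn (f : Euc n → ℝ) (S : Set (Euc n)) : Convex ℝ {F | Set.EqOn F f S} := by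
  intro F hF H hH a b _ _ hab y hy
  rw [Pi.add_apply, Pi.smul_apply, Pi.smul_apply, hF hy, hH hy, ← add_smul, hab, one_smul]

lemma convex_setOf_norm_iteratedFDeriv_le (x : Euc n) (C : ℝ) :
    Convex ℝ {F : Euc n → ℝ | ContDiff ℝ k F ∧ ‖iteratedFDeriv ℝ k F x‖ ≤ C} := by
  rintro F ⟨hF, hF'⟩ H ⟨hH, hH'⟩ a b ha hb hab
  have hFa : ContDiff ℝ k (a • F) := contDiff_const.smul hF
  have hHb : ContDiff ℝ k (b • H) := contDiff_const.smul hH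
  refine ⟨hFa.add hHb, ?_⟩
  rw [iteratedFDeriv_add_apply hFa.contDiffAt hHb.contDiffAt,
    iteratedFDeriv_const_smul_apply hF.contDiffAt, iteratedFDeriv_const_smul_apply hH.contDiffAt]
  have hball := convex_closedBall (0 : ContinuousMultilinearMap ℝ (fun _ : Fin k => Euc n) ℝ) C
  simpa using hball (mem_closedBall_zero_iff.2 hF') (mem_closedBall_zero_iff.2 hH') ha hb hab

lemma convex_setOf_isNonnegInterpolant (f : Euc n → ℝ) (S : Set (Euc n)) (C : ℝ) :
    Convex ℝ {F | IsNonnegInterpolant m f S C F} := by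
  intro F hF H hH a b ha hb hab
  refine ⟨(contDiff_const.smul hF.contDiff).add (contDiff_const.smul hH.contDiff),
    fun j hj y => ?_, fun y => ?_, convex_setOf_eqOn f S hF.eqOn hH.eqOn ha hb hab⟩
  · exact (convex_setOf_norm_iteratedFDeriv_le y C
      ⟨contDiff_of_natCast_le hF.contDiff hj, hF.bound j hj y⟩
      ⟨contDiff_of_natCast_le hH.contDiff hj, hH.bound j hj y⟩ ha hb hab).2
  · exact add_nonneg (mul_nonneg ha (hF.nonneg y)) (mul_nonneg hb (hH.nonneg y))

lemma convex_setOf_jetBound (m : ℕ) (x : Euc n) (K r : ℝ) :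
    Convex ℝ {F : Euc n → ℝ | ContDiff ℝ m F ∧ JetBound m F x K r} := by
  rintro F ⟨hF, hF'⟩ H ⟨hH, hH'⟩ a b ha hb hab
  refine ⟨(contDiff_const.smul hF).add (contDiff_const.smul hH), fun k hk => ?_⟩
  exact (convex_setOf_norm_iteratedFDeriv_le x _ ⟨contDiff_of_natCast_le hF hk, hF' k hk⟩
    ⟨contDiff_of_natCast_le hH hk, hH' k hk⟩ ha hb hab).2

lemma mD_add_const_smul {β : Fin n → ℕ} (hF : ContDiff ℝ m F) (hH : ContDiff ℝ m H) (a b : ℝ)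
    (x : Euc n) (hβ : β ∈ multiIndices m n) :
    mD β (a • F + b • H) x = a * mD β F x + b * mD β H x := by
  have hF' := contDiff_of_natCast_le hF (mem_multiIndices.1 hβ).le
  have hH' := contDiff_of_natCast_le hH (mem_multiIndices.1 hβ).le
  rw [mD_add (F := a • F) (H := b • H) (contDiff_const.smul hF') (contDiff_const.smul hH'),
    mD_const_smul hF', mD_const_smul hH']

/-- The jets at `x` which are, for each set `S ⊆ E` of at most `k` points, the jet of a nonnegative
interpolant of `f` on `S` with constant `C`. -/
def interpolantJets (m : ℕ) (E : Set (Euc n)) (f : Euc n → ℝ) (k : ℕ) (x : Euc n) (C : ℝ) :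
    Set (polyLT m n) :=
  {P | ∀ S ⊆ E, S.ncard ≤ k → ∃ F, IsNonnegInterpolant m f S C F ∧ JetEq m x F P}

lemma interpolantJets_anti (h : k' ≤ k) (x : Euc n) (C : ℝ) :
    interpolantJets m E f k x C ⊆ interpolantJets m E f k' x C :=
  fun _ hP S hS hk => hP S hS (hk.trans h)

lemma interpolantJets_mono (h : C ≤ C') :
    interpolantJets m E f k x C ⊆ interpolantJets m E f k x C' := fun _ hP S hS hk =>
  let ⟨F, hF, hFP⟩ := hP S hS hk
  ⟨F, hF.mono le_rfl h, hFP⟩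

lemma convex_interpolantJets (E : Set (Euc n)) (f : Euc n → ℝ) (k : ℕ) (x : Euc n) (C : ℝ) :
    Convex ℝ (interpolantJets m E f k x C) := by
  intro P hP Q hQ a b ha hb hab S hS hk
  obtain ⟨F, hF, hFP⟩ := hP S hS hk
  obtain ⟨H, hH, hHQ⟩ := hQ S hS hk
  refine ⟨a • F + b • H, convex_setOf_isNonnegInterpolant f S C hF hH ha hb hab, fun β hβ => ?_⟩
  rw [mD_add_const_smul hF.contDiff hH.contDiff _ _ _ hβ, Submodule.coe_add, Submodule.coe_smul,
    Submodule.coe_smul, mD_add_const_smul (contDiff_polyLT P m) (contDiff_polyLT Q m) _ _ _ hβ,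
    hFP β hβ, hHQ β hβ]

/-- The Helly number of the space of jets of order `< m`. -/
def hellyNumber (m n : ℕ) : ℕ := (multiIndices m n).card + 1

lemma exists_common_jet {𝓕 : Set (Euc n → ℝ)} (hE : E.Finite) (f : Euc n → ℝ)
    (hcd : ∀ F ∈ 𝓕, ContDiff ℝ m F) (h𝓕 : Convex ℝ 𝓕) (k : ℕ) (y : Euc n)
    (h : ∀ S ⊆ E, S.ncard ≤ hellyNumber m n * k → ∃ F ∈ 𝓕, Set.EqOn F f S) :
    ∃ R : polyLT m n, ∀ S ⊆ E, S.ncard ≤ k → ∃ F ∈ 𝓕, Set.EqOn F f S ∧ JetEq m y F R := by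
  classical
  let jets : Set (Euc n) → Set (multiIndices m n → ℝ) := fun S =>
    {v | ∃ F ∈ 𝓕, Set.EqOn F f S ∧ ∀ β, mD β.1 F y = v β}
  obtain ⟨subsets, hsubsets⟩ : ∃ s : Finset (Set (Euc n)), ∀ S, S ∈ s ↔ S ⊆ E ∧ S.ncard ≤ k :=
    ⟨{S ∈ hE.finite_subsets.toFinset | S.ncard ≤ k}, fun S => by simp⟩
  have hconvex : ∀ S ∈ subsets, Convex ℝ (jets S) := by
    rintro S - v ⟨F, hF, hFS, hFv⟩ w ⟨H, hH, hHS, hHw⟩ a b ha hb hab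
    refine ⟨a • F + b • H, h𝓕 hF hH ha hb hab, convex_setOf_eqOn f S hFS hHS ha hb hab,
      fun β => ?_⟩
    rw [mD_add_const_smul (hcd F hF) (hcd H hH) _ _ _ β.2, hFv, hHw]
    rfl
  have hinter : ∀ I ⊆ subsets, I.card ≤ Module.finrank ℝ (multiIndices m n → ℝ) + 1 →
      (⋂ S ∈ I, jets S).Nonempty := by
    intro I hI hcard
    rw [Module.finrank_fintype_fun_eq_card, Fintype.card_coe] at hcard
    obtain ⟨F, hF, hFI⟩ := h (⋃ S ∈ I, S)
      (Set.iUnion₂_subset fun S hS => ((hsubsets S).1 (hI hS)).1)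
      (calc (⋃ S ∈ I, S).ncard ≤ ∑ S ∈ I, S.ncard := Finset.set_ncard_biUnion_le I fun S => S
        _ ≤ I.card * k := Finset.sum_le_card_nsmul _ _ _ fun S hS => ((hsubsets S).1 (hI hS)).2
        _ ≤ hellyNumber m n * k := Nat.mul_le_mul_right _ hcard)
    exact ⟨fun β => mD β.1 F y, Set.mem_iInter₂.2 fun S hS =>
      ⟨F, hF, hFI.mono (Set.subset_biUnion_of_mem (u := fun S => S) hS), fun _ => rfl⟩⟩
  obtain ⟨v, hv⟩ := Convex.helly_theorem' hconvex hinter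
  obtain ⟨R, hR⟩ := exists_polyLT_mD_eq m y
    fun β => if hβ : β ∈ multiIndices m n then v ⟨β, hβ⟩ else 0
  refine ⟨R, fun S hS hk => ?_⟩
  obtain ⟨F, hF, hFS, hFv⟩ := Set.mem_iInter₂.1 hv S ((hsubsets S).2 ⟨hS, hk⟩)
  refine ⟨F, hF, hFS, fun β hβ => ?_⟩
  rw [hR β hβ, dif_pos hβ]
  exact hFv ⟨β, hβ⟩

lemma JetEq.jetBound_sub (hJ : JetEq m x F P) (hF : ContDiff ℝ m F)
    (hC : ∀ z ∈ Metric.closedBall x r, ‖iteratedFDeriv ℝ m F z‖ ≤ C) (hr : 0 < r)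
    (hy : dist y x ≤ r) : JetBound m (F - (P : Euc n → ℝ)) y (2 ^ m * C) r := by
  have hcd : ContDiff ℝ m (F - (P : Euc n → ℝ)) := hF.sub (contDiff_polyLT P m)
  have htop : ∀ z ∈ Metric.closedBall x r,
      ‖iteratedFDeriv ℝ m (F - (P : Euc n → ℝ)) z‖ ≤ C := fun z hz => by
    rw [iteratedFDeriv_sub_apply hF.contDiffAt (contDiff_polyLT P m).contDiffAt,
      iteratedFDeriv_polyLT P, sub_zero]
    exact hC z hz
  have hx := Metric.mem_closedBall_self (x := x) hr.le
  refine JetBound.of_mem_closedBall hcd hr (x := x) (fun k hk => ?_) htop hy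
  rcases hk.eq_or_lt with rfl | hk
  · simpa using htop x hx
  · have hC₀ : 0 ≤ C := (norm_nonneg _).trans (hC x hx)
    rw [hJ.iteratedFDeriv_sub_eq_zero hF (contDiff_polyLT P m) hk, norm_zero]
    positivity

lemma JetBound.sub_of_jetEq (hB : JetBound m (F - (P : Euc n → ℝ)) y K r)
    (hF : ContDiff ℝ m F) (hr : 0 ≤ r) (hJ : JetEq m y F R) :
    JetBound m ((P - R : polyLT m n) : Euc n → ℝ) y K r := by
  intro k hk
  have hK := hB.const_nonneg
  rcases hk.eq_or_lt with rfl | hkm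
  · rw [iteratedFDeriv_polyLT, norm_zero]
    positivity
  have hFk := (contDiff_of_natCast_le hF hk).contDiffAt (x := y)
  have hPk := (contDiff_polyLT P k).contDiffAt (x := y)
  have hRk := (contDiff_polyLT R k).contDiffAt (x := y)
  have hFR := hJ.iteratedFDeriv_sub_eq_zero hF (contDiff_polyLT R m) hkm
  rw [iteratedFDeriv_sub_apply hFk hRk, sub_eq_zero] at hFR
  rw [Submodule.coe_sub, iteratedFDeriv_sub_apply hPk hRk, ← hFR, norm_sub_rev,
    ← iteratedFDeriv_sub_apply hFk hPk]
  exact hB k hk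

lemma exists_mem_interpolantJets_near (hE : E.Finite) (hk : hellyNumber m n * k' ≤ k)
    (hr : 0 < r) (hy : dist y x ≤ r) (hP : P ∈ interpolantJets m E f k x C) :
    ∃ R ∈ interpolantJets m E f k' y C,
      JetBound m ((P - R : polyLT m n) : Euc n → ℝ) y (2 ^ m * C) r := by
  obtain ⟨R, hR⟩ := exists_common_jet (𝓕 := {F | IsNonnegInterpolant m f ∅ C F} ∩
      (fun F => F + -(P : Euc n → ℝ)) ⁻¹'
        {F | ContDiff ℝ m F ∧ JetBound m F y (2 ^ m * C) r}) hE f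
    (fun F hF => hF.1.contDiff)
    ((convex_setOf_isNonnegInterpolant f ∅ C).inter
      ((convex_setOf_jetBound m y _ r).translate_preimage_left _)) k' y
    fun S hS hSk => by
      obtain ⟨F, hF, hJ⟩ := hP S hS (hSk.trans hk)
      exact ⟨F, ⟨hF.mono (Set.empty_subset _) le_rfl,
        hF.contDiff.sub (contDiff_polyLT P m),
        hJ.jetBound_sub hF.contDiff (fun z _ => hF.bound m le_rfl z) hr hy⟩, hF.eqOn⟩
  refine ⟨R, fun S hS hSk => ?_, ?_⟩
  · obtain ⟨F, ⟨hF, -⟩, hFS, hJ⟩ := hR S hS hSk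
    exact ⟨F, ⟨hF.contDiff, hF.bound, hF.nonneg, hFS⟩, hJ⟩
  · obtain ⟨F, ⟨hF, -, hB⟩, -, hJ⟩ := hR ∅ (Set.empty_subset _) (by simp)
    exact JetBound.sub_of_jetEq hB hF.contDiff hr.le hJ

end Interpolants

/-! ### Weak bases and relabelling -/

section SymmPart

open scoped Pointwise

variable {V : Type*} [AddCommGroup V] {K T : Set V} {P Q R U S : V} {a b t : ℝ}

/-- The symmetric part of `K` around `P`: the directions in which one can move from `P` both
forwards and backwards without leaving `K`. -/
def symmPart (K : Set V) (P : V) : Set V := {Q | P + Q ∈ K ∧ P - Q ∈ K}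

lemma symmPart_mono {K' : Set V} (h : K ⊆ K') (P : V) : symmPart K P ⊆ symmPart K' P :=
  fun _ hQ => ⟨h hQ.1, h hQ.2⟩

lemma zero_mem_symmPart (h : P ∈ K) : (0 : V) ∈ symmPart K P := by
  constructor <;> simpa

variable [Module ℝ V]

lemma absConvex_symmPart (hK : Convex ℝ K) (P : V) : AbsConvex ℝ (symmPart K P) := by
  have hconvex : Convex ℝ (symmPart K P) := by
    refine (hK.translate_preimage_right P).inter fun Q hQ R hR a b ha hb hab => ?_
    change P - (a • Q + b • R) ∈ K
    convert hK hQ hR ha hb hab using 1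
    nth_rw 1 [← one_smul ℝ P, ← hab]
    module
  refine ⟨balanced_iff_smul_mem.2 fun {t} ht Q hQ => ?_, hconvex⟩
  have hneg : -Q ∈ symmPart K P := ⟨by simpa [← sub_eq_add_neg] using hQ.2, by simpa using hQ.1⟩
  rw [Real.norm_eq_abs, abs_le] at ht
  have hmem := hconvex hQ hneg (a := (1 + t) / 2) (b := (1 - t) / 2) (by linarith) (by linarith)
    (by ring)
  convert hmem using 1
  module

lemma smul_set_mono_of_absConvex (hT : AbsConvex ℝ T) (ha : 0 ≤ a) (hab : a ≤ b) :
    a • T ⊆ b • T :=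
  hT.1.smul_mono (by rwa [Real.norm_of_nonneg ha, Real.norm_of_nonneg (ha.trans hab)])

lemma smul_mem_abs_mul_smul (hT : AbsConvex ℝ T) (hQ : Q ∈ a • T) (t : ℝ) :
    t • Q ∈ (|t| * a) • T := by
  have hmem : t • Q ∈ (t * a) • T := by
    rw [← smul_smul]
    exact Set.smul_mem_smul_set hQ
  rwa [hT.1.smul_congr (by simp : ‖t * a‖ = ‖|t| * a‖)] at hmem

lemma sub_mem_add_smul (hT : AbsConvex ℝ T) (ha : 0 ≤ a) (hb : 0 ≤ b) (hQ : Q ∈ a • T)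
    (hR : R ∈ b • T) : Q - R ∈ (a + b) • T := by
  rw [hT.2.add_smul ha hb, sub_eq_add_neg, ← neg_one_smul ℝ R]
  have hneg := smul_mem_abs_mul_smul hT hR (-1)
  rw [abs_neg, abs_one, one_mul] at hneg
  exact Set.add_mem_add hQ hneg

lemma sum_smul_mem_smul (hT : AbsConvex ℝ T) (hT₀ : (0 : V) ∈ T) (ha : 0 ≤ a) {ι : Type*}
    (s : Finset ι) (t : ι → ℝ) (Q : ι → V) (hQ : ∀ i ∈ s, Q i ∈ a • T) :
    ∑ i ∈ s, t i • Q i ∈ (∑ i ∈ s, |t i| * a) • T := by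
  classical
  induction s using Finset.induction_on with
  | empty => exact ⟨0, hT₀, by simp⟩
  | insert i s hi ih =>
    rw [Finset.sum_insert hi, Finset.sum_insert hi,
      hT.2.add_smul (by positivity) (Finset.sum_nonneg fun j _ => by positivity)]
    exact Set.add_mem_add (smul_mem_abs_mul_smul hT (hQ i (Finset.mem_insert_self i s)) _)
      (ih fun j hj => hQ j (Finset.mem_insert_of_mem hj))

lemma mem_symmPart_midpoint (hP : P ∈ K) (hU : P + (2 : ℝ) • U ∈ K) : U ∈ symmPart K (P + U) :=
  ⟨by rwa [add_assoc, ← two_smul ℝ U], by rwa [add_sub_cancel_right]⟩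

lemma add_mem_symmPart (hK : Convex ℝ K) (hQ : Q ∈ symmPart K P) (hR : R ∈ symmPart K S)
    (ha : 0 ≤ a) (hb : 0 ≤ b) (hab : a + b = 1) :
    a • Q + b • R ∈ symmPart K (a • P + b • S) := by
  constructor
  · convert hK hQ.1 hR.1 ha hb hab using 1
    module
  · convert hK hQ.2 hR.2 ha hb hab using 1
    module

lemma smul_mem_symmPart_midpoint (hK : Convex ℝ K) (hQ : Q ∈ symmPart K P)
    (hU : P + (2 : ℝ) • U ∈ K) : (2⁻¹ : ℝ) • Q ∈ symmPart K (P + U) := by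
  constructor
  · convert hK hQ.1 hU (a := 2⁻¹) (b := 2⁻¹) (by norm_num) (by norm_num) (by norm_num) using 1
    module
  · convert hK hQ.2 hU (a := 2⁻¹) (b := 2⁻¹) (by norm_num) (by norm_num) (by norm_num) using 1
    module

lemma mem_of_mem_symmPart (hK : Convex ℝ K) (hQ : Q ∈ symmPart K P) : P ∈ K := by
  convert hK hQ.1 hQ.2 (a := 2⁻¹) (b := 2⁻¹) (by norm_num) (by norm_num) (by norm_num) using 1
  module

lemma add_inv_smul_mem (hK : Convex ℝ K) (hP : P ∈ K) (hR : R ∈ K) (ha : 0 ≤ a)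
    (hS : S ∈ a • symmPart K P) (hab : 2 * a ≤ b) (hb : 2 ≤ b) :
    P + b⁻¹ • (R + S - P) ∈ K := by
  have hb₀ : 0 < b := by linarith
  have hsmall : (2 * b⁻¹) • S ∈ (1 : ℝ) • symmPart K P := by
    refine smul_set_mono_of_absConvex (absConvex_symmPart hK P) (by positivity) ?_
      (smul_mem_abs_mul_smul (absConvex_symmPart hK P) hS _)
    rw [abs_of_pos (by positivity), mul_right_comm, ← div_eq_mul_inv]
    exact (div_le_one hb₀).2 hab
  rw [one_smul] at hsmall
  have hmove : P + (2 * b⁻¹) • (R - P) ∈ K :=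
    hK.add_smul_sub_mem hP hR ⟨by positivity, by rwa [← div_eq_mul_inv, div_le_one hb₀]⟩
  convert hK hsmall.1 hmove (a := 2⁻¹) (b := 2⁻¹) (by norm_num) (by norm_num) (by norm_num) using 1
  module

end SymmPart

section WeakBasis

open scoped Pointwise

variable {ι V : Type*} [AddCommGroup V] [Module ℝ V] {I A : Finset ι} {κ : ι → ℕ}
  {G : ℝ → Set V} {c : ι → V →ₗ[ℝ] ℝ} {P H : V} {C D K : ℝ} {Q : ι → V} {b : ι}

/-- The order on labels `A ⊆ I`, encoded as a number: elements with a smaller `κ` are heavier than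
all elements with a larger `κ` together. -/
def labelWeight (I : Finset ι) (κ : ι → ℕ) (A : Finset ι) : ℕ := ∑ α ∈ A, 2 ^ (I.sup κ - κ α)

lemma labelWeight_mono {B : Finset ι} (h : A ⊆ B) : labelWeight I κ A ≤ labelWeight I κ B :=
  Finset.sum_le_sum_of_subset h

lemma sum_le_card_mul (hA : A ⊆ I) {g : ι → ℝ} {B : ℝ} (hB : 0 ≤ B) (hg : ∀ α ∈ A, g α ≤ B) :
    ∑ α ∈ A, g α ≤ I.card * B := by
  refine (Finset.sum_le_card_nsmul A g B hg).trans ?_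
  rw [nsmul_eq_mul]
  gcongr

/-- All coefficients of the vectors `Q α`, `α ∈ A`, are bounded by `C`. -/
def CoeffBounded (I : Finset ι) (c : ι → V →ₗ[ℝ] ℝ) (A : Finset ι) (C : ℝ) (Q : ι → V) : Prop :=
  ∀ α ∈ A, ∀ β ∈ I, |c β (Q α)| ≤ C

lemma CoeffBounded.abs_coeff_sum_le (h : CoeffBounded I c A C Q) {s : Finset ι} (hs : s ⊆ A)
    (hA : A ⊆ I) (hC : 0 ≤ C) {t : ι → ℝ} {B : ℝ} (hB : 0 ≤ B) (ht : ∀ α ∈ s, |t α| ≤ B) {β : ι}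
    (hβ : β ∈ I) : |c β (∑ α ∈ s, t α • Q α)| ≤ I.card * (B * C) := by
  rw [map_sum]
  refine (Finset.abs_sum_le_sum_abs _ _).trans
    (sum_le_card_mul (hs.trans hA) (by positivity) fun α hα => ?_)
  rw [map_smul, smul_eq_mul, abs_mul]
  exact mul_le_mul (ht α hα) (h α (hs hα) β hβ) (abs_nonneg _) hB

variable [DecidableEq ι]

/-- The label in which `b` replaces all elements of `A` with a larger `κ`. -/
def relabel (κ : ι → ℕ) (A : Finset ι) (b : ι) : Finset ι := insert b {γ ∈ A | κ γ < κ b}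

lemma labelWeight_lt_labelWeight_relabel (hκ : Set.InjOn κ I) (hA : A ⊆ I) (hb : b ∈ I)
    (hbA : b ∉ A) : labelWeight I κ A < labelWeight I κ (relabel κ A b) := by
  have hsup : ∀ α ∈ I, κ α ≤ I.sup κ := fun α hα => Finset.le_sup hα
  have hinj : Set.InjOn (fun α => I.sup κ - κ α) ({γ ∈ A | ¬κ γ < κ b} : Finset ι) := by
    intro α hα β hβ h
    have hαI := hA (Finset.mem_filter.1 hα).1
    have hβI := hA (Finset.mem_filter.1 hβ).1
    have hα := hsup α hαI
    have hβ := hsup β hβI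
    exact hκ hαI hβI (by dsimp only at h; omega)
  have hlt : ∑ α ∈ A with ¬κ α < κ b, 2 ^ (I.sup κ - κ α) < 2 ^ (I.sup κ - κ b) := by
    rw [← Finset.sum_image (f := fun a => 2 ^ a) hinj]
    refine Nat.geomSum_lt le_rfl (Finset.forall_mem_image.2 fun γ hγ => ?_)
    obtain ⟨hγA, hγb⟩ := Finset.mem_filter.1 hγ
    have hne : κ γ ≠ κ b := fun h => hbA (hκ (hA hγA) hb h ▸ hγA)
    have := hsup γ (hA hγA)
    omega
  rw [labelWeight, labelWeight, relabel, Finset.sum_insert (by simp),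
    ← Finset.sum_filter_add_sum_filter_not A fun γ => κ γ < κ b]
  omega

/-- A family of convex sets that grows with its parameter. -/
structure IsConvexFamily (G : ℝ → Set V) : Prop where
  convex : ∀ C, Convex ℝ (G C)
  mono : Monotone G

lemma IsConvexFamily.absConvex_symmPart (hG : IsConvexFamily G) (C : ℝ) (P : V) :
    AbsConvex ℝ (symmPart (G C) P) :=
  _root_.absConvex_symmPart (hG.convex C) P

lemma IsConvexFamily.smul_symmPart_mono (hG : IsConvexFamily G) (P : V) {a b : ℝ} (ha : 0 ≤ a)
    (hab : a ≤ b) (hCD : C ≤ D) : a • symmPart (G C) P ⊆ b • symmPart (G D) P :=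
  (Set.smul_set_mono (symmPart_mono (hG.mono hCD) P)).trans
    (smul_set_mono_of_absConvex (hG.absConvex_symmPart D P) ha hab)

/-- A weak basis with label `A` and constant `C` at `P ∈ G C`: directions `Q α`, `α ∈ A`, of size
`C` relative to the symmetric part of `G C` around `P`, which are dual to the coefficients `c α`,
and all of whose coefficients that follow their leading one in the order `κ` are controlled. -/
structure WeakBasis (I : Finset ι) (κ : ι → ℕ) (G : ℝ → Set V) (c : ι → V →ₗ[ℝ] ℝ)
    (A : Finset ι) (P : V) (C : ℝ) (Q : ι → V) : Prop where
  subset : A ⊆ I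
  one_le : 1 ≤ C
  mem : P ∈ G C
  mem_smul_symmPart : ∀ α ∈ A, Q α ∈ C • symmPart (G C) P
  dual : ∀ α ∈ A, ∀ β ∈ A, c β (Q α) = if β = α then 1 else 0
  abs_coeff_le : ∀ α ∈ A, ∀ β ∈ I, κ α ≤ κ β → |c β (Q α)| ≤ C

/-- There is a weak basis at `P` whose label precedes `A` in the order on labels. -/
def HasHeavierBasis (I : Finset ι) (κ : ι → ℕ) (G : ℝ → Set V) (c : ι → V →ₗ[ℝ] ℝ)
    (A : Finset ι) (P : V) (C : ℝ) : Prop :=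
  ∃ A' Q', labelWeight I κ A < labelWeight I κ A' ∧ WeakBasis I κ G c A' P C Q'

lemma WeakBasis.mono (hG : IsConvexFamily G) (h : WeakBasis I κ G c A P C Q) (hC : C ≤ D) :
    WeakBasis I κ G c A P D Q where
  subset := h.subset
  one_le := h.one_le.trans hC
  mem := hG.mono hC h.mem
  mem_smul_symmPart α hα := hG.smul_symmPart_mono P (zero_le_one.trans h.one_le) hC hC
    (h.mem_smul_symmPart α hα)
  dual := h.dual
  abs_coeff_le α hα β hβ hk := (h.abs_coeff_le α hα β hβ hk).trans hC

lemma HasHeavierBasis.mono (hG : IsConvexFamily G) (h : HasHeavierBasis I κ G c A P C)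
    (hC : C ≤ D) : HasHeavierBasis I κ G c A P D := by
  obtain ⟨A', Q', hlt, hQ'⟩ := h
  exact ⟨A', Q', hlt, hQ'.mono hG hC⟩

lemma WeakBasis.coeff_sum (h : WeakBasis I κ G c A P C Q) {s : Finset ι} (hs : s ⊆ A) (t : ι → ℝ)
    {γ : ι} (hγ : γ ∈ s) : c γ (∑ α ∈ s, t α • Q α) = t γ := by
  rw [map_sum, Finset.sum_eq_single γ]
  · rw [map_smul, h.dual γ (hs hγ) γ (hs hγ), if_pos rfl, smul_eq_mul, mul_one]
  · intro α hα hne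
    rw [map_smul, h.dual α (hs hα) γ (hs hγ), if_neg hne.symm, smul_zero]
  · exact fun hγ' => absurd hγ hγ'

lemma WeakBasis.sum_mem_smul_symmPart (hG : IsConvexFamily G) (h : WeakBasis I κ G c A P C Q)
    {s : Finset ι} (hs : s ⊆ A) {t : ι → ℝ} {B : ℝ} (hB : 0 ≤ B) (ht : ∀ α ∈ s, |t α| ≤ B) :
    ∑ α ∈ s, t α • Q α ∈ (I.card * (B * C)) • symmPart (G C) P := by
  have hC : 0 ≤ C := zero_le_one.trans h.one_le
  have hT := hG.absConvex_symmPart C P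
  exact smul_set_mono_of_absConvex hT (Finset.sum_nonneg fun α _ => by positivity)
    (sum_le_card_mul (hs.trans h.subset) (by positivity) fun α hα => by gcongr; exact ht α hα)
    (sum_smul_mem_smul hT (zero_mem_symmPart h.mem) hC s t Q
      fun α hα => h.mem_smul_symmPart α (hs hα))

/-- The constant of a weak basis of constant `C` into which a vector of size `K` is swapped. -/
def swapConst (C K : ℝ) : ℝ := C + K + C * K

lemma le_swapConst (hC : 1 ≤ C) (hK : 1 ≤ K) : C ≤ swapConst C K ∧ K ≤ swapConst C K := by
  have hCK : 0 ≤ C * K := by positivity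
  constructor <;> rw [swapConst] <;> linarith

lemma mem_relabel {γ : ι} : γ ∈ relabel κ A b ↔ γ = b ∨ γ ∈ A ∧ κ γ < κ b := by
  rw [relabel, Finset.mem_insert, Finset.mem_filter]

lemma WeakBasis.sub_smul_mem_smul_symmPart (hG : IsConvexFamily G)
    (h : WeakBasis I κ G c A P C Q) {γ : ι} (hγ : γ ∈ A) (hb : b ∈ I) (hγb : κ γ ≤ κ b)
    (hK : 1 ≤ K) (hHG : H ∈ K • symmPart (G K) P) :
    Q γ - c b (Q γ) • H ∈ swapConst C K • symmPart (G (swapConst C K)) P := by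
  have hC := h.one_le
  have hT := hG.absConvex_symmPart (swapConst C K) P
  have hcoeff := h.abs_coeff_le γ hγ b hb hγb
  refine smul_set_mono_of_absConvex hT (by positivity) ?_
    (sub_mem_add_smul hT (by positivity) (by positivity)
      (hG.smul_symmPart_mono P (by linarith) le_rfl (le_swapConst hC hK).1
        (h.mem_smul_symmPart γ hγ))
      (smul_mem_abs_mul_smul hT
        (hG.smul_symmPart_mono P (by linarith) le_rfl (le_swapConst hC hK).2 hHG) _))
  have hCK : |c b (Q γ)| * K ≤ C * K := by gcongr
  rw [swapConst]
  linarith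

lemma WeakBasis.swap (hG : IsConvexFamily G) (h : WeakBasis I κ G c A P C Q) (hb : b ∈ I)
    (hH : c b H = 1) (hH₀ : ∀ γ ∈ A, κ γ < κ b → c γ H = 0) (hHK : ∀ β ∈ I, |c β H| ≤ K)
    (hHG : H ∈ K • symmPart (G K) P) :
    WeakBasis I κ G c (relabel κ A b) P (swapConst C K)
      (fun γ => if κ γ < κ b then Q γ - c b (Q γ) • H else H) := by
  have hC := h.one_le
  have hK : 1 ≤ K := by simpa [hH] using hHK b hb
  obtain ⟨hCD, hKD⟩ := le_swapConst hC hK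
  refine ⟨fun γ hγ => ?_, hC.trans hCD, hG.mono hCD h.mem, fun γ hγ => ?_, fun γ hγ β hβ => ?_,
    fun γ hγ β hβ hγβ => ?_⟩
  · rcases mem_relabel.1 hγ with rfl | ⟨hγA, -⟩
    exacts [hb, h.subset hγA]
  · rcases mem_relabel.1 hγ with rfl | ⟨hγA, hγb⟩
    · rw [if_neg (lt_irrefl _)]
      exact hG.smul_symmPart_mono P (by linarith) hKD hKD hHG
    · rw [if_pos hγb]
      exact h.sub_smul_mem_smul_symmPart hG hγA hb hγb.le hK hHG
  · rcases mem_relabel.1 hγ with rfl | ⟨hγA, hγb⟩ <;>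
      rcases mem_relabel.1 hβ with rfl | ⟨hβA, hβb⟩
    · rw [if_neg (lt_irrefl _), if_pos rfl, hH]
    · rw [if_neg (lt_irrefl _), hH₀ β hβA hβb, if_neg (ne_of_apply_ne κ hβb.ne)]
    · rw [if_pos hγb, map_sub, map_smul, hH, smul_eq_mul, mul_one, sub_self,
        if_neg (ne_of_apply_ne κ hγb.ne')]
    · rw [if_pos hγb, map_sub, map_smul, hH₀ β hβA hβb, smul_zero, sub_zero,
        h.dual γ hγA β hβA]
  · rcases mem_relabel.1 hγ with rfl | ⟨hγA, hγb⟩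
    · rw [if_neg (lt_irrefl _)]
      exact (hHK β hβ).trans hKD
    · rw [if_pos hγb, map_sub, map_smul, smul_eq_mul]
      have hCK : |c b (Q γ)| * |c β H| ≤ C * K :=
        mul_le_mul (h.abs_coeff_le γ hγA b hb hγb.le) (hHK β hβ) (abs_nonneg _) (by positivity)
      refine (abs_sub _ _).trans ?_
      rw [abs_mul, swapConst]
      linarith [h.abs_coeff_le γ hγA β hβ hγβ]

lemma WeakBasis.hasHeavierBasis (hκ : Set.InjOn κ I) (hG : IsConvexFamily G)
    (h : WeakBasis I κ G c A P C Q) (hb : b ∈ I) (hbA : b ∉ A) (hH : c b H ≠ 0)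
    (hH₀ : ∀ γ ∈ A, κ γ < κ b → c γ H = 0) (hHK : ∀ β ∈ I, |c β H| ≤ K * |c b H|)
    (hHG : H ∈ (K * |c b H|) • symmPart (G K) P) :
    HasHeavierBasis I κ G c A P (swapConst C K) := by
  have hpos : 0 < |c b H| := abs_pos.2 hH
  have hswap := h.swap hG (H := (c b H)⁻¹ • H) (K := K) hb
    (by rw [map_smul, smul_eq_mul, inv_mul_cancel₀ hH])
    (fun γ hγ hγb => by rw [map_smul, hH₀ γ hγ hγb, smul_zero])
    (fun β hβ => by
      rw [map_smul, smul_eq_mul, abs_mul, abs_inv, inv_mul_le_iff₀ hpos, mul_comm]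
      exact hHK β hβ)
    (by
      have hmem := smul_mem_abs_mul_smul (hG.absConvex_symmPart K P) hHG (c b H)⁻¹
      rwa [abs_inv, mul_left_comm, inv_mul_cancel₀ hpos.ne', mul_one] at hmem)
  exact ⟨_, _, labelWeight_lt_labelWeight_relabel hκ h.subset hb hbA, hswap⟩

lemma WeakBasis.abs_coeff_le_or_hasHeavierBasis (hκ : Set.InjOn κ I) (hG : IsConvexFamily G)
    (h : WeakBasis I κ G c A P C Q) {ε : ℝ} (hε : 0 < ε) (hε₁ : ε ≤ 1) :
    (∀ α ∈ A, ∀ β ∈ I, κ β < κ α → |c β (Q α)| ≤ ε) ∨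
      HasHeavierBasis I κ G c A P (swapConst C (C / ε)) := by
  by_contra! ⟨⟨α, hα, β, hβ, hβα, hlt⟩, hno⟩
  have hC := h.one_le
  have hCK : C ≤ C / ε := le_div_self (by linarith) hε hε₁
  obtain ⟨b, hb, hmax⟩ := ({β ∈ I | κ β < κ α} : Finset ι).exists_max_image
    (fun β => |c β (Q α)|) ⟨β, Finset.mem_filter.2 ⟨hβ, hβα⟩⟩
  obtain ⟨hbI, hbα⟩ := Finset.mem_filter.1 hb
  have hbε : ε ≤ |c b (Q α)| := hlt.le.trans (hmax β (Finset.mem_filter.2 ⟨hβ, hβα⟩))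
  have hdual : ∀ γ ∈ A, κ γ < κ α → c γ (Q α) = 0 := fun γ hγ hγα => by
    rw [h.dual α hα γ hγ, if_neg (ne_of_apply_ne κ hγα.ne)]
  have hCb : C ≤ C / ε * |c b (Q α)| := by
    rw [div_mul_eq_mul_div, le_div_iff₀ hε]
    gcongr
  refine hno (h.hasHeavierBasis hκ hG hbI (fun hbA => ?_) (abs_pos.1 (hε.trans_le hbε))
    (fun γ hγ hγb => hdual γ hγ (hγb.trans hbα)) (fun δ hδ => ?_)
    (hG.smul_symmPart_mono P (by linarith) hCb hCK (h.mem_smul_symmPart α hα)))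
  · rw [hdual b hbA hbα, abs_zero] at hbε
    exact hε.not_ge hbε
  · rcases lt_or_ge (κ δ) (κ α) with hδα | hαδ
    · exact (hmax δ (Finset.mem_filter.2 ⟨hδ, hδα⟩)).trans
        (le_mul_of_one_le_left (abs_nonneg _) (hC.trans hCK))
    · exact (h.abs_coeff_le α hα δ hδ hαδ).trans hCb

lemma WeakBasis.coeffBounded (h : WeakBasis I κ G c A P C Q) {ε : ℝ} (hε : ε ≤ 1)
    (hsmall : ∀ α ∈ A, ∀ β ∈ I, κ β < κ α → |c β (Q α)| ≤ ε) : CoeffBounded I c A C Q := by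
  intro α hα β hβ
  rcases lt_or_ge (κ β) (κ α) with hβα | hαβ
  · exact (hsmall α hα β hβ hβα).trans (hε.trans h.one_le)
  · exact h.abs_coeff_le α hα β hβ hαβ

-- Subtracting from `H` its components along the `Q γ` that precede `b` makes it eligible for a
-- swap; since these components are small, the leading coefficient survives.
lemma WeakBasis.hasHeavierBasis_of_small (hκ : Set.InjOn κ I) (hG : IsConvexFamily G)
    (h : WeakBasis I κ G c A P C Q) (hs : CoeffBounded I c A C Q) (hb : b ∈ I) (hbA : b ∉ A)
    {δ M : ℝ} (hδ : 0 ≤ δ) (hδC : I.card * (δ * C) ≤ 1 / 2) (hH : c b H = 1)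
    (hHδ : ∀ β ∈ I, κ β < κ b → |c β H| ≤ δ) (hHM : ∀ β ∈ I, |c β H| ≤ M)
    (hHG : H ∈ M • symmPart (G M) P) :
    HasHeavierBasis I κ G c A P (swapConst C (2 * M + 1 + C)) := by
  have hC : 0 ≤ C := zero_le_one.trans h.one_le
  have hM : 1 ≤ M := by simpa [hH] using hHM b hb
  set s : Finset ι := {γ ∈ A | κ γ < κ b}
  have hsA : s ⊆ A := Finset.filter_subset _ _
  have ht : ∀ γ ∈ s, |c γ H| ≤ δ := fun γ hγ =>
    hHδ γ (h.subset (hsA hγ)) (Finset.mem_filter.1 hγ).2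
  set S : V := ∑ γ ∈ s, c γ H • Q γ with hS
  have hScoeff : ∀ β ∈ I, |c β S| ≤ 1 / 2 := fun β hβ =>
    (hs.abs_coeff_sum_le hsA h.subset hC hδ ht hβ).trans hδC
  have hlead : 1 / 2 ≤ |c b (H - S)| := by
    rw [map_sub, hH]
    linarith [le_abs_self (1 - c b S), (abs_le.1 (hScoeff b hb)).2]
  have hscale : M + 1 / 2 ≤ (2 * M + 1 + C) * |c b (H - S)| := by
    calc M + 1 / 2 ≤ (2 * M + 1 + C) * (1 / 2) := by linarith
      _ ≤ (2 * M + 1 + C) * |c b (H - S)| := by gcongr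
  refine h.hasHeavierBasis hκ hG hb hbA (H := H - S)
    (abs_pos.1 (lt_of_lt_of_le (by norm_num) hlead)) (fun γ hγ hγb => ?_) (fun β hβ => ?_) ?_
  · rw [map_sub, hS, h.coeff_sum hsA _ (Finset.mem_filter.2 ⟨hγ, hγb⟩), sub_self]
  · rw [map_sub]
    linarith [abs_sub (c β H) (c β S), hHM β hβ, hScoeff β hβ]
  · have hT := hG.absConvex_symmPart (2 * M + 1 + C) P
    exact smul_set_mono_of_absConvex hT (by linarith) hscale
      (sub_mem_add_smul hT (by linarith) (by norm_num)
        (hG.smul_symmPart_mono P (by linarith) le_rfl (by linarith) hHG)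
        (hG.smul_symmPart_mono P (by positivity) hδC (by linarith)
          (h.sum_mem_smul_symmPart hG hsA hδ ht)))

lemma WeakBasis.midpoint (hG : IsConvexFamily G) (h : WeakBasis I κ G c A P C Q) {U : V}
    (hU : P + (2 : ℝ) • U ∈ G C) : WeakBasis I κ G c A (P + U) (2 * C) Q where
  subset := h.subset
  one_le := by linarith [h.one_le]
  mem := by
    refine hG.mono (by linarith [h.one_le] : C ≤ 2 * C) ?_
    convert hG.convex C h.mem hU (a := 2⁻¹) (b := 2⁻¹) (by norm_num) (by norm_num) (by norm_num)
      using 1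
    module
  mem_smul_symmPart α hα := by
    obtain ⟨R, hR, hRQ⟩ := h.mem_smul_symmPart α hα
    refine ⟨(2⁻¹ : ℝ) • R, symmPart_mono (hG.mono (by linarith [h.one_le])) _
      (smul_mem_symmPart_midpoint (hG.convex C) hR hU), ?_⟩
    rw [← hRQ]
    module
  dual := h.dual
  abs_coeff_le α hα β hβ hk := by linarith [h.abs_coeff_le α hα β hβ hk, h.one_le]

-- Moving from `P` half way along `W = |c b U|⁻¹ • U` leaves room in the directions `± W / 2`, so
-- that `U` can be swapped into the basis at the coefficient where it is largest.
lemma WeakBasis.exists_hasHeavierBasis (hκ : Set.InjOn κ I) (hG : IsConvexFamily G)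
    (h : WeakBasis I κ G c A P C Q) {U : V} (hU₀ : ∀ α ∈ A, c α U = 0) (hb : b ∈ I)
    (hbU : c b U ≠ 0) (hmax : ∀ β ∈ I, |c β U| ≤ |c b U|) (hU : P + |c b U|⁻¹ • U ∈ G C) :
    ∃ P', HasHeavierBasis I κ G c A P' (swapConst (2 * C) (2 * C)) ∧
      (∀ α ∈ A, c α (P' - P) = 0) ∧ ∀ β ∈ I, |c β (P' - P)| ≤ 1 := by
  have hC := h.one_le
  have hpos : 0 < |c b U| := abs_pos.2 hbU
  set W : V := (2⁻¹ * |c b U|⁻¹) • U with hW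
  have hW₀ : ∀ α ∈ A, c α W = 0 := fun α hα => by rw [map_smul, hU₀ α hα, smul_zero]
  have habs : ∀ β, |c β W| = 2⁻¹ * |c b U|⁻¹ * |c β U| := fun β => by
    rw [map_smul, smul_eq_mul, abs_mul, abs_of_pos (by positivity)]
  have hbW : |c b W| = 1 / 2 := by
    rw [habs, mul_assoc, inv_mul_cancel₀ hpos.ne', mul_one, one_div]
  have hWmax : ∀ β ∈ I, |c β W| ≤ 1 / 2 := fun β hβ => by
    rw [← hbW, habs, habs]
    exact mul_le_mul_of_nonneg_left (hmax β hβ) (by positivity)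
  have hPW : P + (2 : ℝ) • W ∈ G C := by rwa [hW, smul_smul, mul_inv_cancel_left₀ two_ne_zero]
  have hne : c b W ≠ 0 := abs_pos.1 (by rw [hbW]; norm_num)
  refine ⟨P + W, (h.midpoint hG hPW).hasHeavierBasis hκ hG hb (fun hbA => hne (hW₀ b hbA)) hne
    (fun γ hγ _ => hW₀ γ hγ) (fun β hβ => (hWmax β hβ).trans ?_) ?_, fun α hα => ?_, fun β hβ => ?_⟩
  · rw [hbW]
    linarith
  · refine hG.smul_symmPart_mono _ zero_le_one ?_ (by linarith : C ≤ 2 * C) ?_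
    · rw [hbW]
      linarith
    · rw [one_smul]
      exact mem_symmPart_midpoint h.mem hPW
  · rw [add_sub_cancel_left, hW₀ α hα]
  · rw [add_sub_cancel_left]
    linarith [hWmax β hβ]

/-- The coefficient bound in the alternative `WeakBasis.abs_coeff_sub_le_or_hasHeavierBasis`. -/
def transferBound (I : Finset ι) (C : ℝ) : ℝ :=
  C + I.card * (C * C) + 2 * (I.card + 1) * (C * C)

-- `U` compares `P` with `R`, corrected along the basis at `P`. If it is small then so is `P' - P`;
-- otherwise it is a long direction available at `P` in which the coefficients from `A` vanish.
lemma WeakBasis.abs_coeff_sub_le_or_hasHeavierBasis (hκ : Set.InjOn κ I) (hG : IsConvexFamily G)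
    (h : WeakBasis I κ G c A P C Q) {R P' : V} (hR : R ∈ G C) (hP' : ∀ α ∈ A, c α (P' - P) = 0)
    (hP'R : ∀ β ∈ I, |c β (P' - R)| ≤ C) :
    (∀ β ∈ I, |c β (P' - P)| ≤ transferBound I C) ∨
      ∃ P'', HasHeavierBasis I κ G c A P'' (swapConst (2 * C) (2 * C)) ∧
        (∀ α ∈ A, c α (P'' - P) = 0) ∧ ∀ β ∈ I, |c β (P'' - P)| ≤ 1 := by
  have hC := h.one_le
  rcases h.abs_coeff_le_or_hasHeavierBasis hκ hG one_pos le_rfl with hsmall | hheavy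
  swap
  · refine .inr ⟨P, hheavy.mono hG ?_, by simp, by simp⟩
    rw [div_one, swapConst, swapConst]
    nlinarith
  have hs := h.coeffBounded le_rfl hsmall
  set S : V := ∑ α ∈ A, c α (P' - R) • Q α with hS
  set U : V := R + S - P with hU
  have ht : ∀ α ∈ A, |c α (P' - R)| ≤ C := fun α hα => hP'R α (h.subset hα)
  have hU₀ : ∀ α ∈ A, c α U = 0 := by
    intro α hα
    have hP'α := hP' α hα
    rw [map_sub] at hP'α
    rw [hU, map_sub, map_add, hS, h.coeff_sum subset_rfl _ hα, map_sub]
    linarith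
  by_cases hbig : ∀ β ∈ I, |c β U| ≤ 2 * (I.card + 1) * (C * C)
  · refine .inl fun β hβ => ?_
    rw [show P' - P = P' - R - S + U by rw [hU]; abel, map_add, map_sub, transferBound]
    linarith [abs_add_le (c β (P' - R) - c β S) (c β U), abs_sub (c β (P' - R)) (c β S),
      hP'R β hβ, hbig β hβ, hs.abs_coeff_sum_le subset_rfl h.subset (by positivity)
        (by positivity) ht hβ]
  push Not at hbig
  obtain ⟨β, hβ, hlt⟩ := hbig
  obtain ⟨b, hb, hmax⟩ := I.exists_max_image (fun β => |c β U|) ⟨β, hβ⟩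
  have hbU : 2 * (I.card + 1) * (C * C) < |c b U| := hlt.trans_le (hmax β hβ)
  have hCC : 1 ≤ C * C := one_le_mul_of_one_le_of_one_le hC hC
  have hcard : (0 : ℝ) ≤ I.card * (C * C) := by positivity
  exact .inr <| h.exists_hasHeavierBasis hκ hG hU₀ hb
    (abs_pos.1 (by linarith)) hmax (add_inv_smul_mem (hG.convex C) h.mem hR hcard
      (h.sum_mem_smul_symmPart hG subset_rfl (by linarith) ht) (by linarith) (by linarith))

end WeakBasis

/-! ### Transport of weak bases -/

section Transport

open scoped Pointwise

variable {ι V : Type*} [AddCommGroup V] [Module ℝ V] {I A : Finset ι} {c c' : ι → V →ₗ[ℝ] ℝ}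

section Matrix

variable [Fintype ι] [DecidableEq ι] {M : Matrix ι ι ℝ} {η : ℝ}

lemma abs_apply_le_two_mul_of_abs_mulVec_le (hη : ∀ i j, |M i j - (1 : Matrix ι ι ℝ) i j| ≤ η)
    (hcard : Fintype.card ι * η ≤ 1 / 2) {x : ι → ℝ} {B : ℝ}
    (hB : ∀ i, |M.mulVec x i| ≤ B) (i : ι) : |x i| ≤ 2 * B := by
  obtain ⟨k, -, hmax⟩ := Finset.univ.exists_max_image (fun i => |x i|) ⟨i, Finset.mem_univ i⟩
  have herror : |∑ j, (M k j - (1 : Matrix ι ι ℝ) k j) * x j| ≤ 1 / 2 * |x k| := by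
    calc |∑ j, (M k j - (1 : Matrix ι ι ℝ) k j) * x j|
        ≤ ∑ j, |(M k j - (1 : Matrix ι ι ℝ) k j) * x j| := Finset.abs_sum_le_sum_abs _ _
      _ ≤ ∑ _j : ι, η * |x k| := Finset.sum_le_sum fun j hj => by
          rw [abs_mul]
          exact mul_le_mul (hη k j) (hmax j hj) (abs_nonneg _) ((abs_nonneg _).trans (hη k j))
      _ = Fintype.card ι * η * |x k| := by
          rw [Finset.sum_const, Finset.card_univ, nsmul_eq_mul, mul_assoc]
      _ ≤ 1 / 2 * |x k| := by gcongr
  have hk : x k = M.mulVec x k - ∑ j, (M k j - (1 : Matrix ι ι ℝ) k j) * x j := by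
    simp [Matrix.mulVec, dotProduct, sub_mul, Finset.sum_sub_distrib, Matrix.one_apply]
  have htriangle := abs_sub (M.mulVec x k) (∑ j, (M k j - (1 : Matrix ι ι ℝ) k j) * x j)
  rw [← hk] at htriangle
  linarith [hB k, hmax i (Finset.mem_univ i)]

lemma exists_mul_eq_one_of_near_one (hη : ∀ i j, |M i j - (1 : Matrix ι ι ℝ) i j| ≤ η)
    (hcard : Fintype.card ι * η ≤ 1 / 2) :
    ∃ X : Matrix ι ι ℝ, M * X = 1 ∧ ∀ i j, |X i j| ≤ 2 := by
  have hdet : IsUnit M.det := isUnit_iff_ne_zero.2 fun hzero => by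
    obtain ⟨v, hv, hMv⟩ := Matrix.exists_mulVec_eq_zero_iff.2 hzero
    refine hv (funext fun i => abs_nonpos_iff.1 ?_)
    simpa using abs_apply_le_two_mul_of_abs_mulVec_le hη hcard (x := v) (B := 0)
      (fun i => by rw [hMv, Pi.zero_apply, abs_zero]) i
  refine ⟨M⁻¹, Matrix.mul_nonsing_inv M hdet, fun i j => ?_⟩
  have hcol := abs_apply_le_two_mul_of_abs_mulVec_le hη hcard (x := M⁻¹.col j) (B := 1)
    (fun k => by
      have hmul : M.mulVec (M⁻¹.col j) k = (M * M⁻¹) k j := rfl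
      rw [hmul, Matrix.mul_nonsing_inv M hdet, Matrix.one_apply]
      split_ifs <;> simp) i
  rwa [mul_one] at hcol

end Matrix

lemma exists_dual_of_near_dual [DecidableEq ι] {W : ι → V} {η : ℝ}
    (hη : ∀ α ∈ A, ∀ β ∈ A, |c β (W α) - if β = α then 1 else 0| ≤ η)
    (hcard : A.card * η ≤ 1 / 2) :
    ∃ X : ι → ι → ℝ, (∀ γ α, |X γ α| ≤ 2) ∧
      ∀ α ∈ A, ∀ β ∈ A, c β (∑ γ ∈ A, X γ α • W γ) = if β = α then 1 else 0 := by
  obtain ⟨X, hmul, hX⟩ := exists_mul_eq_one_of_near_one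
    (M := Matrix.of fun β α : A => c β (W α)) (η := η)
    (fun β α => by
      rw [Matrix.of_apply, Matrix.one_apply]
      simpa only [Subtype.coe_inj] using hη α α.2 β β.2)
    (by rwa [Fintype.card_coe])
  refine ⟨fun γ α => if h : γ ∈ A ∧ α ∈ A then X ⟨γ, h.1⟩ ⟨α, h.2⟩ else 0, fun γ α => ?_,
    fun α hα β hβ => ?_⟩
  · dsimp only
    split_ifs
    exacts [hX _ _, by simp]
  · have hentry := congrFun (congrFun hmul ⟨β, hβ⟩) ⟨α, hα⟩
    simp only [Matrix.mul_apply, Matrix.of_apply, Matrix.one_apply, Subtype.mk.injEq] at hentry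
    rw [← hentry, map_sum, ← Finset.sum_coe_sort A]
    refine Finset.sum_congr rfl fun γ _ => ?_
    dsimp only
    rw [dif_pos (⟨γ.2, hα⟩ : (γ : ι) ∈ A ∧ α ∈ A), map_smul, smul_eq_mul, mul_comm]

lemma exists_common_center {K : Set V} (hK : Convex ℝ K) {R : V} (hR : R ∈ K) {M W : ι → V}
    (h : ∀ α ∈ A, W α ∈ symmPart K (M α)) :
    ∃ P ∈ convexHull ℝ (insert R (M '' A)), ∀ α ∈ A, W α ∈ ((A.card : ℝ) + 1) • symmPart K P := by
  classical
  induction A using Finset.induction_on with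
  | empty => exact ⟨R, subset_convexHull ℝ _ (Set.mem_insert _ _), by simp⟩
  | insert a s ha ih =>
    obtain ⟨P, hP, hW⟩ := ih fun α hα => h α (Finset.mem_insert_of_mem hα)
    have hMa := h a (Finset.mem_insert_self a s)
    have hPK : P ∈ K := by
      refine convexHull_min ?_ hK hP
      rintro _ (rfl | ⟨α, hα, rfl⟩)
      exacts [hR, mem_of_mem_symmPart hK (h α (Finset.mem_insert_of_mem hα))]
    set N : ℝ := s.card + 1 with hN
    have hN₀ : 0 < N := by positivity
    have hsum : N / (N + 1) + 1 / (N + 1) = 1 := by field_simp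
    refine ⟨(N / (N + 1)) • P + (1 / (N + 1)) • M a,
      convex_convexHull ℝ _ (convexHull_mono (by gcongr; simp) hP)
        (subset_convexHull ℝ _ (.inr ⟨a, by simp, rfl⟩)) (by positivity) (by positivity) hsum,
      fun α hα => ?_⟩
    rw [Finset.card_insert_of_notMem ha, Nat.cast_succ, ← hN]
    rcases Finset.mem_insert.1 hα with rfl | hαs
    · refine ⟨_, add_mem_symmPart hK (zero_mem_symmPart hPK) hMa (by positivity) (by positivity)
        hsum, ?_⟩
      dsimp only
      rw [smul_zero, zero_add, smul_smul, mul_one_div_cancel (by positivity), one_smul]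
    · obtain ⟨w, hw, hwα⟩ := hW α hαs
      refine ⟨_, add_mem_symmPart hK hw (zero_mem_symmPart (mem_of_mem_symmPart hK hMa))
        (by positivity) (by positivity) hsum, ?_⟩
      dsimp only at hwα ⊢
      rw [smul_zero, add_zero, smul_smul, mul_div_cancel₀ _ (by positivity), hwα]

lemma exists_symmPart_near {K K' : Set V} {P Q : V} {δ : ℝ}
    (hKK' : ∀ R ∈ K, ∃ R' ∈ K', ∀ β ∈ I, |c β (R - R')| ≤ δ) (hQ : Q ∈ symmPart K P) :
    ∃ M, ∃ W ∈ symmPart K' M, (∀ β ∈ I, |c β (M - P)| ≤ δ) ∧ ∀ β ∈ I, |c β (W - Q)| ≤ δ := by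
  obtain ⟨R₁, hR₁, h₁⟩ := hKK' _ hQ.1
  obtain ⟨R₂, hR₂, h₂⟩ := hKK' _ hQ.2
  refine ⟨(2⁻¹ : ℝ) • (R₁ + R₂), (2⁻¹ : ℝ) • (R₁ - R₂), ⟨?_, ?_⟩, fun β hβ => ?_, fun β hβ => ?_⟩
  · convert hR₁ using 1
    module
  · convert hR₂ using 1
    module
  all_goals
    have h₁ := abs_le.1 (h₁ β hβ)
    have h₂ := abs_le.1 (h₂ β hβ)
    simp only [map_sub, map_add, map_smul, smul_eq_mul] at h₁ h₂ ⊢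
    rw [abs_le]
    constructor <;> linarith

lemma convex_setOf_abs_coeff_sub_le (c : ι → V →ₗ[ℝ] ℝ) (I : Finset ι) (P : V) (δ : ℝ) :
    Convex ℝ {R | ∀ β ∈ I, |c β (R - P)| ≤ δ} := by
  intro R hR S hS a b ha hb hab β hβ
  have hcomb : c β (a • R + b • S - P) = a • c β (R - P) + b • c β (S - P) := by
    rw [← map_smul, ← map_smul, ← map_add]
    nth_rw 1 [← one_smul ℝ P, ← hab]
    congr 1
    module
  have hball := convex_closedBall (0 : ℝ) δ (mem_closedBall_zero_iff.2 (hR β hβ))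
    (mem_closedBall_zero_iff.2 (hS β hβ)) ha hb hab
  rwa [hcomb, ← Real.norm_eq_abs, ← mem_closedBall_zero_iff]

variable [DecidableEq ι] {κ : ι → ℕ} {G G' : ℝ → Set V} {P : V} {C δ ε : ℝ} {Q : ι → V}

lemma WeakBasis.recenter (hG : IsConvexFamily G) (h : WeakBasis I κ G c A P C Q)
    (hs : CoeffBounded I c A C Q) (hδ : 0 ≤ δ) (hδC : I.card * (δ * C) ≤ 1 / 2) {P₀ : V}
    (hP₀ : ∀ β ∈ I, |c β (P - P₀)| ≤ δ) :
    ∃ P', WeakBasis I κ G c A P' (2 * C) Q ∧ (∀ α ∈ A, c α (P' - P₀) = 0) ∧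
      ∀ β ∈ I, |c β (P' - P₀)| ≤ δ + 1 / 2 := by
  have ht : ∀ α ∈ A, |-c α (P - P₀)| ≤ δ := fun α hα => by
    rw [abs_neg]
    exact hP₀ α (h.subset hα)
  set S : V := ∑ α ∈ A, -c α (P - P₀) • Q α with hS
  have hT := hG.absConvex_symmPart C P
  have hS₂ : (2 : ℝ) • S ∈ symmPart (G C) P := by
    rw [← one_smul ℝ (symmPart (G C) P)]
    refine smul_set_mono_of_absConvex hT (by norm_num) (by norm_num)
      (smul_mem_abs_mul_smul hT (a := 1 / 2) ?_ 2)
    exact smul_set_mono_of_absConvex hT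
      (mul_nonneg (Nat.cast_nonneg _) (mul_nonneg hδ (zero_le_one.trans h.one_le))) hδC
      (h.sum_mem_smul_symmPart hG subset_rfl hδ ht)
  refine ⟨P + S, h.midpoint hG hS₂.1, fun α hα => ?_, fun β hβ => ?_⟩
  · rw [add_sub_right_comm, map_add, hS, h.coeff_sum subset_rfl _ hα, add_neg_cancel]
  · rw [add_sub_right_comm, map_add]
    refine (abs_add_le _ _).trans (add_le_add (hP₀ β hβ) (le_trans ?_ hδC))
    exact hs.abs_coeff_sum_le subset_rfl h.subset (zero_le_one.trans h.one_le) hδ ht hβ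

-- A basis of `G` is shadowed by vectors in `G'` which are symmetric around different points;
-- averaging these points yields a common centre.
lemma WeakBasis.exists_shadow (hG' : IsConvexFamily G') (h : WeakBasis I κ G c A P C Q)
    (hGG' : ∀ R ∈ G C, ∃ R' ∈ G' C, ∀ β ∈ I, |c' β (R' - R)| ≤ δ) :
    ∃ P' ∈ G' C, ∃ W : ι → V, (∀ α ∈ A, W α ∈ ((I.card + 1) * C) • symmPart (G' C) P') ∧
      (∀ β ∈ I, |c' β (P' - P)| ≤ δ) ∧ ∀ α ∈ A, ∀ β ∈ I, |c' β (W α - Q α)| ≤ C * δ := by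
  have hC : 0 < C := zero_lt_one.trans_le h.one_le
  have hGG'' : ∀ R ∈ G C, ∃ R' ∈ G' C, ∀ β ∈ I, |c' β (R - R')| ≤ δ := fun R hR => by
    obtain ⟨R', hR', hRR'⟩ := hGG' R hR
    exact ⟨R', hR', fun β hβ => by rw [map_sub, abs_sub_comm, ← map_sub]; exact hRR' β hβ⟩
  have hnear : ∀ α ∈ A, ∃ M W, W ∈ symmPart (G' C) M ∧ (∀ β ∈ I, |c' β (M - P)| ≤ δ) ∧
      ∀ β ∈ I, |c' β (C • W - Q α)| ≤ C * δ := by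
    intro α hα
    obtain ⟨q, hq, hqα⟩ := h.mem_smul_symmPart α hα
    obtain ⟨M, W, hW, hM, hWq⟩ := exists_symmPart_near hGG'' hq
    refine ⟨M, W, hW, hM, fun β hβ => ?_⟩
    dsimp only at hqα
    rw [← hqα, ← smul_sub, map_smul, smul_eq_mul, abs_mul, abs_of_pos hC]
    gcongr
    exact hWq β hβ
  choose! M W hW hM hWQ using hnear
  obtain ⟨R, hR, hRP⟩ := hGG' P h.mem
  obtain ⟨P', hP', hWP'⟩ := exists_common_center (hG'.convex C) hR hW
  have hhull : ∀ {K : Set V}, Convex ℝ K → R ∈ K → (∀ α ∈ A, M α ∈ K) → P' ∈ K := by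
    intro K hK hRK hMK
    refine convexHull_min (Set.insert_subset hRK ?_) hK hP'
    rintro _ ⟨α, hα, rfl⟩
    exact hMK α hα
  refine ⟨P', hhull (hG'.convex C) hR fun α hα => mem_of_mem_symmPart (hG'.convex C) (hW α hα),
    fun α => C • W α, fun α hα => ?_,
    hhull (convex_setOf_abs_coeff_sub_le c' I P δ) hRP hM, hWQ⟩
  have hmem := smul_mem_abs_mul_smul (hG'.absConvex_symmPart C P') (hWP' α hα) C
  have hcard : A.card ≤ I.card := Finset.card_le_card h.subset
  rw [abs_of_pos hC, mul_comm] at hmem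
  exact smul_set_mono_of_absConvex (hG'.absConvex_symmPart C P') (by positivity) (by gcongr) hmem

/-- The constant of a transported weak basis of constant `C`. -/
def transportConst (I : Finset ι) (C : ℝ) : ℝ := 8 * (I.card + 1) ^ 2 * C

lemma exists_weakBasis_of_near_dual (hG : IsConvexFamily G) (hA : A ⊆ I) (hC : 1 ≤ C)
    (hP : P ∈ G C) {W : ι → V} (hW : ∀ α ∈ A, W α ∈ ((I.card + 1) * C) • symmPart (G C) P)
    (hW₂ : CoeffBounded I c A (2 * C) W)
    (hδ : ∀ α ∈ A, ∀ β ∈ A, |c β (W α) - if β = α then 1 else 0| ≤ δ)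
    (hcard : A.card * δ ≤ 1 / 2) :
    ∃ Q, WeakBasis I κ G c A P (4 * (I.card + 1) ^ 2 * C) Q ∧
      CoeffBounded I c A (4 * (I.card + 1) ^ 2 * C) Q := by
  obtain ⟨X, hX, hdual⟩ := exists_dual_of_near_dual hδ hcard
  set L : ℝ := I.card + 1 with hL
  have hcardL : (I.card : ℝ) ≤ L := by linarith
  have hL₁ : 1 ≤ L := by simp [hL]
  have hC₁ : C ≤ 4 * L ^ 2 * C :=
    le_mul_of_one_le_left (by linarith) (by linarith [one_le_pow₀ hL₁ (n := 2)])
  have hcoeff : CoeffBounded I c A (4 * L ^ 2 * C) fun α => ∑ γ ∈ A, X γ α • W γ := by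
    intro α _ β hβ
    refine (hW₂.abs_coeff_sum_le subset_rfl hA (by positivity) zero_le_two
      (fun γ _ => hX γ α) hβ).trans ?_
    calc (I.card : ℝ) * (2 * (2 * C)) ≤ L ^ 2 * (2 * (2 * C)) := by
          gcongr
          exact hcardL.trans (le_self_pow₀ hL₁ two_ne_zero)
      _ = 4 * L ^ 2 * C := by ring
  refine ⟨_, ⟨hA, hC.trans hC₁, hG.mono hC₁ hP, fun α _ => ?_, hdual,
    fun α hα β hβ _ => hcoeff α hα β hβ⟩, hcoeff⟩
  refine hG.smul_symmPart_mono P (Finset.sum_nonneg fun γ _ => by positivity) ?_ hC₁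
    (sum_smul_mem_smul (hG.absConvex_symmPart C P) (zero_mem_symmPart hP)
      (by positivity) A (fun γ => X γ α) W hW)
  calc ∑ γ ∈ A, |X γ α| * (L * C) ≤ I.card * (2 * (L * C)) :=
        sum_le_card_mul hA (by positivity) fun γ _ => by gcongr; exact hX γ α
    _ ≤ L * (2 * (L * C)) := by gcongr
    _ ≤ 4 * L ^ 2 * C := by linarith [(by positivity : 0 ≤ L ^ 2 * C)]

lemma WeakBasis.transport (hG' : IsConvexFamily G') (h : WeakBasis I κ G c A P C Q)
    (hs : CoeffBounded I c A C Q) (hε : 0 ≤ ε) (hεC : ε * (8 * (I.card + 1) ^ 3 * C ^ 2) ≤ 1)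
    (hGG' : ∀ R ∈ G C, ∃ R' ∈ G' C, ∀ β ∈ I, |c' β (R' - R)| ≤ ε * C)
    (hcc' : ∀ (W : V) (B : ℝ), 0 ≤ B → (∀ β ∈ I, |c β W| ≤ B) →
      ∀ β ∈ I, |c' β W - c β W| ≤ ε * B) :
    ∃ P' Q', WeakBasis I κ G' c' A P' (transportConst I C) Q' ∧
      CoeffBounded I c' A (transportConst I C) Q' ∧
      (∀ α ∈ A, c' α (P' - P) = 0) ∧ ∀ β ∈ I, |c' β (P' - P)| ≤ 1 := by
  have hC := h.one_le
  obtain ⟨P₁, hP₁, W, hW, hP₁P, hWQ⟩ := h.exists_shadow hG' hGG'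
  set L : ℝ := I.card + 1 with hL
  have hcard : (I.card : ℝ) ≤ L := by linarith
  have hL₁ : 1 ≤ L := by simp [hL]
  have hcubic : L * (ε * C * (4 * L ^ 2 * C)) ≤ 1 / 2 := by linarith
  have hεCC : ε * C * C * L ≤ 1 / 8 := by
    linarith [mul_le_mul_of_nonneg_left (one_le_pow₀ hL₁ (n := 2))
      (by positivity : 0 ≤ ε * C * C * L)]
  have hεC₁ : ε * C ≤ ε * C * C := le_mul_of_one_le_right (by positivity) hC
  have hεC₂ : ε * C * C ≤ ε * C * C * L := le_mul_of_one_le_right (by positivity) hL₁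
  have hη : ∀ α ∈ A, ∀ β ∈ I, |c' β (W α) - c β (Q α)| ≤ 2 * (ε * C * C) := by
    intro α hα β hβ
    have hWα := hWQ α hα β hβ
    rw [map_sub] at hWα
    linarith [abs_sub_le (c' β (W α)) (c' β (Q α)) (c β (Q α)),
      hcc' (Q α) C (by linarith) (hs α hα) β hβ]
  have hW₂ : CoeffBounded I c' A (2 * C) W := fun α hα β hβ => by
    linarith [abs_sub_abs_le_abs_sub (c' β (W α)) (c β (Q α)), hη α hα β hβ, hs α hα β hβ]
  have hAL : (A.card : ℝ) ≤ L := le_trans (mod_cast Finset.card_le_card h.subset) hcard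
  obtain ⟨Q', hQ', hcoeff⟩ := exists_weakBasis_of_near_dual (κ := κ) hG' h.subset hC hP₁ hW hW₂
    (fun α hα β hβ => by rw [← h.dual α hα β hβ]; exact hη α hα β (h.subset hβ))
    ((mul_le_mul_of_nonneg_right hAL (by positivity)).trans (by linarith))
  obtain ⟨P', hP', hP'₀, hP'₁⟩ := hQ'.recenter hG' hcoeff (δ := ε * C) (by positivity)
    ((mul_le_mul_of_nonneg_right hcard (by positivity)).trans hcubic) hP₁P
  have hconst : 2 * (4 * L ^ 2 * C) = transportConst I C := by rw [transportConst, hL]; ring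
  refine ⟨P', Q', hconst ▸ hP', fun α hα β hβ => ?_, hP'₀, fun β hβ => by linarith [hP'₁ β hβ]⟩
  rw [← hconst]
  exact (hcoeff α hα β hβ).trans (by linarith [(by positivity : 0 ≤ 4 * L ^ 2 * C)])

end Transport

/-! ### Monotonic labels -/

section MonotonicLabel

open scoped Pointwise

variable {m n : ℕ} {V : Type*} [AddCommGroup V] [Module ℝ V] {G : ℝ → Set V}
  {c : (Fin n → ℕ) → V →ₗ[ℝ] ℝ} {A : Finset (Fin n → ℕ)} {P : V} {C ε : ℝ} {g : ℝ → ℝ}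
  {Q : (Fin n → ℕ) → V}

lemma sub_single_mem_multiIndices {β : Fin n → ℕ} (hβ : β ∈ multiIndices m n) (i : Fin n) :
    β - Pi.single i 1 ∈ multiIndices m n :=
  mem_multiIndices.2
    ((Finset.sum_le_sum fun _ _ => Nat.sub_le _ _).trans_lt (mem_multiIndices.1 hβ))

/-- Directions at `P` can be multiplied by coordinates. On coefficients, multiplication by the
`i`-th coordinate is the shift `c β (x_i Q) = β_i c (β - e_i) Q`; its cost is measured by `g`. -/
def HasCoordMul (m : ℕ) (G : ℝ → Set V) (c : (Fin n → ℕ) → V →ₗ[ℝ] ℝ) (P : V)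
    (g : ℝ → ℝ) : Prop :=
  ∀ C, 1 ≤ C → ∀ Q ∈ symmPart (G C) P, (∀ β ∈ multiIndices m n, |c β Q| ≤ 1) → ∀ i,
    ∃ Q' ∈ (2 : ℝ) • symmPart (G (g C)) P,
      ∀ β ∈ multiIndices m n, c β Q' = β i * c (β - Pi.single i 1) Q

lemma WeakBasis.exists_coordMul (hG : IsConvexFamily G)
    (h : WeakBasis (multiIndices m n) (key m) G c A P C Q)
    (hs : CoeffBounded (multiIndices m n) c A C Q) (hX : HasCoordMul m G c P g)
    {α : Fin n → ℕ} (hα : α ∈ A) (i : Fin n) :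
    ∃ H ∈ (2 * C) • symmPart (G (g C)) P, ∀ β ∈ multiIndices m n,
      c β H = β i / (α i + 1) * c (β - Pi.single i 1) (Q α) := by
  have hC : 0 < C := zero_lt_one.trans_le h.one_le
  obtain ⟨q, hq, hqα⟩ := h.mem_smul_symmPart α hα
  dsimp only at hqα
  have hqcoeff : ∀ β, c β (Q α) = C * c β q := fun β => by rw [← hqα, map_smul, smul_eq_mul]
  obtain ⟨Q', hQ', hQ'coeff⟩ := hX C h.one_le q hq (fun β hβ => by
    have hβQ := hs α hα β hβ
    rwa [hqcoeff, abs_mul, abs_of_pos hC, mul_le_iff_le_one_right hC] at hβQ) i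
  have ha : (1 : ℝ) ≤ α i + 1 := by simp
  refine ⟨(C / (α i + 1)) • Q', ?_, fun β hβ => ?_⟩
  · have hmem := smul_mem_abs_mul_smul (hG.absConvex_symmPart (g C) P) hQ' (C / (α i + 1))
    refine smul_set_mono_of_absConvex (hG.absConvex_symmPart (g C) P) (by positivity) ?_ hmem
    rw [abs_of_pos (by positivity)]
    linarith [div_le_self hC.le ha]
  · rw [map_smul, hQ'coeff β hβ, hqcoeff, smul_eq_mul]
    ring

lemma WeakBasis.exists_raised (hG : IsConvexFamily G)
    (h : WeakBasis (multiIndices m n) (key m) G c A P C Q)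
    (hs : CoeffBounded (multiIndices m n) c A C Q) (hX : HasCoordMul m G c P g)
    (hsmall : ∀ α ∈ A, ∀ β ∈ multiIndices m n, key m β < key m α → |c β (Q α)| ≤ ε) (hε : 0 ≤ ε)
    {α : Fin n → ℕ} (hα : α ∈ A) {i : Fin n} (hb : α + Pi.single i 1 ∈ multiIndices m n) :
    ∃ H ∈ (2 * C) • symmPart (G (g C)) P, c (α + Pi.single i 1) H = 1 ∧
      (∀ β ∈ multiIndices m n, key m β < key m (α + Pi.single i 1) → |c β H| ≤ m * ε) ∧
      ∀ β ∈ multiIndices m n, |c β H| ≤ m * C := by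
  obtain ⟨H, hH, hcoeff⟩ := h.exists_coordMul hG hs hX hα i
  have hfactor : ∀ β ∈ multiIndices m n, |(β i : ℝ) / (α i + 1)| ≤ m := fun β hβ => by
    rw [abs_of_nonneg (by positivity)]
    exact (div_le_self (Nat.cast_nonneg _) (by simp)).trans
      (mod_cast (apply_le_deg β i).trans (mem_multiIndices.1 hβ).le)
  refine ⟨H, hH, ?_, fun β hβ hβb => ?_, fun β hβ => ?_⟩
  · rw [hcoeff _ hb, add_tsub_cancel_right, h.dual α hα α hα, if_pos rfl, mul_one, Pi.add_apply,
      Pi.single_eq_same, Nat.cast_add_one, div_self (by positivity)]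
  · rw [hcoeff β hβ, abs_mul]
    rcases (β i).eq_zero_or_pos with hi | hi
    · rw [hi, Nat.cast_zero, zero_div, abs_zero, zero_mul]
      positivity
    · rw [← sub_single_add_single hi, key_add, key_add, add_lt_add_iff_right] at hβb
      exact mul_le_mul (hfactor β hβ) (hsmall α hα _ (sub_single_mem_multiIndices hβ i) hβb)
        (abs_nonneg _) (Nat.cast_nonneg m)
  · rw [hcoeff β hβ, abs_mul]
    exact mul_le_mul (hfactor β hβ) (hs α hα _ (sub_single_mem_multiIndices hβ i))
      (abs_nonneg _) (Nat.cast_nonneg m)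

lemma WeakBasis.isMonotonicLabel_or_hasHeavierBasis (hG : IsConvexFamily G)
    (h : WeakBasis (multiIndices m n) (key m) G c A P C Q)
    (hs : CoeffBounded (multiIndices m n) c A C Q) (hX : HasCoordMul m G c P g)
    (hsmall : ∀ α ∈ A, ∀ β ∈ multiIndices m n, key m β < key m α → |c β (Q α)| ≤ ε) (hε : 0 ≤ ε)
    (hεC : (multiIndices m n).card * (m * ε * C) ≤ 1 / 2) :
    IsMonotonicLabel m A ∨ HasHeavierBasis (multiIndices m n) (key m) G c A P
      (swapConst C (2 * ((m + 2) * C + |g C|) + 1 + C)) := by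
  by_contra! ⟨hmono, hno⟩
  simp only [IsMonotonicLabel, not_forall] at hmono
  obtain ⟨α, hα, i, hb, hbA⟩ := hmono
  have hC : 0 < C := zero_lt_one.trans_le h.one_le
  obtain ⟨H, hHG, hH, hHε, hHC⟩ := h.exists_raised hG hs hX hsmall hε hα hb
  have hmC : (0 : ℝ) ≤ m * C := by positivity
  refine hno (h.hasHeavierBasis_of_small key_injOn hG hs hb hbA (by positivity) hεC hH hHε
    (fun β hβ => ?_) ?_)
  · linarith [hHC β hβ, abs_nonneg (g C)]
  · exact hG.smul_symmPart_mono P (by positivity) (by linarith [abs_nonneg (g C)])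
      (by linarith [le_abs_self (g C)]) hHG

variable (m n V g) in
lemma exists_relabel_const (C : ℝ) : ∃ D, ∀ (G : ℝ → Set V) (c : (Fin n → ℕ) → V →ₗ[ℝ] ℝ)
    (A : Finset (Fin n → ℕ)) (P : V) (Q : (Fin n → ℕ) → V), IsConvexFamily G →
    HasCoordMul m G c P g → WeakBasis (multiIndices m n) (key m) G c A P C Q →
    IsMonotonicLabel m A ∧ CoeffBounded (multiIndices m n) c A C Q ∨
      HasHeavierBasis (multiIndices m n) (key m) G c A P D := by
  set N : ℝ := ((multiIndices m n).card : ℝ)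
  set ε : ℝ := (2 * (N + 1) * (m + 1) * C)⁻¹ with hε
  refine ⟨max (swapConst C (C / ε)) (swapConst C (2 * ((m + 2) * C + |g C|) + 1 + C)),
    fun G c A P Q hG hX h => ?_⟩
  have hC := h.one_le
  have hN₀ : 0 ≤ N := Nat.cast_nonneg _
  have hε₀ : 0 < ε := by positivity
  have hε₁ : ε ≤ 1 := inv_le_one_of_one_le₀ <| one_le_mul_of_one_le_of_one_le
    (one_le_mul_of_one_le_of_one_le (by linarith) (by linarith [m.cast_nonneg (α := ℝ)])) hC
  have hεC : N * (m * ε * C) ≤ 1 / 2 := by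
    calc N * (m * ε * C) ≤ (N + 1) * ((m + 1) * ε * C) := by gcongr <;> linarith
      _ = 1 / 2 := by rw [hε]; field_simp
  rcases h.abs_coeff_le_or_hasHeavierBasis key_injOn hG hε₀ hε₁ with hsmall | hheavy
  · have hs := h.coeffBounded hε₁ hsmall
    exact (h.isMonotonicLabel_or_hasHeavierBasis hG hs hX hsmall hε₀.le hεC).imp
      (fun hmono => ⟨hmono, hs⟩) fun hheavy => hheavy.mono hG (le_max_right _ _)
  · exact .inr (hheavy.mono hG (le_max_left _ _))

variable (m n V g) in
lemma exists_isMonotonicLabel_const (N : ℕ) : ∀ C : ℝ, ∃ C', ∀ (G : ℝ → Set V)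
    (c : (Fin n → ℕ) → V →ₗ[ℝ] ℝ) (A : Finset (Fin n → ℕ)) (P : V) (Q : (Fin n → ℕ) → V),
    IsConvexFamily G → HasCoordMul m G c P g →
    WeakBasis (multiIndices m n) (key m) G c A P C Q →
    labelWeight (multiIndices m n) (key m) (multiIndices m n) ≤
      labelWeight (multiIndices m n) (key m) A + N →
    ∃ A' Q', IsMonotonicLabel m A' ∧
      labelWeight (multiIndices m n) (key m) A ≤ labelWeight (multiIndices m n) (key m) A' ∧
      WeakBasis (multiIndices m n) (key m) G c A' P C' Q' ∧
      CoeffBounded (multiIndices m n) c A' C' Q' := by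
  induction N with
  | zero =>
    intro C
    obtain ⟨D, hD⟩ := exists_relabel_const m n V g C
    refine ⟨C, fun G c A P Q hG hX h hA => ?_⟩
    rcases hD G c A P Q hG hX h with ⟨hmono, hs⟩ | ⟨A', Q', hlt, hQ'⟩
    · exact ⟨A, Q, hmono, le_rfl, h, hs⟩
    · exact absurd (labelWeight_mono hQ'.subset)
        (by omega : ¬labelWeight (multiIndices m n) (key m) A' ≤ _)
  | succ N ih =>
    intro C
    obtain ⟨D, hD⟩ := exists_relabel_const m n V g C
    obtain ⟨C', hC'⟩ := ih D
    refine ⟨max C C', fun G c A P Q hG hX h hA => ?_⟩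
    rcases hD G c A P Q hG hX h with ⟨hmono, hs⟩ | ⟨A', Q', hlt, hQ'⟩
    · exact ⟨A, Q, hmono, le_rfl, h.mono hG (le_max_left _ _),
        fun α hα β hβ => (hs α hα β hβ).trans (le_max_left _ _)⟩
    · obtain ⟨A'', Q'', hmono, hle, hQ'', hs⟩ := hC' G c A' P Q' hG hX hQ' (by omega)
      exact ⟨A'', Q'', hmono, hlt.le.trans hle, hQ''.mono hG (le_max_right _ _),
        fun α hα β hβ => (hs α hα β hβ).trans (le_max_right _ _)⟩

end MonotonicLabel

/-! ### Multiplying interpolant jets by coordinates -/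

section CoordMul

open scoped Pointwise

variable {m n k : ℕ} {f θ φ D F₁ F₂ : Euc n → ℝ} {E S : Set (Euc n)} {x y : Euc n} {C K r : ℝ}
  {P Q Q' : polyLT m n}

lemma isConvexFamily_interpolantJets (E : Set (Euc n)) (f : Euc n → ℝ) (k : ℕ) (x : Euc n) :
    IsConvexFamily (interpolantJets m E f k x) :=
  ⟨convex_interpolantJets E f k x, fun _ _ h => interpolantJets_mono h⟩

lemma abs_coordFrom_le (i : Fin n) (x y : Euc n) : |coordFrom i x y| ≤ dist y x := by
  rw [dist_eq_norm, ← Real.norm_eq_abs]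
  exact PiLp.norm_apply_le (y - x) i

lemma norm_iteratedFDeriv_smul_coordFrom_le (i : Fin n) (hr : 0 < r) (hy : dist y x ≤ 2 * r)
    (j : ℕ) : ‖iteratedFDeriv ℝ j ((2 * r)⁻¹ • coordFrom i x) y‖ ≤ 1 / r ^ j := by
  rw [iteratedFDeriv_const_smul_apply (contDiff_coordFrom i x).contDiffAt, norm_smul,
    Real.norm_of_nonneg (by positivity)]
  have hderiv : fderiv ℝ (coordFrom i x) = fun _ => (EuclideanSpace.proj i : Euc n →L[ℝ] ℝ) :=
    funext fun z => (hasFDerivAt_coordFrom i x z).fderiv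
  match j with
  | 0 =>
    rw [norm_iteratedFDeriv_zero, pow_zero, div_one, inv_mul_le_iff₀ (by positivity), mul_one]
    exact (abs_coordFrom_le i x y).trans hy
  | 1 =>
    rw [← norm_iteratedFDeriv_fderiv, hderiv, norm_iteratedFDeriv_zero, pow_one, one_div]
    have hproj : ‖(EuclideanSpace.proj i : Euc n →L[ℝ] ℝ)‖ ≤ 1 :=
      ContinuousLinearMap.opNorm_le_bound _ zero_le_one fun z => by
        rw [one_mul]
        exact PiLp.norm_apply_le z i
    calc (2 * r)⁻¹ * ‖(EuclideanSpace.proj i : Euc n →L[ℝ] ℝ)‖ ≤ r⁻¹ * 1 := by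
          gcongr
          linarith
      _ = r⁻¹ := mul_one _
  | j + 2 =>
    rw [← norm_iteratedFDeriv_fderiv, hderiv, iteratedFDeriv_const_of_ne j.succ_ne_zero,
      Pi.zero_apply, norm_zero, mul_zero]
    positivity

lemma IsCutoff.abs_mul_coordFrom_le_one (hφ : IsCutoff m C x r φ) (hr : 0 < r) (i : Fin n)
    (y : Euc n) : |(φ * (2 * r)⁻¹ • coordFrom i x) y| ≤ 1 := by
  rw [Pi.mul_apply, abs_mul, abs_of_nonneg (hφ.nonneg y)]
  rcases le_total (dist y x) (2 * r) with hy | hy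
  · have hcoord := norm_iteratedFDeriv_smul_coordFrom_le i hr hy 0
    rw [norm_iteratedFDeriv_zero, pow_zero, div_one] at hcoord
    exact mul_le_one₀ (hφ.le_one y) (abs_nonneg _) hcoord
  · rw [hφ.eq_zero y hy, zero_mul]
    exact zero_le_one

lemma IsCutoff.jetBound_mul_coordFrom (hφ : IsCutoff m C x r φ) (hr : 0 < r) (hC : 0 ≤ C)
    (i : Fin n) (hD : ContDiff ℝ m D) (hDK : ∀ y, dist y x ≤ 2 * r → JetBound m D y K r)
    (y : Euc n) :
    JetBound m (φ * (2 * r)⁻¹ • coordFrom i x * D) y (2 ^ m * C * (2 ^ m * 1 * K)) r := by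
  have hX : ContDiff ℝ m ((2 * r)⁻¹ • coordFrom i x) :=
    contDiff_const.smul (contDiff_coordFrom i x)
  rw [mul_assoc]
  rcases le_or_gt (dist y x) (2 * r) with hy | hy
  · exact .mul hr hC hφ.contDiff (hX.mul hD) (fun j hj => hφ.bound j hj y)
      (.mul hr zero_le_one hX hD
        (fun j _ => norm_iteratedFDeriv_smul_coordFrom_le i hr hy j) (hDK y hy))
  · have hK : 0 ≤ K := (hDK x (by rw [dist_self]; positivity)).const_nonneg
    refine JetBound.congr ?_ (JetBound.zero y (by positivity) hr.le)
    filter_upwards [hφ.eventuallyEq_zero hy] with z hz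
    rw [Pi.mul_apply, hz, Pi.zero_apply, zero_mul]

lemma JetEq.sub_eq_two_smul (h₁ : JetEq m x F₁ (P + Q : polyLT m n))
    (h₂ : JetEq m x F₂ (P - Q : polyLT m n)) (hF₁ : ContDiff ℝ m F₁) (hF₂ : ContDiff ℝ m F₂) :
    JetEq m x (F₁ - F₂) ((2 : ℝ) • Q : polyLT m n) := by
  intro β hβ
  have hle := (mem_multiIndices.1 hβ).le
  rw [mD_sub (contDiff_of_natCast_le hF₁ hle) (contDiff_of_natCast_le hF₂ hle), h₁ β hβ, h₂ β hβ,
    ← mD_sub (contDiff_polyLT _ _) (contDiff_polyLT _ _), ← Submodule.coe_sub]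
  congr 2
  module

lemma IsNonnegInterpolant.jetBound_sub (h₁ : IsNonnegInterpolant m f S C F₁)
    (h₂ : IsNonnegInterpolant m f S C F₂) (hr : 0 < r)
    (hJ : JetEq m x (F₁ - F₂) ((2 : ℝ) • Q : polyLT m n))
    (hQ : ∀ β ∈ multiIndices m n, |scaledCoeff m x r β Q| ≤ 1) (hy : dist y x ≤ 2 * r) :
    JetBound m (F₁ - F₂) y (2 ^ m * (2 ^ m * (2 * C) + 2 * (2 ^ m * (dimConst m n * 1)))) r := by
  have hD : ContDiff ℝ m (F₁ - F₂) := h₁.contDiff.sub h₂.contDiff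
  have htaylor := hJ.jetBound_sub hD (C := 2 * C) (fun z _ => by
    rw [iteratedFDeriv_sub_apply h₁.contDiff.contDiffAt h₂.contDiff.contDiffAt]
    linarith [norm_sub_le (iteratedFDeriv ℝ m F₁ z) (iteratedFDeriv ℝ m F₂ z),
      h₁.bound m le_rfl z, h₂.bound m le_rfl z]) (by positivity) hy
  have hpoly : JetBound m ((2 : ℝ) • (Q : Euc n → ℝ)) y
      (2 * (2 ^ m * (dimConst m n * 1))) (2 * r) := by
    have hQB := (JetBound.of_abs_scaledCoeff_le hr zero_le_one hQ).mono_scale hr.le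
      (by linarith : r ≤ 2 * r)
    simpa only [abs_two] using
      (hQB.move (by positivity) hy).const_smul (contDiff_polyLT Q m) 2
  have hsum := JetBound.add (F := F₁ - F₂ - (((2 : ℝ) • Q : polyLT m n) : Euc n → ℝ))
    (H := (2 : ℝ) • (Q : Euc n → ℝ)) (hD.sub (contDiff_polyLT _ m))
    (contDiff_const.smul (contDiff_polyLT Q m)) htaylor hpoly
  rw [Submodule.coe_smul, sub_add_cancel] at hsum
  exact hsum.shrink_scale hr.le (by positivity) one_le_two le_rfl

-- The combination is `((1 + θ) * F₁ + (1 - θ) * F₂) / 2`, whence it is nonnegative.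
lemma IsNonnegInterpolant.tilt (h₁ : IsNonnegInterpolant m f S C F₁)
    (h₂ : IsNonnegInterpolant m f S C F₂) (hθ : ContDiff ℝ m θ) (hθ₁ : ∀ y, |θ y| ≤ 1)
    (hK : ∀ j ≤ m, ∀ y, ‖iteratedFDeriv ℝ j (θ * (F₁ - F₂)) y‖ ≤ K) :
    IsNonnegInterpolant m f S (C + K)
      ((2⁻¹ : ℝ) • F₁ + (2⁻¹ : ℝ) • F₂ + (2⁻¹ : ℝ) • (θ * (F₁ - F₂))) := by
  have hmean := convex_setOf_isNonnegInterpolant f S C h₁ h₂ (a := 2⁻¹) (b := 2⁻¹)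
    (by positivity) (by positivity) (by norm_num)
  have hprod : ContDiff ℝ m (θ * (F₁ - F₂)) := hθ.mul (h₁.contDiff.sub h₂.contDiff)
  have hhalf : ContDiff ℝ m ((2⁻¹ : ℝ) • (θ * (F₁ - F₂))) := contDiff_const.smul hprod
  refine ⟨hmean.contDiff.add hhalf, fun j hj y => ?_, fun y => ?_, fun y hy => ?_⟩
  · rw [iteratedFDeriv_add_apply (contDiff_of_natCast_le hmean.contDiff hj).contDiffAt
      (contDiff_of_natCast_le hhalf hj).contDiffAt,
      iteratedFDeriv_const_smul_apply (contDiff_of_natCast_le hprod hj).contDiffAt]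
    refine (norm_add_le _ _).trans (add_le_add (hmean.bound j hj y) ?_)
    rw [norm_smul, Real.norm_of_nonneg (by norm_num)]
    linarith [hK j hj y, norm_nonneg (iteratedFDeriv ℝ j (θ * (F₁ - F₂)) y)]
  · obtain ⟨hlo, hhi⟩ := abs_le.1 (hθ₁ y)
    have h₁' := mul_nonneg (by linarith : 0 ≤ 1 + θ y) (h₁.nonneg y)
    have h₂' := mul_nonneg (by linarith : 0 ≤ 1 - θ y) (h₂.nonneg y)
    simp only [Pi.add_apply, Pi.smul_apply, Pi.mul_apply, Pi.sub_apply, smul_eq_mul]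
    linarith
  · rw [Pi.add_apply, hmean.eqOn hy, Pi.smul_apply, Pi.mul_apply, Pi.sub_apply, h₁.eqOn hy,
      h₂.eqOn hy, sub_self, mul_zero, smul_zero, add_zero]

lemma IsCutoff.mD_mul_coordFrom (hφ : IsCutoff m C x r φ) (hr : 0 < r) (i : Fin n)
    (hD : ContDiff ℝ m D) (hJ : JetEq m x D ((2 : ℝ) • Q : polyLT m n)) {β : Fin n → ℕ}
    (hβ : β ∈ multiIndices m n) : mD β (φ * (2 * r)⁻¹ • coordFrom i x * D) x =
      β i * mD (β - Pi.single i 1) Q x / r := by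
  have hle := (mem_multiIndices.1 hβ).le
  have hXD : ContDiff ℝ m (coordFrom i x * D) := (contDiff_coordFrom i x).mul hD
  have hθD : ContDiff ℝ m (φ * (2 * r)⁻¹ • coordFrom i x * D) :=
    (hφ.contDiff.mul (contDiff_const.smul (contDiff_coordFrom i x))).mul hD
  have hsmul : ContDiff ℝ m ((2 * r)⁻¹ • (coordFrom i x * D)) := contDiff_const.smul hXD
  have hev : φ * (2 * r)⁻¹ • coordFrom i x * D =ᶠ[nhds x] (2 * r)⁻¹ • (coordFrom i x * D) := by
    filter_upwards [hφ.eventuallyEq_one (by rwa [dist_self])] with z hz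
    simp only [Pi.mul_apply, Pi.smul_apply, hz, Pi.one_apply, one_mul, smul_mul_assoc]
  rw [mD_congr (contDiff_of_natCast_le hθD hle)
      (contDiff_of_natCast_le hsmul hle) hev, mD_const_smul (contDiff_of_natCast_le hXD hle),
    mD_coordFrom_mul i x β (contDiff_of_natCast_le hD hle), coordFrom_self, zero_mul, zero_add,
    hJ _ (sub_single_mem_multiIndices hβ i), Submodule.coe_smul,
    mD_const_smul (contDiff_polyLT Q _)]
  field_simp

/-- A bound for the derivatives of the tilting term when jets of interpolants with constant `C` are
multiplied by a coordinate. -/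
def coordMulConst (m n : ℕ) (C : ℝ) : ℝ :=
  2 ^ m * cutoffConst m n *
    (2 ^ m * 1 * (2 ^ m * (2 ^ m * (2 * C) + 2 * (2 ^ m * (dimConst m n * 1)))))

-- If `F₁`, `F₂` interpolate with jets `P ± Q`, then so does their mean, tilted towards `F₁` by a
-- cut off multiple `θ` of the coordinate.
lemma add_half_coordMul_mem_interpolantJets (hr : 0 < r) (hr₁ : r ≤ 1)
    (hPQ : Q ∈ symmPart (interpolantJets m E f k x C) P)
    (hQ : ∀ β ∈ multiIndices m n, |scaledCoeff m x r β Q| ≤ 1) (i : Fin n)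
    (hQ' : ∀ β ∈ multiIndices m n, mD β Q' x = β i * mD (β - Pi.single i 1) Q x / r) :
    P + (2⁻¹ : ℝ) • Q' ∈ interpolantJets m E f k x (C + coordMulConst m n C) := by
  intro S hS hk
  obtain ⟨F₁, hF₁, hJ₁⟩ := hPQ.1 S hS hk
  obtain ⟨F₂, hF₂, hJ₂⟩ := hPQ.2 S hS hk
  obtain ⟨φ, hφ⟩ := exists_isCutoff_cutoffConst m x hr
  have hJ := hJ₁.sub_eq_two_smul hJ₂ hF₁.contDiff hF₂.contDiff
  have hD : ContDiff ℝ m (F₁ - F₂) := hF₁.contDiff.sub hF₂.contDiff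
  have hθ : ContDiff ℝ m (φ * (2 * r)⁻¹ • coordFrom i x) :=
    hφ.contDiff.mul (contDiff_const.smul (contDiff_coordFrom i x))
  have hbound : ∀ j ≤ m, ∀ y,
      ‖iteratedFDeriv ℝ j (φ * (2 * r)⁻¹ • coordFrom i x * (F₁ - F₂)) y‖ ≤
        coordMulConst m n C := fun j hj y => by
    have hB := hφ.jetBound_mul_coordFrom hr (zero_le_one.trans (one_le_cutoffConst m n)) i hD
      (fun z hz => hF₁.jetBound_sub hF₂ hr hJ hQ hz) y
    exact (hB j hj).trans (mul_le_of_le_one_right hB.const_nonneg (pow_le_one₀ hr.le hr₁))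
  refine ⟨_, hF₁.tilt hF₂ hθ (hφ.abs_mul_coordFrom_le_one hr i) hbound, fun β hβ => ?_⟩
  have hmean : ContDiff ℝ m ((2⁻¹ : ℝ) • F₁ + (2⁻¹ : ℝ) • F₂) :=
    (contDiff_const.smul hF₁.contDiff).add (contDiff_const.smul hF₂.contDiff)
  have hsplit := mD_add_const_smul (H := φ * (2 * r)⁻¹ • coordFrom i x * (F₁ - F₂)) hmean
    (hθ.mul hD) 1 2⁻¹ x hβ
  rw [one_smul, one_mul] at hsplit
  rw [hsplit, mD_add_const_smul hF₁.contDiff hF₂.contDiff _ _ _ hβ, hJ₁ β hβ, hJ₂ β hβ,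
    hφ.mD_mul_coordFrom hr i hD hJ hβ, ← hQ' β hβ,
    ← mD_add_const_smul (contDiff_polyLT _ m) (contDiff_polyLT _ m) _ _ _ hβ,
    ← mD_const_smul (contDiff_polyLT Q' _), ← Submodule.coe_smul, ← Submodule.coe_smul,
    ← Submodule.coe_smul, ← Submodule.coe_add,
    ← mD_add (contDiff_polyLT _ _) (contDiff_polyLT _ _), ← Submodule.coe_add]
  congr 2
  module

lemma hasCoordMul_interpolantJets (hr : 0 < r) (hr₁ : r ≤ 1) (P : polyLT m n) :
    HasCoordMul m (interpolantJets m E f k x) (scaledCoeff m x r) P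
      fun C => C + coordMulConst m n C := by
  intro C _ Q hQ hc i
  obtain ⟨Q', hQ'⟩ :=
    exists_polyLT_mD_eq m x fun β => β i * mD (β - Pi.single i 1) Q x / r
  have hneg : -Q ∈ symmPart (interpolantJets m E f k x C) P :=
    ⟨by simpa [← sub_eq_add_neg] using hQ.2, by simpa using hQ.1⟩
  refine ⟨Q', Set.mem_smul_set_iff_inv_smul_mem₀ two_ne_zero _ _ |>.2 ⟨?_, ?_⟩, fun β hβ => ?_⟩
  · exact add_half_coordMul_mem_interpolantJets hr hr₁ hQ hc i hQ'
  · rw [sub_eq_add_neg, ← smul_neg (2⁻¹ : ℝ) Q']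
    refine add_half_coordMul_mem_interpolantJets hr hr₁ hneg
      (fun β hβ => by simpa using hc β hβ) i fun β hβ => ?_
    have hmD : ∀ (γ : Fin n → ℕ) (R : polyLT m n), mD γ (-R : polyLT m n) x = -mD γ R x :=
      fun γ R => by
        simpa using mD_const_smul (α := γ) (contDiff_polyLT R _) (-1) x
    rw [hmD, hmD, hQ' β hβ]
    ring
  · rw [scaledCoeff_apply, scaledCoeff_apply, hQ' β hβ]
    rcases (β i).eq_zero_or_pos with h₀ | h₀
    · simp [h₀]
    · have hdeg := deg_sub_single h₀
      have hlt := mem_multiIndices.1 hβ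
      have hpos := h₀.trans_le (apply_le_deg β i)
      rw [show m - deg (β - Pi.single i 1) = m - deg β + 1 by omega, pow_succ]
      field_simp

end CoordMul

/-! ### Separated sets and finite nets -/

section Separated

lemma exists_encard_le_of_separated {X : Type*} [PseudoMetricSpace X] {s : Set X}
    (hs : TotallyBounded s) {ε : ℝ} (hε : 0 < ε) :
    ∃ M : ℕ, ∀ u ⊆ s, u.Pairwise (fun x y => ε < dist x y) → u.encard ≤ M := by
  obtain ⟨t, ht, hcover⟩ := Metric.totallyBounded_iff.1 hs (ε / 2) (half_pos hε)
  refine ⟨t.ncard, fun u hu hsep => ?_⟩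
  have hnear : ∀ x : u, ∃ y ∈ t, dist (x : X) y < ε / 2 := fun x => by
    simpa using hcover (hu x.2)
  choose g hgt hg using hnear
  have hinj : Function.Injective g := fun x y hxy => by
    by_contra hne
    have hy := hg y
    rw [← hxy] at hy
    linarith [hsep x.2 y.2 fun h => hne (Subtype.ext h), hg x,
      dist_triangle_right (x : X) y (g x)]
  rw [ht.cast_ncard_eq]
  exact Function.Embedding.encard_le ⟨fun x => ⟨g x, hgt x⟩, fun x y hxy =>
    hinj (congrArg Subtype.val hxy)⟩

lemma exists_encard_le_of_separated_at_scale (V : Type*) [NormedAddCommGroup V] [NormedSpace ℝ V]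
    [ProperSpace V] (a : ℝ) {b : ℝ} (hb : 0 < b) :
    ∃ M : ℕ, ∀ (z : V) (r : ℝ), 0 < r → ∀ u ⊆ Metric.closedBall z (a * r),
      u.Pairwise (fun x y => b * r < dist x y) → u.encard ≤ M := by
  obtain ⟨M, hM⟩ := exists_encard_le_of_separated
    (isCompact_closedBall (0 : V) a).totallyBounded hb
  refine ⟨M, fun z r hr u hu hsep => ?_⟩
  let g : V → V := fun x => r⁻¹ • (x - z)
  have hdist : ∀ x y, dist (g x) (g y) = dist x y / r := fun x y => by
    rw [dist_smul₀, Real.norm_of_nonneg (by positivity), dist_sub_right, inv_mul_eq_div]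
  have hinj : Function.Injective g := (smul_right_injective V (inv_ne_zero hr.ne')).comp
    sub_left_injective
  rw [← hinj.encard_image]
  refine hM _ ?_ ?_
  · rintro _ ⟨x, hx, rfl⟩
    have hz : g z = 0 := by simp [g]
    rw [Metric.mem_closedBall, ← hz, hdist, div_le_iff₀ hr]
    exact hu hx
  · rintro _ ⟨x, hx, rfl⟩ _ ⟨y, hy, rfl⟩ hne
    rw [hdist, lt_div_iff₀ hr]
    exact hsep hx hy fun h => hne (congrArg g h)

lemma exists_finite_net {X : Type*} [MetricSpace X] {s : Set X} (hs : TotallyBounded s)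
    {ρ : X → ℝ} {ρ₀ ρ₁ : ℝ} (hρ₀ : 0 < ρ₀) (hρ : ∀ x ∈ s, ρ₀ ≤ ρ x ∧ ρ x ≤ ρ₁) :
    ∃ u : Finset X, ↑u ⊆ s ∧ (u : Set X).Pairwise (fun x y => ρ x / 5 < dist x y) ∧
      ∀ z ∈ s, ∃ x ∈ u, dist z x < ρ x := by
  obtain ⟨u, hus, hdisj, hcover⟩ := Vitali.exists_disjoint_subfamily_covering_enlargement_closedBall
    s id (fun x => ρ x / 5) (ρ₁ / 5)
    (fun x hx => div_le_div_of_nonneg_right (hρ x hx).2 (by norm_num)) 4 (by norm_num)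
  have hpos : ∀ x ∈ s, 0 < ρ x := fun x hx => hρ₀.trans_le (hρ x hx).1
  have hsep : u.Pairwise fun x y => ρ x / 5 < dist x y := fun x hx y hy hne => by
    by_contra! hle
    exact Set.disjoint_left.1 (hdisj hx hy hne)
      (Metric.mem_closedBall'.2 hle : y ∈ Metric.closedBall x (ρ x / 5))
      (Metric.mem_closedBall_self (by linarith [hpos y (hus hy)]))
  obtain ⟨M, hM⟩ := exists_encard_le_of_separated hs (ε := ρ₀ / 5) (by positivity)
  have hfin : u.Finite := Set.finite_of_encard_le_coe <| hM u hus fun x hx y hy hne =>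
    (div_le_div_of_nonneg_right (hρ x (hus hx)).1 (by norm_num)).trans_lt (hsep hx hy hne)
  refine ⟨hfin.toFinset, by simpa using hus, by simpa using hsep, fun z hz => ?_⟩
  obtain ⟨x, hx, hzx⟩ := hcover z hz
  have hmem : z ∈ Metric.closedBall x (4 * (ρ x / 5)) :=
    hzx (Metric.mem_closedBall_self (by linarith [hpos z hz]))
  exact ⟨x, by simpa using hx, by linarith [Metric.mem_closedBall.1 hmem, hpos x (hus hx)]⟩

lemma exists_overlap_bound (V : Type*) [NormedAddCommGroup V] [NormedSpace ℝ V] [ProperSpace V] :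
    ∃ M : ℕ, ∀ (u : Finset V) (ρ : V → ℝ) (z : V) (r : ℝ), 0 < r →
      (u : Set V).Pairwise (fun x y => ρ x / 5 < dist x y) →
      (∀ x ∈ u, dist z x ≤ 2 * ρ x → r ≤ 2 * ρ x ∧ ρ x ≤ 2 * r) →
      (u.filter fun x => dist z x ≤ 2 * ρ x).card ≤ M := by
  obtain ⟨M, hM⟩ := exists_encard_le_of_separated_at_scale V 4 (b := 1 / 10) (by norm_num)
  refine ⟨M, fun u ρ z r hr hsep hρ => ?_⟩
  have hmem : ∀ x ∈ u.filter fun x => dist z x ≤ 2 * ρ x,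
      x ∈ u ∧ dist z x ≤ 2 * ρ x ∧ r ≤ 2 * ρ x ∧ ρ x ≤ 2 * r := fun x hx => by
    rw [Finset.mem_filter] at hx
    exact ⟨hx.1, hx.2, hρ x hx.1 hx.2⟩
  have hcard := hM z r hr ↑(u.filter fun x => dist z x ≤ 2 * ρ x) (fun x hx => by
      rw [Metric.mem_closedBall']
      linarith [hmem x hx])
    (fun x hx y hy hne => by
      linarith [hmem x hx, hsep (hmem x hx).1 (hmem y hy).1 hne])
  rwa [Set.encard_coe_eq_coe_finsetCard, Nat.cast_le] at hcard

end Separated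

/-! ### Patching local interpolants -/

section Patching

/-- Successive gluing of the functions `F i` along the cutoffs `φ i`, the first index in the list
being glued in last. -/
def patch {ι V : Type*} (φ F : ι → V → ℝ) : List ι → V → ℝ
  | [] => 0
  | i :: l => patch φ F l + φ i * (F i - patch φ F l)

lemma contDiff_patch {ι V : Type*} [NormedAddCommGroup V] [NormedSpace ℝ V] {φ F : ι → V → ℝ}
    {k : WithTop ℕ∞} (l : List ι) (hφ : ∀ i ∈ l, ContDiff ℝ k (φ i))
    (hF : ∀ i ∈ l, ContDiff ℝ k (F i)) : ContDiff ℝ k (patch φ F l) := by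
  induction l with
  | nil => exact contDiff_const
  | cons i l ih =>
    rw [List.forall_mem_cons] at hφ hF
    have hl := ih hφ.2 hF.2
    exact hl.add (hφ.1.mul (hF.1.sub hl))

lemma patch_mem_of_convex {ι V : Type*} {φ F : ι → V → ℝ} {z : V} {t : Set ℝ} (ht : Convex ℝ t)
    (l : List ι) (hφ₀ : ∀ i ∈ l, 0 ≤ φ i z) (hφ₁ : ∀ i ∈ l, φ i z ≤ 1)
    (hF : ∀ i ∈ l, φ i z = 0 ∨ F i z ∈ t) (h : (∃ i ∈ l, φ i z = 1) ∨ (0 : ℝ) ∈ t) :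
    patch φ F l z ∈ t := by
  induction l with
  | nil => simpa [patch] using h
  | cons i l ih =>
    rw [List.forall_mem_cons] at hφ₀ hφ₁ hF
    have hcons : patch φ F (i :: l) z = patch φ F l z + φ i z * (F i z - patch φ F l z) := rfl
    rw [hcons]
    rcases hF.1 with h₀ | hmem
    · rw [h₀, zero_mul, add_zero]
      refine ih hφ₀.2 hφ₁.2 hF.2 (h.imp_left ?_)
      rintro ⟨j, hj, hj₁⟩
      rcases List.mem_cons.1 hj with rfl | hj
      · exact absurd (h₀.symm.trans hj₁) zero_ne_one
      · exact ⟨j, hj, hj₁⟩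
    by_cases h₁ : φ i z = 1
    · rwa [h₁, one_mul, add_sub_cancel]
    refine ht.add_smul_sub_mem (ih hφ₀.2 hφ₁.2 hF.2 (h.imp_left ?_)) hmem ⟨hφ₀.1, hφ₁.1⟩
    rintro ⟨j, hj, hj₁⟩
    rcases List.mem_cons.1 hj with rfl | hj
    · exact absurd hj₁ h₁
    · exact ⟨j, hj, hj₁⟩

variable {m n : ℕ} {φ F : Euc n → Euc n → ℝ} {P : Euc n → ℝ} {ρ : Euc n → ℝ} {z x : Euc n}
  {K r : ℝ} {l : List (Euc n)} {s E : Set (Euc n)} {f : Euc n → ℝ}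

/-- The factor by which jet bounds deteriorate when one more function is glued in. -/
def blendConst (m n : ℕ) : ℝ := 1 + 2 * (2 ^ m * (cutoffConst m n * 2 ^ m))

lemma one_le_blendConst (m n : ℕ) : 1 ≤ blendConst m n := by
  have hpos : 0 ≤ cutoffConst m n := zero_le_one.trans (one_le_cutoffConst m n)
  exact le_add_of_nonneg_right (by positivity)

lemma IsCutoff.norm_iteratedFDeriv_le_of_le_two_mul {C ρ : ℝ} {φ : Euc n → ℝ} (hC : 0 ≤ C)
    (h : IsCutoff m C x ρ φ) (hr : 0 < r) (hrρ : r ≤ 2 * ρ) {k : ℕ} (hk : k ≤ m) (y : Euc n) :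
    ‖iteratedFDeriv ℝ k φ y‖ ≤ C * 2 ^ m / r ^ k := by
  have hρ : 0 < ρ := by linarith
  refine (h.bound k hk y).trans ?_
  rw [div_le_div_iff₀ (by positivity) (by positivity), mul_assoc]
  gcongr
  calc r ^ k ≤ (2 * ρ) ^ k := by gcongr
    _ = 2 ^ k * ρ ^ k := mul_pow _ _ _
    _ ≤ 2 ^ m * ρ ^ k := by
      gcongr
      exact one_le_two

lemma JetBound.glue {φ F G : Euc n → ℝ} {ρ : ℝ} (hr : 0 < r) (hrρ : r ≤ 2 * ρ)
    (hφ : IsCutoff m (cutoffConst m n) x ρ φ) (hF : ContDiff ℝ m F) (hG : ContDiff ℝ m G)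
    (hP : ContDiff ℝ m P) (hFP : JetBound m (F - P) z K r) (hGP : JetBound m (G - P) z K r) :
    JetBound m (G + φ * (F - G) - P) z (K * blendConst m n) r := by
  have hC : 0 ≤ cutoffConst m n := zero_le_one.trans (one_le_cutoffConst m n)
  have hFG : ContDiff ℝ m (F - G) := hF.sub hG
  have hbound : JetBound m (F - G) z (K + K) r := by
    have := hFP.sub (F := F - P) (H := G - P) (hF.sub hP) (hG.sub hP) hGP
    rwa [sub_sub_sub_cancel_right] at this
  have hmul := hbound.mul hr (mul_nonneg hC (by positivity)) hφ.contDiff hFG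
    (fun k hk => hφ.norm_iteratedFDeriv_le_of_le_two_mul hC hr hrρ hk z)
  have hadd := hGP.add (F := G - P) (H := φ * (F - G)) (hG.sub hP) (hφ.contDiff.mul hFG) hmul
  rw [show G - P + φ * (F - G) = G + φ * (F - G) - P by ring] at hadd
  refine hadd.mono hr.le (le_of_eq ?_)
  rw [blendConst]
  ring

lemma jetBound_patch (hr : 0 < r) (hP : ContDiff ℝ m P) (l : List (Euc n))
    (hρ : ∀ x ∈ l, 0 < ρ x) (hφ : ∀ x ∈ l, IsCutoff m (cutoffConst m n) x (ρ x) (φ x))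
    (hF : ∀ x ∈ l, ContDiff ℝ m (F x))
    (hnear : ∀ x ∈ l, dist z x ≤ 2 * ρ x → r ≤ 2 * ρ x ∧ JetBound m (F x - P) z K r)
    (hcover : (∃ x ∈ l, dist z x < ρ x) ∨ JetBound m (0 - P) z K r) :
    JetBound m (patch φ F l - P) z
      (K * blendConst m n ^ l.countP fun x => dist z x ≤ 2 * ρ x) r := by
  induction l with
  | nil => simpa [patch] using hcover
  | cons x l ih =>
    rw [List.forall_mem_cons] at hρ hφ hF hnear
    have hl : ContDiff ℝ m (patch φ F l) :=
      contDiff_patch l (fun y hy => (hφ.2 y hy).contDiff) hF.2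
    by_cases hlt : dist z x < ρ x
    · have hK := (hnear.1 (by linarith)).2
      refine (hK.mono hr.le (le_mul_of_one_le_right hK.const_nonneg
        (one_le_pow₀ (one_le_blendConst m n)))).congr ?_
      filter_upwards [hφ.1.eventuallyEq_one hlt] with w hw
      simp [patch, hw]
    have ih' := ih hρ.2 hφ.2 hF.2 hnear.2 <| hcover.imp_left fun ⟨y, hy, hzy⟩ =>
      ⟨y, (List.mem_cons.1 hy).resolve_left (by rintro rfl; exact hlt hzy), hzy⟩
    by_cases hle : dist z x ≤ 2 * ρ x
    · obtain ⟨hrρ, hK⟩ := hnear.1 hle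
      rw [List.countP_cons_of_pos (by simpa using hle), pow_succ, ← mul_assoc]
      exact JetBound.glue hr hrρ hφ.1 hF.1 hl hP (hK.mono hr.le
        (le_mul_of_one_le_right hK.const_nonneg (one_le_pow₀ (one_le_blendConst m n)))) ih'
    · rw [List.countP_cons_of_neg (by simpa using hle)]
      refine ih'.congr ?_
      filter_upwards [hφ.1.eventuallyEq_zero (not_le.1 hle)] with w hw
      simp [patch, hw]

/-- The functions `F x`, `x ∈ s`, are nonnegative, `C^m`, and interpolate `f` at the points of `E`
within distance `2 * ρ x` of `x`. -/
structure IsInterpolantFamily (m : ℕ) (E : Set (Euc n)) (f : Euc n → ℝ) (s : Set (Euc n))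
    (ρ : Euc n → ℝ) (F : Euc n → Euc n → ℝ) : Prop where
  contDiff : ∀ x ∈ s, ContDiff ℝ m (F x)
  nonneg : ∀ x ∈ s, ∀ y, 0 ≤ F x y
  eqOn : ∀ x ∈ s, ∀ z ∈ E, dist z x ≤ 2 * ρ x → F x z = f z

/-- The factor by which jet bounds deteriorate when a family of local interpolants is patched
together. -/
def patchConst (m n : ℕ) : ℝ := blendConst m n ^ (exists_overlap_bound (Euc n)).choose

lemma blendConst_pow_countP_le (hr : 0 < r) {u : Finset (Euc n)}
    (hsep : (u : Set (Euc n)).Pairwise fun x y => ρ x / 5 < dist x y)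
    (hscale : ∀ x ∈ u, dist z x ≤ 2 * ρ x → r ≤ 2 * ρ x ∧ ρ x ≤ 2 * r) :
    blendConst m n ^ (u.toList.countP fun x => dist z x ≤ 2 * ρ x) ≤ patchConst m n := by
  refine pow_le_pow_right₀ (one_le_blendConst m n) ?_
  rw [← Multiset.coe_countP, Finset.coe_toList, Multiset.countP_eq_card_filter]
  exact (exists_overlap_bound (Euc n)).choose_spec u ρ z r hr hsep hscale

theorem IsInterpolantFamily.exists_patch (h : IsInterpolantFamily m E f s ρ F)
    (hs : TotallyBounded s) {ρ₀ ρ₁ : ℝ} (hρ₀ : 0 < ρ₀)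
    (hρ : ∀ x ∈ s, ρ₀ ≤ ρ x ∧ ρ x ≤ ρ₁) :
    ∃ G : Euc n → ℝ, ContDiff ℝ m G ∧ (∀ y, 0 ≤ G y) ∧ (∀ z ∈ E, z ∈ s → G z = f z) ∧
      ∀ (z : Euc n) (r : ℝ) (P : Euc n → ℝ) (K : ℝ), 0 < r → ContDiff ℝ m P →
        (∀ x ∈ s, dist z x ≤ 2 * ρ x →
          r ≤ 2 * ρ x ∧ ρ x ≤ 2 * r ∧ JetBound m (F x - P) z K r) →
        z ∈ s ∨ JetBound m (0 - P) z K r →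
        JetBound m (G - P) z (K * patchConst m n) r := by
  obtain ⟨u, hus, hsep, hcover⟩ := exists_finite_net hs hρ₀ hρ
  have hpos : ∀ x ∈ s, 0 < ρ x := fun x hx => hρ₀.trans_le (hρ x hx).1
  have hcutoff : ∀ x, ∃ φ, x ∈ s → IsCutoff m (cutoffConst m n) x (ρ x) φ := fun x => by
    by_cases hx : x ∈ s
    · exact (exists_isCutoff_cutoffConst m x (hpos x hx)).imp fun φ hφ _ => hφ
    · exact ⟨0, fun h => absurd h hx⟩
  choose φ hφ using hcutoff
  have hus' : ∀ x ∈ u.toList, x ∈ s := fun x hx => hus (Finset.mem_toList.1 hx)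
  have hφF : ∀ z ∈ s, ∃ x ∈ u.toList, dist z x < ρ x := by simpa using hcover
  have hφ₀ : ∀ y, ∀ x ∈ u.toList, 0 ≤ φ x y := fun y x hx => (hφ x (hus' x hx)).nonneg y
  have hφ₁ : ∀ y, ∀ x ∈ u.toList, φ x y ≤ 1 := fun y x hx => (hφ x (hus' x hx)).le_one y
  refine ⟨patch φ F u.toList, contDiff_patch _ (fun x hx => (hφ x (hus' x hx)).contDiff)
    (fun x hx => h.contDiff x (hus' x hx)), fun y => ?_, fun z hzE hzs => ?_,
    fun z r P K hr hP hnear hz => ?_⟩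
  · exact patch_mem_of_convex (convex_Ici 0) _ (hφ₀ y) (hφ₁ y)
      (fun x hx => Or.inr (h.nonneg x (hus' x hx) y)) (Or.inr Set.self_mem_Ici)
  · obtain ⟨x, hx, hzx⟩ := hφF z hzs
    refine patch_mem_of_convex (t := {f z}) (convex_singleton _) _ (hφ₀ z) (hφ₁ z) (fun y hy => ?_)
      (Or.inl ⟨x, hx, (hφ x (hus' x hx)).eq_one z hzx.le⟩)
    exact (le_total (2 * ρ y) (dist z y)).imp ((hφ y (hus' y hy)).eq_zero z)
      (h.eqOn y (hus' y hy) z hzE)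
  · have hbound := jetBound_patch hr hP u.toList (fun x hx => hpos x (hus' x hx))
      (fun x hx => hφ x (hus' x hx)) (fun x hx => h.contDiff x (hus' x hx))
      (fun x hx hd => (hnear x (hus' x hx) hd).imp_right And.right) (hz.imp_left (hφF z))
    refine hbound.mono hr.le (mul_le_mul_of_nonneg_left (blendConst_pow_countP_le hr hsep
      fun x hx hd => (hnear x (hus hx) hd).imp_right And.left) ?_)
    exact nonneg_of_mul_nonneg_left hbound.const_nonneg
      (pow_pos (zero_lt_one.trans_le (one_le_blendConst m n)) _)

end Patching

/-! ### Stopping scales -/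

section StoppingScale

variable {X : Type*} [PseudoMetricSpace X] {G : X → ℝ → Prop} {M : ℝ}

/-- `ρ x` is, up to a factor two, the largest scale `r ≤ M` for which `G x r` holds. -/
structure IsStoppingScale (G : X → ℝ → Prop) (M : ℝ) (ρ : X → ℝ) : Prop where
  le : ∀ x, ρ x ≤ M
  holds : ∀ x, G x (ρ x)
  not_holds : ∀ x, ρ x < M → ¬ G x (2 * ρ x)
  le_two_mul : ∀ x y, dist y x ≤ ρ x / 2 → ρ x ≤ 2 * ρ y
  exists_pos_le : ∃ ρ₀ > 0, ∀ x, ρ₀ ≤ ρ x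

lemma exists_isStoppingScale (hM : 0 < M)
    (hG : ∀ x y r s, 0 < s → dist y x + s ≤ r → G x r → G y s)
    (hε : ∃ ε > 0, ∀ x, ∀ r < ε, G x r) : ∃ ρ, IsStoppingScale G M ρ := by
  classical
  obtain ⟨ε, hε, hGε⟩ := hε
  let q : ℕ → ℝ := fun j => M * (1 / 2) ^ j
  have hq_pos : ∀ j, 0 < q j := fun j => by positivity
  have hq_succ : ∀ j, 2 * q (j + 1) = q j := fun j => by simp only [q, pow_succ]; ring
  have hq_anti : Antitone q := antitone_nat_of_succ_le fun j => by linarith [hq_succ j, hq_pos j]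
  have hq_zero : q 0 = M := by simp [q]
  obtain ⟨J, hJ⟩ := exists_pow_lt_of_lt_one (div_pos hε hM) (one_half_lt_one (α := ℝ))
  have hGJ : ∀ x, G x (q J) := fun x => hGε x _ <| by rwa [lt_div_iff₀' hM] at hJ
  have hex : ∀ x, ∃ j, G x (q j) := fun x => ⟨J, hGJ x⟩
  refine ⟨fun x => q (Nat.find (hex x)),
    { le := fun x => (hq_anti (Nat.zero_le _)).trans_eq hq_zero
      holds := fun x => Nat.find_spec (hex x)
      not_holds := fun x hlt => ?_
      le_two_mul := fun x y hd => ?_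
      exists_pos_le := ⟨q J, hq_pos J, fun x => hq_anti (Nat.find_min' (hex x) (hGJ x))⟩ }⟩
  · obtain ⟨j, hj⟩ := Nat.exists_eq_succ_of_ne_zero (n := Nat.find (hex x)) fun h₀ =>
      hlt.ne (by simp only [h₀, hq_zero])
    simp only [hj, Nat.succ_eq_add_one, hq_succ]
    exact Nat.find_min (hex x) (by omega)
  · have hy : G y (q (Nat.find (hex x) + 1)) :=
      hG x y _ _ (hq_pos _) (by linarith [hq_succ (Nat.find (hex x))]) (Nat.find_spec (hex x))
    linarith [hq_succ (Nat.find (hex x)), hq_anti (Nat.find_min' (hex y) hy)]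

/-- At the scale `r` around `x` interpolation on `E` poses no difficulty: either there is at most
one point to interpolate, or all of them satisfy the condition `T`. -/
def IsEasyScale (E : Set X) (T : X → ℝ → Prop) (x : X) (r : ℝ) : Prop :=
  (E ∩ Metric.closedBall x r).Subsingleton ∨ ∀ y ∈ E ∩ Metric.closedBall x r, T y r

lemma IsEasyScale.shrink {E : Set X} {T : X → ℝ → Prop}
    (hT : ∀ y r s, 0 < s → s ≤ r → T y r → T y s) {x y : X} {r s : ℝ} (hs : 0 < s)
    (h : dist y x + s ≤ r) (hx : IsEasyScale E T x r) : IsEasyScale E T y s := by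
  have hsub : E ∩ Metric.closedBall y s ⊆ E ∩ Metric.closedBall x r :=
    Set.inter_subset_inter_right _ (Metric.closedBall_subset_closedBall' (by linarith))
  exact hx.imp (fun hx => hx.anti hsub) fun hx z hz =>
    hT z r s hs (by linarith [dist_nonneg (x := y) (y := x)]) (hx z (hsub hz))

lemma exists_pos_forall_eq_of_dist_lt {X : Type*} [MetricSpace X] {E : Set X} (hE : E.Finite) :
    ∃ ε > 0, ∀ y ∈ E, ∀ y' ∈ E, dist y y' < ε → y = y' := by
  rcases E.subsingleton_or_nontrivial with hE' | hE'
  · exact ⟨1, one_pos, fun y hy y' hy' _ => hE' hy hy'⟩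
  · refine ⟨E.infsep, hE.infsep_pos_iff_nontrivial.2 hE', fun y hy y' hy' hlt => ?_⟩
    by_contra hne
    exact hlt.not_ge (Set.infsep_le_dist_of_mem hy hy' hne)

lemma exists_isStoppingScale_isEasyScale {X : Type*} [MetricSpace X] {E : Set X} {M : ℝ}
    (hE : E.Finite) (hM : 0 < M) {T : X → ℝ → Prop}
    (hT : ∀ y r s, 0 < s → s ≤ r → T y r → T y s) :
    ∃ ρ, IsStoppingScale (IsEasyScale E T) M ρ := by
  obtain ⟨ε, hε, hsep⟩ := exists_pos_forall_eq_of_dist_lt hE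
  refine exists_isStoppingScale hM (fun x y r s hs h => IsEasyScale.shrink hT hs h)
    ⟨ε / 2, half_pos hε, fun x r hr => Or.inl fun y hy y' hy' => hsep y hy.1 y' hy'.1 ?_⟩
  calc dist y y' ≤ dist y x + dist y' x := dist_triangle_right y y' x
    _ ≤ r + r := add_le_add hy.2 hy'.2
    _ < ε := by linarith

end StoppingScale

/-! ### Gluing local interpolants -/

section Gluing

variable {m n : ℕ} {E E' : Set (Euc n)} {f F : Euc n → ℝ} {x x₀ y y' z : Euc n}
  {b K K' L M R R' δ r r' l : ℝ} {P P' P₀ S : polyLT m n} {Q : Euc n → polyLT m n}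
  {T : Euc n → ℝ → Prop} {ρ : Euc n → ℝ}

lemma JetBound.sub_sub_polyLT (hP : JetBound m ((P - S : polyLT m n) : Euc n → ℝ) z K r)
    (hP' : JetBound m ((P' - S : polyLT m n) : Euc n → ℝ) z K' r) :
    JetBound m ((P - P' : polyLT m n) : Euc n → ℝ) z (K + K') r := by
  rw [← sub_sub_sub_cancel_right P P' S, Submodule.coe_sub]
  exact hP.sub (contDiff_polyLT _ m) (contDiff_polyLT _ m) hP'

lemma JetBound.sub_add_polyLT (hF : ContDiff ℝ m F)
    (h : JetBound m (F - (P : Euc n → ℝ)) z K r)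
    (hP : JetBound m ((P - S : polyLT m n) : Euc n → ℝ) z K' r) :
    JetBound m (F - (S : Euc n → ℝ)) z (K + K') r := by
  rw [← sub_add_sub_cancel F (P : Euc n → ℝ), ← Submodule.coe_sub]
  exact h.add (F := F - (P : Euc n → ℝ)) (hF.sub (contDiff_polyLT P m)) (contDiff_polyLT _ m) hP

/-- `F` is nonnegative, interpolates `f` at the points of `E` in the ball of radius `R` around `y`,
and its jets in that ball agree with `P` up to `K` on the length scale `r`. -/
structure IsLocalInterpolant (m : ℕ) (f : Euc n → ℝ) (E : Set (Euc n)) (P : polyLT m n)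
    (y : Euc n) (R K r : ℝ) (F : Euc n → ℝ) : Prop where
  contDiff : ContDiff ℝ m F
  nonneg : ∀ z, 0 ≤ F z
  eqOn : ∀ z ∈ E, dist z y ≤ R → F z = f z
  jetBound : ∀ z, dist z y ≤ R → JetBound m (F - (P : Euc n → ℝ)) z K r

lemma IsLocalInterpolant.recenter (h : IsLocalInterpolant m f E P y R K r F)
    (hR : dist x y + R' ≤ R) (hE : ∀ z ∈ E', dist z x ≤ R' → z ∈ E) :
    IsLocalInterpolant m f E' P x R' K r F := by
  have hball : ∀ z, dist z x ≤ R' → dist z y ≤ R := fun z hz => by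
    linarith [dist_triangle z x y]
  exact ⟨h.contDiff, h.nonneg, fun z hz hzx => h.eqOn z (hE z hz hzx) (hball z hzx),
    fun z hzx => h.jetBound z (hball z hzx)⟩

lemma IsLocalInterpolant.shrink_scale (h : IsLocalInterpolant m f E P y R K r' F) (hr : 0 ≤ r)
    (hr' : 0 ≤ r') (hl : 1 ≤ l) (hr'r : r' ≤ l * r) :
    IsLocalInterpolant m f E P y R (l ^ m * K) r F :=
  ⟨h.contDiff, h.nonneg, h.eqOn, fun z hz => (h.jetBound z hz).shrink_scale hr hr' hl hr'r⟩

/-- The data needed to glue local interpolants near `x₀`: a jet `P₀` on the scale `δ`, jets `Q y`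
for `y ∈ E`, and a condition `T y r` under which all points of `E` in the ball of radius `b * r`
around `y` can be interpolated. Where `T` fails, the jets `Q` are consistent. -/
structure IsGluingData (m : ℕ) (E : Set (Euc n)) (f : Euc n → ℝ) (x₀ : Euc n) (P₀ : polyLT m n)
    (Q : Euc n → polyLT m n) (T : Euc n → ℝ → Prop) (M δ L b K : ℝ) : Prop where
  pos : 0 < M
  le : 8 * M ≤ δ
  le_mul : δ ≤ L * M
  pos_ratio : 0 < b
  finite : E.Finite
  anti : ∀ y r s, 0 < s → s ≤ r → T y r → T y s
  exists_of_holds : ∀ y ∈ E, ∀ r, dist y x₀ ≤ 8 * M → 0 < r → r ≤ 8 * M → T y r →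
    ∃ F, IsLocalInterpolant m f E (Q y) y (b * r) K r F
  exists_singleton : ∀ y ∈ E, ∀ r, dist y x₀ ≤ 8 * M → 0 < r → r ≤ 8 * M →
    ∃ F, IsLocalInterpolant m f {y} (Q y) y r K r F
  exists_empty : ∃ F, IsLocalInterpolant m f ∅ P₀ x₀ δ K δ F
  jetBound_sub : ∀ y ∈ E, ∀ y' ∈ E, ∀ r, dist y x₀ ≤ 8 * M → dist y' x₀ ≤ 8 * M → 0 < r →
    r ≤ 8 * M → dist y' y ≤ 4 * r → ¬ T y r →
    JetBound m ((Q y' - Q y : polyLT m n) : Euc n → ℝ) y K r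
  jetBound_sub_base : ∀ y ∈ E, dist y x₀ ≤ 8 * M →
    JetBound m ((Q y - P₀ : polyLT m n) : Euc n → ℝ) y K δ

/-- The jets which may serve as model at `x` for the stopping scale `r`. -/
def IsModelJet (E : Set (Euc n)) (Q : Euc n → polyLT m n) (P₀ : polyLT m n) (M : ℝ) (x : Euc n)
    (r : ℝ) (P : polyLT m n) : Prop :=
  (P = P₀ ∧ r = M) ∨ ∃ y ∈ E, dist y x ≤ 2 * r ∧ P = Q y

namespace IsGluingData

lemma const_nonneg (h : IsGluingData m E f x₀ P₀ Q T M δ L b K) : 0 ≤ K := by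
  obtain ⟨F, hF⟩ := h.exists_empty
  exact (hF.jetBound x₀ (by linarith [dist_self x₀, h.pos, h.le])).const_nonneg

lemma eight_le (h : IsGluingData m E f x₀ P₀ Q T M δ L b K) : 8 ≤ L :=
  le_of_mul_le_mul_right (h.le.trans h.le_mul) h.pos

lemma exists_bad (hρ : IsStoppingScale (IsEasyScale E T) M ρ) (hx : ρ x < M) :
    ∃ y ∈ E, dist y x ≤ 2 * ρ x ∧ ¬ T y (2 * ρ x) := by
  obtain ⟨-, hbad⟩ := not_or.1 (hρ.not_holds x hx)
  push Not at hbad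
  obtain ⟨y, ⟨hy, hyx⟩, hT⟩ := hbad
  exact ⟨y, hy, hyx, hT⟩

lemma exists_isLocalInterpolant_of_mem (h : IsGluingData m E f x₀ P₀ Q T M δ L b K)
    (hr : 0 < r) (hrM : r ≤ M) (hx : dist x x₀ ≤ M) (hE : IsEasyScale E T x r) {θ : ℝ}
    (hθ : θ ≤ 1 / 8) (hθb : θ ≤ b / 4) (hy : y ∈ E) (hyx : dist y x ≤ 2 * (θ * r)) :
    ∃ F, IsLocalInterpolant m f E (Q y) x (2 * (θ * r)) K r F := by
  have hθr : θ * r ≤ r / 8 := by linarith [mul_le_mul_of_nonneg_right hθ hr.le]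
  have hyx₀ : dist y x₀ ≤ 8 * M := by linarith [dist_triangle y x x₀]
  have hxy : dist x y ≤ 2 * (θ * r) := by rwa [dist_comm]
  rcases hE with hE | hE
  · obtain ⟨F, hF⟩ := h.exists_singleton y hy r hyx₀ hr (by linarith)
    exact ⟨F, hF.recenter (by linarith) fun z hz hzx =>
      hE ⟨hz, Metric.mem_closedBall.2 (by linarith)⟩ ⟨hy, Metric.mem_closedBall.2 (by linarith)⟩⟩
  · obtain ⟨F, hF⟩ := h.exists_of_holds y hy r hyx₀ hr (by linarith)
      (hE y ⟨hy, Metric.mem_closedBall.2 (by linarith)⟩)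
    exact ⟨F, hF.recenter (by linarith [mul_le_mul_of_nonneg_right hθb hr.le]) fun z hz _ => hz⟩

lemma exists_isModelJet (h : IsGluingData m E f x₀ P₀ Q T M δ L b K)
    (hρ : IsStoppingScale (IsEasyScale E T) M ρ) (hρx : 0 < ρ x) (hx : dist x x₀ ≤ M) {θ : ℝ}
    (hθ : θ ≤ 1 / 8) (hθb : θ ≤ b / 4) :
    ∃ P F, IsModelJet E Q P₀ M x (ρ x) P ∧
      IsLocalInterpolant m f E P x (2 * (θ * ρ x)) (L ^ m * K) (ρ x) F := by
  have hM := hρ.le x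
  have hL := h.eight_le
  have hδ := h.le
  have hθρ : θ * ρ x ≤ ρ x / 8 := by linarith [mul_le_mul_of_nonneg_right hθ hρx.le]
  by_cases hE : ∃ y ∈ E, dist y x ≤ 2 * (θ * ρ x)
  · obtain ⟨y, hy, hyx⟩ := hE
    obtain ⟨F, hF⟩ := h.exists_isLocalInterpolant_of_mem hρx hM hx (hρ.holds x) hθ hθb hy hyx
    exact ⟨Q y, F, Or.inr ⟨y, hy, by linarith, rfl⟩, hF.shrink_scale hρx.le hρx.le (by linarith)
      (le_mul_of_one_le_left hρx.le (by linarith))⟩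
  have hempty : ∀ (S : Set (Euc n)), ∀ z ∈ E, dist z x ≤ 2 * (θ * ρ x) → z ∈ S :=
    fun S z hz hzx => absurd ⟨z, hz, hzx⟩ hE
  rcases hM.eq_or_lt with hρM | hρM
  · obtain ⟨F, hF⟩ := h.exists_empty
    exact ⟨P₀, F, Or.inl ⟨rfl, hρM⟩, (hF.recenter (by linarith) (hempty ∅)).shrink_scale hρx.le
      (by linarith) (by linarith) (hρM ▸ h.le_mul)⟩
  · obtain ⟨y, hy, hyx, -⟩ := exists_bad hρ hρM
    obtain ⟨F, hF⟩ := h.exists_singleton y hy (4 * ρ x) (by linarith [dist_triangle y x x₀])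
      (by linarith) (by linarith)
    exact ⟨Q y, F, Or.inr ⟨y, hy, hyx, rfl⟩,
      (hF.recenter (by linarith [dist_comm x y]) (hempty {y})).shrink_scale hρx.le (by linarith)
        (by linarith) (mul_le_mul_of_nonneg_right (by linarith) hρx.le)⟩

lemma jetBound_isModelJet_sub_base (h : IsGluingData m E f x₀ P₀ Q T M δ L b K) (hrM : r ≤ M)
    (hx : dist x x₀ ≤ M) (hP : IsModelJet E Q P₀ M x r P) (hz : dist z x ≤ M) :
    JetBound m ((P - P₀ : polyLT m n) : Euc n → ℝ) z (2 ^ m * K) δ := by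
  have hδ : 0 < δ := by linarith [h.pos, h.le]
  rcases hP with ⟨rfl, -⟩ | ⟨y, hy, hyx, rfl⟩
  · rw [sub_self]
    exact JetBound.zero z (mul_nonneg (by positivity) h.const_nonneg) hδ.le
  · have hyx₀ : dist y x₀ ≤ 8 * M := by linarith [dist_triangle y x x₀, h.pos]
    exact (h.jetBound_sub_base y hy hyx₀).move hδ (by linarith [dist_triangle_right z y x, h.le])

lemma jetBound_sub_of_not_holds (h : IsGluingData m E f x₀ P₀ Q T M δ L b K) (hr : 0 < r)
    (hrM : r ≤ M) (hz : dist z x₀ ≤ M) (hy : y ∈ E) (hyz : dist y z ≤ r) (hT : ¬ T y r)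
    (hy' : y' ∈ E) (hy'z : dist y' z ≤ 3 * r) :
    JetBound m ((Q y' - Q y : polyLT m n) : Euc n → ℝ) z (2 ^ m * K) r :=
  (h.jetBound_sub y hy y' hy' r (by linarith [dist_triangle y z x₀])
    (by linarith [dist_triangle y' z x₀]) hr (by linarith)
    (by linarith [dist_triangle_right y' y z]) hT).move hr (by rwa [dist_comm])

lemma jetBound_isModelJet_sub (h : IsGluingData m E f x₀ P₀ Q T M δ L b K)
    (hρ : IsStoppingScale (IsEasyScale E T) M ρ) (hρz : 0 < ρ z) (hx : dist x x₀ ≤ M)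
    (hz : dist z x₀ ≤ M) (hzx : dist z x ≤ ρ x / 4) (hρxz : ρ x ≤ 2 * ρ z)
    (hP : IsModelJet E Q P₀ M x (ρ x) P) (hP' : IsModelJet E Q P₀ M z (ρ z) P') :
    JetBound m ((P - P' : polyLT m n) : Euc n → ℝ) z
      ((2 * L) ^ m * (2 ^ m * K + 2 ^ m * K)) (ρ z) := by
  have hL := h.eight_le
  have hM := h.pos
  have hρxM := hρ.le x
  rcases le_or_gt M (2 * ρ z) with hbig | hsmall
  · have hδ : δ ≤ 2 * L * ρ z :=
      h.le_mul.trans (by linarith [mul_le_mul_of_nonneg_left hbig (by linarith : 0 ≤ L)])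
    have hPP₀ := h.jetBound_isModelJet_sub_base hρxM hx hP (z := z) (by linarith)
    have hP'P₀ := h.jetBound_isModelJet_sub_base (hρ.le z) hz hP' (dist_self z ▸ hM.le)
    exact (hPP₀.sub_sub_polyLT hP'P₀).shrink_scale hρz.le (by linarith [h.le]) (by linarith) hδ
  · obtain ⟨y, hy, hyz, hT⟩ := exists_bad hρ (x := z) (by linarith)
    have hnear : ∀ y' ∈ E, dist y' z ≤ 3 * (2 * ρ z) →
        JetBound m ((Q y' - Q y : polyLT m n) : Euc n → ℝ) z (2 ^ m * K) (2 * ρ z) :=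
      fun y' => h.jetBound_sub_of_not_holds (by linarith) hsmall.le hz hy hyz hT
    obtain ⟨-, hρM⟩ | ⟨y₁, hy₁, hy₁x, rfl⟩ := hP
    · linarith
    obtain ⟨-, hρM⟩ | ⟨y₂, hy₂, hy₂z, rfl⟩ := hP'
    · linarith
    exact ((hnear y₁ hy₁ (by linarith [dist_triangle_right y₁ z x])).sub_sub_polyLT
      (hnear y₂ hy₂ (by linarith))).shrink_scale hρz.le (by linarith) (by linarith)
      (mul_le_mul_of_nonneg_right (by linarith) hρz.le)

end IsGluingData

/-- The ratio between the radius of a cutoff and the stopping scale when gluing. -/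
def cutoffRatio (b : ℝ) : ℝ := min (1 / 8) (b / 4)

/-- The constant for the jets of the glued interpolant relative to the jet of the nearest piece. -/
def consistencyConst (m : ℕ) (L b K : ℝ) : ℝ :=
  (cutoffRatio b)⁻¹ ^ m * (2 ^ m * (L ^ m * K) + (2 * L) ^ m * (2 ^ m * K + 2 ^ m * K))

namespace IsGluingData

lemma jetBound_sub_isModelJet (h : IsGluingData m E f x₀ P₀ Q T M δ L b K)
    (hρ : IsStoppingScale (IsEasyScale E T) M ρ) (hpos : ∀ x, 0 < ρ x) (hx : dist x x₀ ≤ M)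
    (hz : dist z x₀ ≤ M) (hzx : dist z x ≤ 2 * (cutoffRatio b * ρ x))
    (hP : IsModelJet E Q P₀ M x (ρ x) P) (hP' : IsModelJet E Q P₀ M z (ρ z) P')
    (hF : IsLocalInterpolant m f E P x (2 * (cutoffRatio b * ρ x)) (L ^ m * K) (ρ x) F) :
    ρ z ≤ 2 * ρ x ∧ ρ x ≤ 2 * ρ z ∧ JetBound m (F - (P' : Euc n → ℝ)) z
      (consistencyConst m L b K) (cutoffRatio b * ρ z) := by
  have hθ : cutoffRatio b ≤ 1 / 8 := min_le_left _ _
  have hθ₀ : 0 < cutoffRatio b := lt_min (by norm_num) (div_pos h.pos_ratio four_pos)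
  have hzx' : dist z x ≤ ρ x / 4 := by linarith [mul_le_mul_of_nonneg_right hθ (hpos x).le]
  have hρxz : ρ x ≤ 2 * ρ z := hρ.le_two_mul x z (by linarith [hpos x])
  have hρzx : ρ z ≤ 2 * ρ x := by
    rcases le_total (ρ z) (ρ x) with hle | hle
    · exact hle.trans (by linarith [hpos x])
    · exact hρ.le_two_mul z x (by linarith [dist_comm x z, hpos x, hle])
  refine ⟨hρzx, hρxz, JetBound.shrink_scale (JetBound.sub_add_polyLT hF.contDiff
    ((hF.jetBound z hzx).shrink_scale (hpos z).le (hpos x).le one_le_two hρxz)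
    (h.jetBound_isModelJet_sub hρ (hpos z) hx hz hzx' hρxz hP hP'))
    (mul_pos hθ₀ (hpos z)).le (hpos z).le ((one_le_inv₀ hθ₀).2 (by linarith)) ?_⟩
  rw [inv_mul_cancel_left₀ hθ₀.ne']

lemma exists_isLocalInterpolant (h : IsGluingData m E f x₀ P₀ Q T M δ L b K) :
    ∃ F, IsLocalInterpolant m f E P₀ x₀ M
      (consistencyConst m L b K * patchConst m n + 2 ^ m * K) δ F := by
  obtain ⟨ρ, hρ⟩ := exists_isStoppingScale_isEasyScale h.finite h.pos h.anti
  obtain ⟨ρ₀, hρ₀, hρρ₀⟩ := hρ.exists_pos_le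
  have hpos : ∀ x, 0 < ρ x := fun x => hρ₀.trans_le (hρρ₀ x)
  have hθ₀ : 0 < cutoffRatio b := lt_min (by norm_num) (div_pos h.pos_ratio four_pos)
  have hθ : cutoffRatio b ≤ 1 / 8 := min_le_left _ _
  choose! P F hP hF using fun x (hx : x ∈ Metric.closedBall x₀ M) =>
    h.exists_isModelJet hρ (hpos x) hx hθ (min_le_right _ _)
  have hfamily : IsInterpolantFamily m E f (Metric.closedBall x₀ M)
      (fun x => cutoffRatio b * ρ x) F :=
    ⟨fun x hx => (hF x hx).contDiff, fun x hx => (hF x hx).nonneg, fun x hx => (hF x hx).eqOn⟩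
  obtain ⟨H, hH, hH₀, hHE, hHjet⟩ := hfamily.exists_patch
    (isCompact_closedBall x₀ M).totallyBounded (mul_pos hθ₀ hρ₀) fun x _ =>
      ⟨mul_le_mul_of_nonneg_left (hρρ₀ x) hθ₀.le, mul_le_mul_of_nonneg_left (hρ.le x) hθ₀.le⟩
  refine ⟨H, hH, hH₀, hHE, fun z hz => ?_⟩
  have hθz := mul_pos hθ₀ (hpos z)
  have hjet := hHjet z _ (P z) (consistencyConst m L b K) hθz (contDiff_polyLT _ m)
    (fun x hx hzx => by
      obtain ⟨hρzx, hρxz, hjet⟩ := h.jetBound_sub_isModelJet hρ hpos hx hz hzx (hP x hx) (hP z hz)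
        (hF x hx)
      exact ⟨by linarith [mul_le_mul_of_nonneg_left hρzx hθ₀.le],
        by linarith [mul_le_mul_of_nonneg_left hρxz hθ₀.le], hjet⟩) (Or.inl hz)
  have hθδ : cutoffRatio b * ρ z ≤ δ := by
    linarith [mul_le_mul_of_nonneg_right hθ (hpos z).le, hρ.le z, h.le, hpos z]
  exact (hjet.mono_scale hθz.le hθδ).sub_add_polyLT hH
    (h.jetBound_isModelJet_sub_base (hρ.le z) hz (hP z hz) (dist_self z ▸ h.pos.le))

end IsGluingData

end Gluing

/-! ### Local interpolation by induction on the label -/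

section JetBasis

open scoped Pointwise

variable {m n k k' : ℕ} {E : Set (Euc n)} {f : Euc n → ℝ} {A : Finset (Fin n → ℕ)} {x y : Euc n}
  {r r' K C : ℝ} {P P' R : polyLT m n} {Q : (Fin n → ℕ) → polyLT m n}

lemma scaledCoeff_smul_scale (hr : 0 < r) (hr' : 0 < r') (y : Euc n) (d : ℕ) (β : Fin n → ℕ)
    (P : polyLT m n) : scaledCoeff m y r' β ((r' / r) ^ d • P) =
      (r' / r) ^ d / (r' / r) ^ (m - deg β) * scaledCoeff m y r β P := by
  rw [map_smul, smul_eq_mul, scaledCoeff_apply, scaledCoeff_apply, div_pow, div_pow]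
  field_simp

lemma WeakBasis.shrink_scale {G : ℝ → Set (polyLT m n)} (hG : IsConvexFamily G) (hr' : 0 < r')
    (hr'r : r' ≤ r)
    (h : WeakBasis (multiIndices m n) (key m) G (scaledCoeff m y r) A P C Q) :
    WeakBasis (multiIndices m n) (key m) G (scaledCoeff m y r') A P C
      fun α => (r' / r) ^ (m - deg α) • Q α := by
  have hr : 0 < r := hr'.trans_le hr'r
  have ht : r' / r ≤ 1 := (div_le_one hr).2 hr'r
  have ht₀ : 0 < r' / r := by positivity
  refine ⟨h.subset, h.one_le, h.mem, fun α hα => ?_, fun α hα β hβ => ?_,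
    fun α hα β hβ hk => ?_⟩
  · refine smul_set_mono_of_absConvex (hG.absConvex_symmPart C P) ?_ ?_
      (smul_mem_abs_mul_smul (hG.absConvex_symmPart C P) (h.mem_smul_symmPart α hα) _)
    · exact mul_nonneg (abs_nonneg _) (zero_le_one.trans h.one_le)
    · rw [abs_of_pos (by positivity)]
      exact mul_le_of_le_one_left (zero_le_one.trans h.one_le) (pow_le_one₀ ht₀.le ht)
  · rw [scaledCoeff_smul_scale hr hr', h.dual α hα β hβ]
    split_ifs with hβα
    · rw [hβα, div_self (by positivity), one_mul]
    · rw [mul_zero]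
  · have hle : (r' / r) ^ (m - deg α) ≤ (r' / r) ^ (m - deg β) :=
      pow_le_pow_of_le_one ht₀.le ht (Nat.sub_le_sub_left (deg_le_of_key_le hβ hk) m)
    rw [scaledCoeff_smul_scale hr hr', abs_mul, abs_of_pos (by positivity)]
    exact (mul_le_of_le_one_left (abs_nonneg _) ((div_le_one (by positivity)).2 hle)).trans
      (h.abs_coeff_le α hα β hβ hk)

lemma WeakBasis.mono_family {ι V : Type*} [AddCommGroup V] [Module ℝ V] [DecidableEq ι]
    {I A : Finset ι} {κ : ι → ℕ} {G G' : ℝ → Set V} {c : ι → V →ₗ[ℝ] ℝ} {P : V} {Q : ι → V}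
    (hGG' : ∀ C, G C ⊆ G' C) (h : WeakBasis I κ G c A P C Q) : WeakBasis I κ G' c A P C Q where
  subset := h.subset
  one_le := h.one_le
  mem := hGG' C h.mem
  mem_smul_symmPart α hα :=
    Set.smul_set_mono (symmPart_mono (hGG' C) P) (h.mem_smul_symmPart α hα)
  dual := h.dual
  abs_coeff_le := h.abs_coeff_le

lemma JetBound.abs_scaledCoeff_le_mul {t : ℝ} (hr : 0 < r) (ht : 0 < t) (ht₁ : t ≤ 1)
    (h : JetBound m (P : Euc n → ℝ) y K (t * r)) {β : Fin n → ℕ} (hβ : β ∈ multiIndices m n) :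
    |scaledCoeff m y r β P| ≤ t * K := by
  have hK := h.const_nonneg
  have hpow : t ^ (m - deg β) ≤ t :=
    pow_le_of_le_one ht.le ht₁ (Nat.sub_ne_zero_of_lt (mem_multiIndices.1 hβ))
  have htr := mul_pos ht hr
  refine (abs_scaledCoeff_le_iff hr).2 ?_
  calc |mD β P y| ≤ K * (t * r) ^ (m - deg β) :=
        (abs_scaledCoeff_le_iff htr).1 (h.abs_scaledCoeff_le htr hβ)
    _ = t ^ (m - deg β) * K * r ^ (m - deg β) := by rw [mul_pow]; ring
    _ ≤ t * K * r ^ (m - deg β) := by gcongr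

/-- A weak basis for the jets at `y` of nonnegative interpolants of `f` on sets of at most `k`
points, measured on the length scale `r`. -/
abbrev IsJetBasis (E : Set (Euc n)) (f : Euc n → ℝ) (k : ℕ) (y : Euc n) (r : ℝ)
    (A : Finset (Fin n → ℕ)) (P : polyLT m n) (C : ℝ) (Q : (Fin n → ℕ) → polyLT m n) : Prop :=
  WeakBasis (multiIndices m n) (key m) (interpolantJets m E f k y) (scaledCoeff m y r) A P C Q

/-- At a jet that differs from `P` by an element of `vanishingPolys m A`, there is a jet basis with
a label preceding `A`. -/
def HasHeavierJetBasis (E : Set (Euc n)) (f : Euc n → ℝ) (k : ℕ) (y : Euc n) (r : ℝ)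
    (A : Finset (Fin n → ℕ)) (P : polyLT m n) (C : ℝ) : Prop :=
  ∃ P', HasHeavierBasis (multiIndices m n) (key m) (interpolantJets m E f k y)
    (scaledCoeff m y r) A P' C ∧ P' - P ∈ vanishingPolys m A

lemma HasHeavierJetBasis.shrink_scale (h : HasHeavierJetBasis E f k y r A P C) (hr' : 0 < r')
    (hr'r : r' ≤ r) : HasHeavierJetBasis E f k y r' A P C := by
  obtain ⟨P', ⟨A', Q', hlt, hQ'⟩, hP'⟩ := h
  exact ⟨P', ⟨A', _, hlt, hQ'.shrink_scale (isConvexFamily_interpolantJets E f k y) hr' hr'r⟩, hP'⟩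

lemma one_le_transferBound {ι : Type*} (I : Finset ι) (hC : 1 ≤ C) : 1 ≤ transferBound I C := by
  rw [transferBound]
  linarith [(by positivity : 0 ≤ I.card * (C * C) + 2 * (I.card + 1) * (C * C))]

lemma IsJetBasis.jetBound_sub_or_hasHeavierBasis (hA : IsMonotonicLabel m A) (hr : 0 < r)
    (h : IsJetBasis E f k y r A P C Q) (hR : R ∈ interpolantJets m E f k y C)
    (hP' : P' - P ∈ vanishingPolys m A)
    (hP'R : JetBound m ((P' - R : polyLT m n) : Euc n → ℝ) y C r) :
    JetBound m ((P' - P : polyLT m n) : Euc n → ℝ) y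
        (dimConst m n * transferBound (multiIndices m n) C) r ∨
      ∃ P'', HasHeavierBasis (multiIndices m n) (key m) (interpolantJets m E f k y)
          (scaledCoeff m y r) A P'' (swapConst (2 * C) (2 * C)) ∧
        P'' - P ∈ vanishingPolys m A ∧
        JetBound m ((P'' - P : polyLT m n) : Euc n → ℝ) y (dimConst m n * 1) r := by
  have hbound : 0 ≤ transferBound (multiIndices m n) C :=
    zero_le_one.trans (one_le_transferBound _ h.one_le)
  refine (h.abs_coeff_sub_le_or_hasHeavierBasis key_injOn (isConvexFamily_interpolantJets E f k y)
    hR (fun α hα => (scaledCoeff_eq_zero_iff hr).2 (mem_vanishingPolys.1 hP' α hα y))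
    fun β hβ => hP'R.abs_scaledCoeff_le hr hβ).imp (.of_abs_scaledCoeff_le hr hbound) ?_
  rintro ⟨P'', hheavy, hvan, hsmall⟩
  exact ⟨P'', hheavy, mem_vanishingPolys_of_mD_eq_zero hA h.subset
    fun α hα => (scaledCoeff_eq_zero_iff hr).1 (hvan α hα),
    .of_abs_scaledCoeff_le hr zero_le_one hsmall⟩

lemma le_swapConst_two_mul (hC : 1 ≤ C) : C ≤ swapConst (2 * C) (2 * C) := by
  rw [swapConst]
  nlinarith

lemma HasHeavierJetBasis.exists_near (hA : IsMonotonicLabel m A) (hr : 0 < r)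
    (h : IsJetBasis E f k y r A P C Q) (hheavy : HasHeavierJetBasis E f k y r A P C) :
    ∃ P', HasHeavierBasis (multiIndices m n) (key m) (interpolantJets m E f k y)
        (scaledCoeff m y r) A P' (swapConst (2 * C) (2 * C)) ∧
      JetBound m ((P' - P : polyLT m n) : Euc n → ℝ) y
        (dimConst m n * transferBound (multiIndices m n) C) r := by
  obtain ⟨P', ⟨A', Q', hlt, hQ'⟩, hP'⟩ := hheavy
  have hzero : JetBound m ((P' - P' : polyLT m n) : Euc n → ℝ) y C r := by
    rw [sub_self]
    exact .zero y (zero_le_one.trans h.one_le) hr.le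
  rcases h.jetBound_sub_or_hasHeavierBasis hA hr hQ'.mem hP' hzero with hnear | hheavy'
  · exact ⟨P', ⟨A', Q', hlt, hQ'.mono (isConvexFamily_interpolantJets E f k y)
      (le_swapConst_two_mul h.one_le)⟩, hnear⟩
  · obtain ⟨P'', hP'', -, hnear⟩ := hheavy'
    refine ⟨P'', hP'', hnear.mono hr.le ?_⟩
    gcongr
    · exact zero_le_one.trans (one_le_dimConst m n)
    · exact one_le_transferBound _ h.one_le

/-- The relative distance over which a jet basis with constant `C` can be transported. -/
def transportRatio (m n : ℕ) (C : ℝ) : ℝ :=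
  (2 ^ m * dimConst m n * (8 * ((multiIndices m n).card + 1) ^ 3 * C ^ 2))⁻¹

lemma one_le_inv_transportRatio (hC : 1 ≤ C) :
    1 ≤ 2 ^ m * dimConst m n * (8 * (((multiIndices m n).card : ℝ) + 1) ^ 3 * C ^ 2) := by
  have h₁ : (1 : ℝ) ≤ 2 ^ m := one_le_pow₀ one_le_two
  have h₂ : 1 ≤ (((multiIndices m n).card : ℝ) + 1) ^ 3 := one_le_pow₀ (by simp)
  exact one_le_mul_of_one_le_of_one_le (one_le_mul_of_one_le_of_one_le h₁ (one_le_dimConst m n))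
    (one_le_mul_of_one_le_of_one_le (by linarith) (one_le_pow₀ hC))

lemma transportRatio_pos (hC : 1 ≤ C) : 0 < transportRatio m n C :=
  inv_pos.2 (zero_lt_one.trans_le (one_le_inv_transportRatio hC))

lemma transportRatio_le_one (hC : 1 ≤ C) : transportRatio m n C ≤ 1 :=
  inv_le_one_of_one_le₀ (one_le_inv_transportRatio hC)

lemma IsJetBasis.transport (hE : E.Finite) (hk : hellyNumber m n * k' ≤ k)
    (hA : IsMonotonicLabel m A) (hr : 0 < r) (h : IsJetBasis E f k x r A P C Q)
    (hs : CoeffBounded (multiIndices m n) (scaledCoeff m x r) A C Q)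
    (hy : dist y x ≤ transportRatio m n C * r) :
    ∃ P' Q', IsJetBasis E f k' y r A P' (transportConst (multiIndices m n) C) Q' ∧
      P' - P ∈ vanishingPolys m A ∧
      JetBound m ((P' - P : polyLT m n) : Euc n → ℝ) y (dimConst m n) r := by
  have hC := h.one_le
  have ht := transportRatio_pos (m := m) (n := n) hC
  have ht₁ := transportRatio_le_one (m := m) (n := n) hC
  have hd := one_le_dimConst m n
  obtain ⟨P', Q', hQ', -, hvan, hsmall⟩ := WeakBasis.transport (c' := scaledCoeff m y r)
    (ε := 2 ^ m * dimConst m n * transportRatio m n C)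
    (isConvexFamily_interpolantJets E f k' y) h hs (by positivity)
    (by rw [mul_right_comm]; exact mul_inv_le_one)
    (fun R hR => by
      obtain ⟨R', hR', hnear⟩ := exists_mem_interpolantJets_near hE hk (mul_pos ht hr) hy hR
      refine ⟨R', hR', fun β hβ => ?_⟩
      rw [← neg_sub R R', map_neg, abs_neg]
      refine (hnear.abs_scaledCoeff_le_mul hr ht ht₁ hβ).trans ?_
      linarith [le_mul_of_one_le_left
        (by positivity : 0 ≤ transportRatio m n C * (2 ^ m * C)) hd])
    (fun W B hB hW β hβ => abs_scaledCoeff_sub_le hr hB hW ht₁ hy hβ)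
  refine ⟨P', Q', hQ', mem_vanishingPolys_of_mD_eq_zero hA h.subset
    fun α hα => (scaledCoeff_eq_zero_iff hr).1 (hvan α hα), ?_⟩
  simpa using JetBound.of_abs_scaledCoeff_le hr zero_le_one hsmall

end JetBasis

section LocalInterpolation

variable {m n N k k' : ℕ} {E S : Set (Euc n)} {f F : Euc n → ℝ} {A : Finset (Fin n → ℕ)}
  {x₀ y z : Euc n} {r b K K' δ C : ℝ} {P P' P₀ : polyLT m n}
  {Q : (Fin n → ℕ) → polyLT m n}

/-- The local interpolation property for the labels preceded by fewer than `N` steps in the order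
on labels: if there is a bounded jet basis with such a label at `P₀`, then `f` has a nonnegative
interpolant with jet close to `P₀` on a ball of comparable size. -/
def LocalInterpolation (m n N : ℕ) : Prop :=
  ∀ C : ℝ, ∃ (k : ℕ) (c K : ℝ), 0 < c ∧ c ≤ 1 ∧
    ∀ (E : Set (Euc n)) (f : Euc n → ℝ) (A : Finset (Fin n → ℕ)) (x₀ : Euc n) (P₀ : polyLT m n)
      (δ : ℝ) (Q : (Fin n → ℕ) → polyLT m n), E.Finite → IsMonotonicLabel m A → 0 < δ → δ ≤ 1 →
      labelWeight (multiIndices m n) (key m) (multiIndices m n) <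
        labelWeight (multiIndices m n) (key m) A + N →
      IsJetBasis E f k x₀ δ A P₀ C Q →
      CoeffBounded (multiIndices m n) (scaledCoeff m x₀ δ) A C Q →
      ∃ F, IsLocalInterpolant m f E P₀ x₀ (c * δ) K δ F

lemma localInterpolation_zero (m n : ℕ) : LocalInterpolation m n 0 := fun _ =>
  ⟨0, 1, 0, one_pos, le_rfl, fun _ _ _ _ _ _ _ _ _ _ _ hlt h _ =>
    absurd (labelWeight_mono h.subset) hlt.not_ge⟩

lemma IsLocalInterpolant.mono (h : IsLocalInterpolant m f E P y R K r F) (hr : 0 ≤ r)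
    (hK : K ≤ K') : IsLocalInterpolant m f E P y R K' r F :=
  ⟨h.contDiff, h.nonneg, h.eqOn, fun z hz => (h.jetBound z hz).mono hr hK⟩

lemma exists_isLocalInterpolant_of_mem (hP : P ∈ interpolantJets m E f k y C) (hS : S ⊆ E)
    (hk : S.ncard ≤ k) (hr : 0 < r) : ∃ F, IsLocalInterpolant m f S P y r (2 ^ m * C) r F := by
  obtain ⟨F, hF, hJ⟩ := hP S hS hk
  exact ⟨F, hF.contDiff, hF.nonneg, fun z hz _ => hF.eqOn hz, fun z hz =>
    hJ.jetBound_sub hF.contDiff (fun w _ => hF.bound m le_rfl w) hr hz⟩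

lemma LocalInterpolation.exists_of_hasHeavierJetBasis (hN : LocalInterpolation m n N) (C : ℝ) :
    ∃ (k : ℕ) (c K : ℝ), 0 < c ∧ 1 ≤ k ∧
      ∀ (E : Set (Euc n)) (f : Euc n → ℝ) (A : Finset (Fin n → ℕ)) (y : Euc n) (P : polyLT m n)
        (r : ℝ) (Q : (Fin n → ℕ) → polyLT m n), E.Finite → IsMonotonicLabel m A → 0 < r → r ≤ 1 →
        labelWeight (multiIndices m n) (key m) (multiIndices m n) <
          labelWeight (multiIndices m n) (key m) A + (N + 1) →
        IsJetBasis E f k y r A P C Q → HasHeavierJetBasis E f k y r A P C →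
        ∃ F, IsLocalInterpolant m f E P y (c * r) K r F := by
  obtain ⟨C', hC'⟩ := exists_isMonotonicLabel_const m n (polyLT m n)
    (fun C => C + coordMulConst m n C) (labelWeight (multiIndices m n) (key m) (multiIndices m n))
    (swapConst (2 * C) (2 * C))
  obtain ⟨k, c, K, hc, hc₁, hF⟩ := hN C'
  refine ⟨max k 1, c, K + 2 ^ m * (dimConst m n * transferBound (multiIndices m n) C), hc,
    le_max_right _ _, fun E f A y P r Q hE hA hr hr₁ hweight h hheavy => ?_⟩
  obtain ⟨P', ⟨A', Q', hlt, hQ'⟩, hnear⟩ := hheavy.exists_near hA hr h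
  obtain ⟨A'', Q'', hmono, hle, hQ'', hs⟩ := hC' _ _ A' P' Q'
    (isConvexFamily_interpolantJets E f (max k 1) y) (hasCoordMul_interpolantJets hr hr₁ P') hQ'
    (Nat.le_add_left _ _)
  obtain ⟨F, hF⟩ := hF E f A'' y P' r Q'' hE hmono hr hr₁ (by omega)
    (hQ''.mono_family (interpolantJets_anti (le_max_left k 1) y)) hs
  exact ⟨F, hF.contDiff, hF.nonneg, hF.eqOn, fun z hz => (hF.jetBound z hz).sub_add_polyLT
    hF.contDiff (hnear.move hr (hz.trans (mul_le_of_le_one_left hr.le hc₁)))⟩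

/-- The constant, on the scale `r` at `y`, of a jet at `y` shared by interpolants with constant `C`
and close to a given jet at distance at most `4 * r`. -/
def nearbyJetConst (m : ℕ) (C : ℝ) : ℝ := 4 ^ m * (2 ^ m * C)

/-- The constant for which the failure of `HasHeavierJetBasis` makes nearby jets consistent. -/
def heavierJetConst (m : ℕ) (C : ℝ) : ℝ :=
  swapConst (2 * nearbyJetConst m C) (2 * nearbyJetConst m C)

lemma le_nearbyJetConst (hC : 1 ≤ C) : C ≤ nearbyJetConst m C := by
  have h4 : (1 : ℝ) ≤ 4 ^ m := one_le_pow₀ (by norm_num)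
  have h2 : (1 : ℝ) ≤ 2 ^ m := one_le_pow₀ one_le_two
  exact (le_mul_of_one_le_left (by linarith) h2).trans (le_mul_of_one_le_left (by positivity) h4)

lemma le_heavierJetConst (hC : 1 ≤ C) : C ≤ heavierJetConst m C :=
  (le_nearbyJetConst hC).trans (le_swapConst_two_mul (hC.trans (le_nearbyJetConst hC)))

lemma IsJetBasis.jetBound_sub_of_not_hasHeavierJetBasis (hE : E.Finite)
    (hA : IsMonotonicLabel m A) (hr : 0 < r) (h : IsJetBasis E f k y r A P C Q)
    (hP' : P' ∈ interpolantJets m E f (hellyNumber m n * k) z C) (hzy : dist z y ≤ 4 * r)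
    (hvan : P' - P ∈ vanishingPolys m A)
    (hT : ¬ HasHeavierJetBasis E f k y r A P (heavierJetConst m C)) :
    JetBound m ((P' - P : polyLT m n) : Euc n → ℝ) y
      (dimConst m n * transferBound (multiIndices m n) (nearbyJetConst m C)) r := by
  have hC := le_nearbyJetConst (m := m) h.one_le
  obtain ⟨R, hR, hP'R⟩ := exists_mem_interpolantJets_near (r := 4 * r) hE le_rfl (by linarith)
    (by rwa [dist_comm]) hP'
  rcases IsJetBasis.jetBound_sub_or_hasHeavierBasis hA hr
    (h.mono (isConvexFamily_interpolantJets E f k y) hC) (interpolantJets_mono hC hR) hvan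
    (hP'R.shrink_scale hr.le (by linarith) (by norm_num) le_rfl) with hnear | ⟨P'', hP'', hvan', -⟩
  · exact hnear
  · exact absurd ⟨P'', hP'', hvan'⟩ hT

lemma hellyNumber_pos (m n : ℕ) : 0 < hellyNumber m n := Nat.succ_pos _

lemma IsJetBasis.exists_transported (hE : E.Finite) (hA : IsMonotonicLabel m A) (hδ : 0 < δ)
    (h : IsJetBasis E f (hellyNumber m n * (hellyNumber m n * k)) x₀ δ A P₀ C Q)
    (hs : CoeffBounded (multiIndices m n) (scaledCoeff m x₀ δ) A C Q) :
    ∃ P' : Euc n → polyLT m n, ∀ y, dist y x₀ ≤ transportRatio m n C * δ →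
      P' y ∈ interpolantJets m E f (hellyNumber m n * k) y (transportConst (multiIndices m n) C) ∧
      (∀ r, 0 < r → r ≤ δ →
        ∃ Q', IsJetBasis E f k y r A (P' y) (transportConst (multiIndices m n) C) Q') ∧
      P' y - P₀ ∈ vanishingPolys m A ∧
      JetBound m ((P' y - P₀ : polyLT m n) : Euc n → ℝ) y (dimConst m n) δ := by
  choose! P' Q' hbasis hvan hnear using fun y => IsJetBasis.transport (y := y) hE le_rfl hA hδ h hs
  refine ⟨P', fun y hy => ⟨(hbasis y hy).mem, fun r hr hrδ => ?_, hvan y hy, hnear y hy⟩⟩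
  exact ⟨_, ((hbasis y hy).mono_family (interpolantJets_anti
    (Nat.le_mul_of_pos_left k (hellyNumber_pos m n)) y)).shrink_scale
      (isConvexFamily_interpolantJets E f k y) hr hrδ⟩

/-- The constant of the gluing data made of transported jets, where `K` is the constant of the local
interpolants available near the points with a heavier jet basis. -/
def gluingConst (m n : ℕ) (C K : ℝ) : ℝ :=
  max K (max (2 ^ m * transportConst (multiIndices m n) C) (max (2 ^ m * C) (max (dimConst m n)
    (dimConst m n * transferBound (multiIndices m n)
      (nearbyJetConst m (transportConst (multiIndices m n) C))))))

lemma IsJetBasis.exists_isGluingData (hE : E.Finite) (hA : IsMonotonicLabel m A) (hδ : 0 < δ)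
    (hk : 1 ≤ k) (hb : 0 < b)
    (h : IsJetBasis E f (hellyNumber m n * (hellyNumber m n * k)) x₀ δ A P₀ C Q)
    (hs : CoeffBounded (multiIndices m n) (scaledCoeff m x₀ δ) A C Q)
    (hlocal : ∀ (y : Euc n) (P : polyLT m n) (r : ℝ) (Q' : (Fin n → ℕ) → polyLT m n),
      0 < r → r ≤ δ →
      IsJetBasis E f k y r A P
        (heavierJetConst m (transportConst (multiIndices m n) C)) Q' →
      HasHeavierJetBasis E f k y r A P
        (heavierJetConst m (transportConst (multiIndices m n) C)) →
      ∃ F, IsLocalInterpolant m f E P y (b * r) K r F) :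
    ∃ P' T, IsGluingData m E f x₀ P₀ P' T (transportRatio m n C / 8 * δ) δ
      (8 / transportRatio m n C) b (gluingConst m n C K) := by
  set M : ℝ := transportRatio m n C / 8 * δ with hM
  have ht := transportRatio_pos (m := m) (n := n) h.one_le
  have h8 : 8 * M = transportRatio m n C * δ := by rw [hM]; ring
  have hMδ : 8 * M ≤ δ := h8.trans_le (mul_le_of_le_one_left hδ.le (transportRatio_le_one h.one_le))
  obtain ⟨P', hP'⟩ := h.exists_transported hE hA hδ hs
  rw [← h8] at hP'
  refine ⟨P', fun y r => HasHeavierJetBasis E f k y r A (P' y)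
    (heavierJetConst m (transportConst (multiIndices m n) C)), ?_⟩
  exact
  { pos := by positivity
    le := hMδ
    le_mul := le_of_eq (by rw [hM]; field_simp)
    pos_ratio := hb
    finite := hE
    anti := fun y r s hs hsr hT => hT.shrink_scale hs hsr
    exists_of_holds := fun y _ r hy hr hrM hT => by
      obtain ⟨Q', hQ'⟩ := (hP' y hy).2.1 r hr (hrM.trans hMδ)
      obtain ⟨F, hF⟩ := hlocal y (P' y) r Q' hr (hrM.trans hMδ)
        (hQ'.mono (isConvexFamily_interpolantJets E f k y) (le_heavierJetConst hQ'.one_le)) hT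
      exact ⟨F, hF.mono hr.le (le_max_left _ _)⟩
    exists_singleton := fun y hyE r hy hr _ => by
      obtain ⟨F, hF⟩ := exists_isLocalInterpolant_of_mem (hP' y hy).1
        (Set.singleton_subset_iff.2 hyE) ((Set.ncard_singleton y).trans_le (hk.trans
          (Nat.le_mul_of_pos_left k (hellyNumber_pos m n)))) hr
      exact ⟨F, hF.mono hr.le (by simp only [gluingConst, le_max_iff, le_refl, true_or, or_true])⟩
    exists_empty := by
      obtain ⟨F, hF⟩ := exists_isLocalInterpolant_of_mem h.mem (Set.empty_subset E)
        (Set.ncard_empty _ |>.trans_le (Nat.zero_le _)) hδ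
      exact ⟨F, hF.mono hδ.le (by simp only [gluingConst, le_max_iff, le_refl, true_or, or_true])⟩
    jetBound_sub := fun y _ y' _ r hy hy' hr hrM hyy' hT => by
      obtain ⟨Q', hQ'⟩ := (hP' y hy).2.1 r hr (hrM.trans hMδ)
      have hvan := Submodule.sub_mem _ (hP' y' hy').2.2.1 (hP' y hy).2.2.1
      rw [sub_sub_sub_cancel_right] at hvan
      exact (IsJetBasis.jetBound_sub_of_not_hasHeavierJetBasis hE hA hr hQ' (hP' y' hy').1 hyy'
        hvan hT).mono hr.le (by simp only [gluingConst, le_max_iff, le_refl, or_true])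
    jetBound_sub_base := fun y _ hy => (hP' y hy).2.2.2.mono hδ.le
      (by simp only [gluingConst, le_max_iff, le_refl, true_or, or_true]) }

lemma LocalInterpolation.succ (hN : LocalInterpolation m n N) : LocalInterpolation m n (N + 1) := by
  intro C
  by_cases hC : 1 ≤ C
  swap
  · exact ⟨0, 1, 0, one_pos, le_rfl, fun E f A x₀ P₀ δ Q _ _ _ _ _ h _ => absurd h.one_le hC⟩
  obtain ⟨k, b, K, hb, hk, hlocal⟩ := hN.exists_of_hasHeavierJetBasis
    (heavierJetConst m (transportConst (multiIndices m n) C))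
  have ht := transportRatio_pos (m := m) (n := n) hC
  have ht₁ := transportRatio_le_one (m := m) (n := n) hC
  refine ⟨hellyNumber m n * (hellyNumber m n * k), transportRatio m n C / 8,
    consistencyConst m (8 / transportRatio m n C) b (gluingConst m n C K) * patchConst m n +
      2 ^ m * gluingConst m n C K, by positivity, by linarith,
    fun E f A x₀ P₀ δ Q hE hA hδ hδ₁ hweight h hs => ?_⟩
  obtain ⟨P', T, hglue⟩ := IsJetBasis.exists_isGluingData hE hA hδ hk hb h hs
    fun y P r Q' hr hrδ => hlocal E f A y P r Q' hE hA hr (hrδ.trans hδ₁) hweight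
  exact hglue.exists_isLocalInterpolant

lemma localInterpolation (m n N : ℕ) : LocalInterpolation m n N :=
  Nat.rec (localInterpolation_zero m n) (fun _ => LocalInterpolation.succ) N

end LocalInterpolation

/-! ### From local to global interpolants -/

section Finiteness

variable {m n k : ℕ} {E S : Set (Euc n)} {f F : Euc n → ℝ} {x y : Euc n} {r C : ℝ}
  {P : polyLT m n}

lemma IsNonnegInterpolant.jetBound (hF : IsNonnegInterpolant m f S C F) (y : Euc n) :
    JetBound m F y C 1 := fun j hj => by
  rw [one_pow, mul_one]
  exact hF.bound j hj y

lemma jetBound_of_mem_interpolantJets (hP : P ∈ interpolantJets m E f k x C) (hy : dist y x ≤ 1) :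
    JetBound m (P : Euc n → ℝ) y (C + 2 ^ m * C) 1 := by
  obtain ⟨F, hF, hJ⟩ := hP ∅ (Set.empty_subset E) ((Set.ncard_empty _).trans_le (Nat.zero_le _))
  rw [← sub_sub_cancel F (P : Euc n → ℝ)]
  exact JetBound.sub hF.contDiff (hF.contDiff.sub (contDiff_polyLT P m)) (hF.jetBound y)
    (hJ.jetBound_sub hF.contDiff (fun w _ => hF.bound m le_rfl w) one_pos hy)

lemma exists_mem_interpolantJets (hE : E.Finite) (x : Euc n)
    (h : ∀ S ⊆ E, S.ncard ≤ hellyNumber m n * k → ∃ F, IsNonnegInterpolant m f S C F) :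
    ∃ P, P ∈ interpolantJets m E f k x C := by
  obtain ⟨P, hP⟩ := exists_common_jet (𝓕 := {F | IsNonnegInterpolant m f ∅ C F}) hE f
    (fun F hF => hF.contDiff) (convex_setOf_isNonnegInterpolant f ∅ C) k x fun S hSE hS => by
      obtain ⟨F, hF⟩ := h S hSE hS
      exact ⟨F, hF.mono (Set.empty_subset S) le_rfl, hF.eqOn⟩
  refine ⟨P, fun S hSE hS => ?_⟩
  obtain ⟨F, hF, hFf, hJ⟩ := hP S hSE hS
  exact ⟨F, ⟨hF.contDiff, hF.bound, hF.nonneg, hFf⟩, hJ⟩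

lemma isJetBasis_empty (hC : 1 ≤ C) (hP : P ∈ interpolantJets m E f k x C)
    (Q : (Fin n → ℕ) → polyLT m n) : IsJetBasis E f k x r ∅ P C Q :=
  ⟨Finset.empty_subset _, hC, hP, by simp, by simp, by simp⟩

lemma exists_isLocalInterpolant_of_subsets (m n : ℕ) (hC : 1 ≤ C) :
    ∃ (k : ℕ) (c K : ℝ), 0 < c ∧ c ≤ 1 ∧ ∀ (E : Set (Euc n)) (f : Euc n → ℝ), E.Finite →
      (∀ S ⊆ E, S.ncard ≤ k → ∃ F, IsNonnegInterpolant m f S C F) →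
      ∀ x, ∃ F, IsLocalInterpolant m f E (0 : polyLT m n) x c K 1 F := by
  obtain ⟨k, c, K, hc, hc₁, hlocal⟩ := localInterpolation m n
    (labelWeight (multiIndices m n) (key m) (multiIndices m n) + 1) C
  refine ⟨hellyNumber m n * k, c, K + (C + 2 ^ m * C), hc, hc₁, fun E f hE hS x => ?_⟩
  obtain ⟨P, hP⟩ := exists_mem_interpolantJets hE x hS
  obtain ⟨F, hF⟩ := hlocal E f ∅ x P 1 0 hE (by simp [IsMonotonicLabel]) one_pos le_rfl
    (by omega) (isJetBasis_empty hC hP 0) (by simp [CoeffBounded])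
  rw [mul_one] at hF
  refine ⟨F, hF.contDiff, hF.nonneg, hF.eqOn, fun z hz => ?_⟩
  refine (hF.jetBound z hz).sub_add_polyLT hF.contDiff ?_
  rw [sub_zero]
  exact jetBound_of_mem_interpolantJets hP (hz.trans hc₁)

theorem exists_isNonnegInterpolant_of_subsets (m n : ℕ) (hC : 1 ≤ C) :
    ∃ (k : ℕ) (C' : ℝ), ∀ (E : Set (Euc n)) (f : Euc n → ℝ), E.Finite →
      (∀ S ⊆ E, S.ncard ≤ k → ∃ F, IsNonnegInterpolant m f S C F) →
      ∃ F, IsNonnegInterpolant m f E C' F := by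
  obtain ⟨k, c, K, hc, hc₁, hlocal⟩ := exists_isLocalInterpolant_of_subsets m n hC
  refine ⟨k, (2 / c) ^ m * K * patchConst m n, fun E f hE hS => ?_⟩
  choose F hF using hlocal E f hE hS
  have hl : 1 ≤ 2 / c * (c / 2) := by rw [div_mul_div_cancel₀ hc.ne', div_self two_ne_zero]
  have hF' := fun x => (hF x).shrink_scale (l := 2 / c) (half_pos hc).le zero_le_one
    ((one_le_div hc).2 (hc₁.trans one_le_two)) hl
  have hfamily : IsInterpolantFamily m E f E (fun _ => c / 2) F :=
    ⟨fun x _ => (hF x).contDiff, fun x _ => (hF x).nonneg,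
      fun x _ z hz hzx => (hF x).eqOn z hz (hzx.trans_eq (by ring))⟩
  obtain ⟨G, hG, hG₀, hGf, hjet⟩ := hfamily.exists_patch hE.totallyBounded (half_pos hc)
    fun _ _ => ⟨le_rfl, le_rfl⟩
  have hGjet : ∀ z, JetBound m G z ((2 / c) ^ m * K * patchConst m n) 1 := fun z => by
    have hK := ((hF' z).jetBound z (by rw [dist_self]; exact hc.le)).const_nonneg
    have h := hjet z (c / 2) 0 _ (half_pos hc) contDiff_const
      (fun x _ hzx => ⟨by linarith, by linarith, by
        simpa using (hF' x).jetBound z (by linarith)⟩)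
      (.inr (by rw [sub_zero]; exact JetBound.zero z hK (half_pos hc).le))
    rw [sub_zero] at h
    exact h.mono_scale (half_pos hc).le (by linarith)
  exact ⟨G, hG, fun j hj z => by simpa using hGjet z j hj, hG₀, fun z hz => hGf z hz hz⟩

lemma CmNormLe.isNonnegInterpolant (h : CmNormLe m n F C) (hC : 0 ≤ C) (hF : ∀ y, 0 ≤ F y)
    (hFf : Set.EqOn F f S) : IsNonnegInterpolant m f S (dimConst m n * C) F :=
  ⟨h.1, fun _ hj y => norm_iteratedFDeriv_le_dimConst hj (contDiff_of_natCast_le h.1 hj) hC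
    fun _ hα => h.2 _ (hα.trans_le hj) y, hF, hFf⟩

lemma IsNonnegInterpolant.cmNormLe (h : IsNonnegInterpolant m f S C F) : CmNormLe m n F C :=
  ⟨h.contDiff, fun _ hα x =>
    (abs_mD_le (contDiff_of_natCast_le h.contDiff hα) x).trans (h.bound _ hα x)⟩

end Finiteness

/-- **Finiteness principle for nonnegative `C^m` interpolation** (Theorem, part (A)). -/
theorem nonneg_Cm_interpolation_finiteness (m n : ℕ) (hm : 0 < m) (hn : 0 < n) :
    ∃ (kSharp : ℕ) (CSharp : ℝ), 0 < CSharp ∧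
      ∀ (E : Set (Euc n)), E.Finite → ∀ f : Euc n → ℝ, (∀ x ∈ E, 0 ≤ f x) →
        (∀ S : Set (Euc n), S ⊆ E → S.ncard ≤ kSharp →
          ∃ FS : Euc n → ℝ, CmNormLe m n FS 1 ∧ (∀ y, 0 ≤ FS y) ∧ ∀ x ∈ S, FS x = f x) →
        ∃ F : Euc n → ℝ, CmNormLe m n F CSharp ∧ (∀ y, 0 ≤ F y) ∧ ∀ x ∈ E, F x = f x := by
  obtain ⟨k, C, hC⟩ := exists_isNonnegInterpolant_of_subsets m n
    ((one_le_dimConst m n).trans_eq (mul_one _).symm)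
  refine ⟨k, max C 1, lt_max_of_lt_right one_pos, fun E hE f _ hS => ?_⟩
  have hwitness : ∀ S ⊆ E, S.ncard ≤ k → ∃ F, IsNonnegInterpolant m f S (dimConst m n * 1) F := by
    intro S hSE hSk
    obtain ⟨F, hF, hF₀, hFf⟩ := hS S hSE hSk
    exact ⟨F, hF.isNonnegInterpolant zero_le_one hF₀ hFf⟩
  obtain ⟨F, hF⟩ := hC E f hE hwitness
  exact ⟨F, (hF.mono subset_rfl (le_max_left C 1)).cmNormLe, hF.nonneg, hF.eqOn⟩

end
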